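/- Suppose there exist numbers C₁, C₂ > 0 and, for every ball U ⊂ ℝ^d, a positive function α ↦ N(α,U), such that for all α > 0 and all μ ∈ ℳ_α(V): L_μV ≤ C₁ − C₂V pointwise and sup_{x∈U}|b(x,μ)| ≤ N(α,U). Suppose also that for all α > 0 and all μ_n, μ ∈ ℳ_α(V), convergence ‖μ_n − μ‖_W → 0 implies that b(·,μ_n) converges to b(·,μ) uniformly on every ball. Then there exists a stationary solution μ ∈ 𝒫_V(ℝ^d) of the nonlinear stationary equation L_μ^*μ = 0 satisfying ∫V dμ ≤ C₁/C₂. -/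

import Mathlib

open MeasureTheory Real Set Filter Metric
open scoped Topology RealInnerProductSpace NNReal ENNReal

noncomputable section

abbrev Ed (d : ℕ) : Type := EuclideanSpace ℝ (Fin d)

variable {d : ℕ}

/-- Second-order partial derivative `∂_i ∂_j φ (x)`. -/
def hess2 (φ : Ed d → ℝ) (x : Ed d) (i j : Fin d) : ℝ :=
  iteratedFDeriv ℝ 2 φ x ![EuclideanSpace.single i 1, EuclideanSpace.single j 1]

/-- The Kolmogorov operator `L φ = trace (A D²φ) + ⟨B, ∇φ⟩`. -/
def Lop (A : Ed d → Matrix (Fin d) (Fin d) ℝ) (B : Ed d → Ed d)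
    (φ : Ed d → ℝ) (x : Ed d) : ℝ :=
  (∑ i, ∑ j, A x i j * hess2 φ x i j) + ⟪B x, gradient φ x⟫

/-- Membership in `𝒫_V(ℝ^d)`. -/
def memPV (V : Ed d → ℝ) (μ : Measure (Ed d)) : Prop :=
  IsProbabilityMeasure μ ∧ Integrable V μ

/-- `C_0^∞` test functions. -/
def IsTestFun (φ : Ed d → ℝ) : Prop :=
  ContDiff ℝ (⊤ : ℕ∞) φ ∧ HasCompactSupport φ

/-- Weighted total-variation distance `‖W·(μ - ν)‖_{TV}` expressed by duality. -/
def wDist (W : Ed d → ℝ) (μ ν : Measure (Ed d)) : ℝ :=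
  ⨆ f : {f : Ed d → ℝ // Measurable f ∧ ∀ x, |f x| ≤ W x},
    (∫ x, f.1 x ∂μ - ∫ x, f.1 x ∂ν)

/-- Stationary solution of `L_μ^*μ = 0`. -/
def IsStationarySol (A : Ed d → Matrix (Fin d) (Fin d) ℝ) (B : Ed d → Ed d)
    (μ : Measure (Ed d)) : Prop :=
  ∀ φ : Ed d → ℝ, IsTestFun φ → ∫ x, Lop A B φ x ∂μ = 0

/-!
Suppose that `|∫ L₀ φ dμ| ≤ N R * ∫ ‖∇φ‖ dμ` for all test functions `φ` supported in the ball of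
radius `R`, where `L₀` is `L` without drift. Regularize `μ` by a kernel adapted to `A`, the
parametrix. The derivative of the kernel in the scale is, up to an error controlled by the
Lipschitz constant of `A`, a multiple of `L₀ φ` for a test function `φ`, so passing from the scale
`2⁻ⁿ` to `2⁻ⁿ⁻¹` changes the regularization by `O(2⁻ⁿ)` in `L¹` on every ball. Hence `μ` is
absolutely continuous, and its regularizations approximate it at a rate depending only on `N`.
For such measures with bounded `V`-moment, weak convergence therefore implies convergence in the
distance weighted by `W = o(V)`, and they form a compact set.

For a continuous drift obeying the Lyapunov bound, a stationary measure exists by a separation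
argument: by the maximum principle, no function `θ (C₂ V - C₁) + L φ`, where `θ ≥ 0` and `φ` is a
test function, is bounded below by a positive constant. For the nonlinear equation,
cover the compact set by finitely many balls with centers `ν j` and let `μ j` be stationary for a
continuous modification of a mollification of `b(·, ν j)` which obeys the Lyapunov bound up to
`ε`. Brouwer's theorem on the simplex of mixtures `∑ p j • μ j` yields weights charging only those
`j` for which `ν j` is close to the mixture itself, so the mixture is an approximate solution. Its
limit points as `ε → 0` are solutions, since the drift depends continuously on the measure.
-/

section Brouwer

/-- Lagrange interpolation at the nodes `t i`. -/
lemma exists_forall_eval_one_eq_sum (n : ℕ) {δ : ℝ} (hδ : 0 < δ) :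
    ∃ t w : Fin (n + 1) → ℝ, (∀ i, t i ∈ Set.Icc 0 δ) ∧
      ∀ q : Polynomial ℝ, q.natDegree ≤ n → q.eval 1 = ∑ i, w i * q.eval (t i) := by
  let t : Fin (n + 1) → ℝ := fun i => δ * i / (n + 1)
  have ht : Set.InjOn t (Finset.univ : Finset (Fin (n + 1))) := fun i _ j _ hij => by
    have : (n + 1 : ℝ) ≠ 0 := by positivity
    simp only [t] at hij
    field_simp at hij
    exact Fin.ext (by exact_mod_cast hij)
  refine ⟨t, fun i => (Lagrange.basis Finset.univ t i).eval 1, fun i => ⟨by positivity, ?_⟩,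
    fun q hq => ?_⟩
  · have : (i : ℝ) ≤ n + 1 := by exact_mod_cast i.2.le
    exact div_le_of_le_mul₀ (by positivity) hδ.le (mul_le_mul_of_nonneg_left this hδ.le)
  · have hdeg : q.degree < (Finset.univ : Finset (Fin (n + 1))).card := by
      rw [Finset.card_univ, Fintype.card_fin]
      exact Polynomial.degree_le_natDegree.trans_lt (by exact_mod_cast Nat.lt_succ_of_le hq)
    conv_lhs => rw [Lagrange.eq_interpolate ht hdeg, Lagrange.interpolate_apply,
      Polynomial.eval_finsetSum]
    simp only [Polynomial.eval_mul, Polynomial.eval_C, mul_comm]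

lemma integral_eval_one_eq_of_forall_Icc {X : Type*} [MeasurableSpace X] {μ : Measure X}
    {q : X → Polynomial ℝ} {n : ℕ} (hq : ∀ x, (q x).natDegree ≤ n)
    (hint : ∀ s, Integrable (fun x => (q x).eval s) μ) {δ c : ℝ} (hδ : 0 < δ)
    (h : ∀ s ∈ Set.Icc 0 δ, ∫ x, (q x).eval s ∂μ = c) : ∫ x, (q x).eval 1 ∂μ = c := by
  obtain ⟨t, w, ht, hw⟩ := exists_forall_eval_one_eq_sum n hδ
  have hw1 : ∑ i, w i = 1 := by simpa using (hw 1 (by simp)).symm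
  calc ∫ x, (q x).eval 1 ∂μ = ∫ x, ∑ i, w i * (q x).eval (t i) ∂μ := by
        simp only [fun x => hw (q x) (hq x)]
    _ = ∑ i, w i * ∫ x, (q x).eval (t i) ∂μ := by
        rw [integral_finsetSum _ fun i _ => (hint (t i)).const_mul (w i)]
        simp only [integral_const_mul]
    _ = c := by simp only [fun i => h (t i) (ht i), ← Finset.sum_mul, hw1, one_mul]

section Normed

variable {E : Type*} [NormedAddCommGroup E] [NormedSpace ℝ E]

lemma image_ball_eq_ball_of_isOpen [ProperSpace E] {f : E → E}
    (hf : ContinuousOn f (closedBall 0 1)) (hmaps : MapsTo f (ball 0 1) (ball 0 1))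
    (hsphere : ∀ x, ‖x‖ = 1 → f x = x) (hopen : IsOpen (f '' ball 0 1)) :
    f '' ball 0 1 = ball 0 1 := by
  refine (image_subset_iff.2 hmaps).antisymm ?_
  have h0 : (0 : E) ∈ ball (0 : E) 1 := mem_ball_self one_pos
  have hclosed : IsClosed (f '' closedBall 0 1) :=
    ((isCompact_closedBall (0 : E) 1).image_of_continuousOn hf).isClosed
  refine (convex_ball (0 : E) 1).isPreconnected.subset_of_closure_inter_subset hopen
    ⟨f 0, hmaps h0, mem_image_of_mem f h0⟩ ?_
  rintro y ⟨hy, hy1⟩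
  obtain ⟨x, hx, rfl⟩ := closure_minimal (image_mono ball_subset_closedBall) hclosed hy
  rw [mem_closedBall_zero_iff] at hx
  refine mem_image_of_mem f (mem_ball_zero_iff.2 (hx.lt_of_ne fun h => ?_))
  rw [hsphere x h, mem_ball_zero_iff] at hy1
  exact hy1.ne h

lemma injOn_add_smul_of_lipschitz {s : Set E} {g : E → E} {C t : ℝ} (ht : 0 ≤ t)
    (htC : t * C < 1) (hg : ∀ x ∈ s, ∀ y ∈ s, ‖g y - g x‖ ≤ C * ‖y - x‖) :
    Set.InjOn (fun x => x + t • g x) s := by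
  intro x hx y hy hxy
  have heq : x - y = t • (g y - g x) := by
    rw [smul_sub, sub_eq_sub_iff_add_eq_add, show x + t • g x = y + t • g y from hxy, add_comm]
  have hle : ‖x - y‖ ≤ t * C * ‖x - y‖ := by
    conv_lhs => rw [heq, norm_smul, Real.norm_of_nonneg ht]
    rw [mul_assoc, norm_sub_rev x y]
    exact mul_le_mul_of_nonneg_left (hg x hx y hy) ht
  have : ‖x - y‖ = 0 := by nlinarith [norm_nonneg (x - y)]
  exact sub_eq_zero.1 (norm_eq_zero.1 this)

lemma eventually_det_one_add_pos : ∀ᶠ M : E →L[ℝ] E in 𝓝 0, 0 < (1 + M).det := by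
  have hcont : ContinuousAt (fun M : E →L[ℝ] E => (1 + M).det) 0 :=
    (ContinuousLinearMap.continuous_det.comp (continuous_const.add continuous_id)).continuousAt
  refine hcont.eventually (lt_mem_nhds ?_)
  simp [ContinuousLinearMap.det]

variable [FiniteDimensional ℝ E]

lemma exists_polynomial_eval_eq_det_one_add_smul (M : E →L[ℝ] E) :
    ∃ q : Polynomial ℝ, q.natDegree ≤ Module.finrank ℝ E ∧
      ∀ s : ℝ, q.eval s = (1 + s • M).det := by
  classical
  let b := Module.finBasis ℝ E
  let P := LinearMap.toMatrix b b (M : E →ₗ[ℝ] E)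
  refine ⟨((Polynomial.X : Polynomial ℝ) • P.map Polynomial.C
    + (1 : Matrix _ _ ℝ).map Polynomial.C).det, ?_, fun s => ?_⟩
  · simpa using Polynomial.natDegree_det_X_add_C_le P 1
  · have hP : LinearMap.toMatrix b b ((1 + s • M : E →L[ℝ] E) : E →ₗ[ℝ] E) = s • P + 1 := by
      have : ((1 + s • M : E →L[ℝ] E) : E →ₗ[ℝ] E) = s • (M : E →ₗ[ℝ] E) + 1 := by
        ext x
        simp [add_comm]
      rw [this, map_add, map_smul, LinearMap.toMatrix_one]
    rw [ContinuousLinearMap.det, ← LinearMap.det_toMatrix b, hP, ← Polynomial.coe_evalRingHom,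
      RingHom.map_det]
    congr 1
    ext i j
    rcases eq_or_ne i j with rfl | h
    · simp [mul_comm s]
    · simp [h, mul_comm s]

lemma isOpen_image_of_hasStrictFDerivAt {f : E → E} {f' : E → E →L[ℝ] E} {U : Set E}
    (hU : IsOpen U) (hf : ∀ x ∈ U, HasStrictFDerivAt f (f' x) x)
    (hdet : ∀ x ∈ U, (f' x).det ≠ 0) : IsOpen (f '' U) := by
  rw [isOpen_iff_mem_nhds]
  rintro _ ⟨x, hx, rfl⟩
  have hstrict : HasStrictFDerivAt f
      (((f' x).toContinuousLinearEquivOfDetNeZero (hdet x hx) : E ≃L[ℝ] E) : E →L[ℝ] E) x := by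
    rw [ContinuousLinearMap.coe_toContinuousLinearEquivOfDetNeZero]
    exact hf x hx
  rw [← hstrict.map_nhds_eq_of_equiv]
  exact image_mem_map (hU.mem_nhds hx)

lemma setIntegral_det_one_add_smul_eq [MeasurableSpace E] [BorelSpace E] (μ : Measure E)
    [μ.IsAddHaarMeasure] {g : E → E} {g' : E → E →L[ℝ] E}
    (hg : ∀ x ∈ closedBall (0 : E) 1, HasStrictFDerivAt g (g' x) x)
    (hsphere : ∀ x, ‖x‖ = 1 → g x = 0) (hball : ∀ x ∈ closedBall (0 : E) 1, ‖x + g x‖ ≤ 1)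
    {C t : ℝ} (hC : ∀ x ∈ closedBall (0 : E) 1, ‖g' x‖ ≤ C) (ht0 : 0 ≤ t) (ht1 : t < 1)
    (htC : t * C < 1) (hpos : ∀ x ∈ closedBall (0 : E) 1, 0 < (1 + t • g' x).det) :
    ∫ x in ball (0 : E) 1, (1 + t • g' x).det ∂μ = μ.real (ball (0 : E) 1) := by
  let f : E → E := fun x => x + t • g x
  have hLip : ∀ x ∈ closedBall (0 : E) 1, ∀ y ∈ closedBall (0 : E) 1,
      ‖g y - g x‖ ≤ C * ‖y - x‖ := fun x hx y hy =>
    (convex_closedBall (0 : E) 1).norm_image_sub_le_of_norm_hasFDerivWithin_le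
      (fun z hz => (hg z hz).hasFDerivAt.hasFDerivWithinAt) hC hx hy
  have hf : ∀ x ∈ closedBall (0 : E) 1, HasStrictFDerivAt f (1 + t • g' x) x :=
    fun x hx => (hasStrictFDerivAt_id x).add ((hg x hx).const_smul t)
  have hmaps : MapsTo f (ball 0 1) (ball 0 1) := fun x hx => by
    have hcomb : f x = (1 - t) • x + t • (x + g x) := by module
    have hx' := hball x (ball_subset_closedBall hx)
    rw [mem_ball_zero_iff] at hx ⊢
    rw [hcomb]
    refine (norm_add_le _ _).trans_lt ?_
    rw [norm_smul, norm_smul, Real.norm_of_nonneg ht0, Real.norm_of_nonneg (by linarith)]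
    nlinarith
  have himage : f '' ball 0 1 = ball 0 1 := image_ball_eq_ball_of_isOpen
    (fun x hx => (hf x hx).continuousAt.continuousWithinAt) hmaps
    (fun x hx => by simp [f, hsphere x hx])
    (isOpen_image_of_hasStrictFDerivAt isOpen_ball (fun x hx => hf x (ball_subset_closedBall hx))
      fun x hx => (hpos x (ball_subset_closedBall hx)).ne')
  have hinj : Set.InjOn f (ball 0 1) :=
    (injOn_add_smul_of_lipschitz ht0 htC hLip).mono ball_subset_closedBall
  have hchange := integral_image_eq_integral_abs_det_fderiv_smul μ measurableSet_ball
    (fun x hx => (hf x (ball_subset_closedBall hx)).hasFDerivAt.hasFDerivWithinAt) hinj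
    fun _ => (1 : ℝ)
  simp only [himage, integral_const, smul_eq_mul, mul_one, measureReal_restrict_apply_univ]
    at hchange
  rw [hchange]
  exact setIntegral_congr_fun measurableSet_ball fun x hx =>
    (abs_of_pos (hpos x (ball_subset_closedBall hx))).symm

lemma exists_forall_setIntegral_det_eq [MeasurableSpace E] [BorelSpace E] (μ : Measure E)
    [μ.IsAddHaarMeasure] {g : E → E} (hg : ∀ x ∈ closedBall (0 : E) 1, ContDiffAt ℝ 1 g x)
    (hsphere : ∀ x, ‖x‖ = 1 → g x = 0) (hball : ∀ x ∈ closedBall (0 : E) 1, ‖x + g x‖ ≤ 1) :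
    ∃ δ > (0 : ℝ), ∀ t ∈ Set.Icc 0 δ,
      ∫ x in ball (0 : E) 1, (1 + t • fderiv ℝ g x).det ∂μ = μ.real (ball (0 : E) 1) := by
  have hcont : ContinuousOn (fderiv ℝ g) (closedBall 0 1) := fun x hx =>
    ((hg x hx).fderiv_right (m := 0) le_rfl).continuousAt.continuousWithinAt
  obtain ⟨C, hC⟩ := (isCompact_closedBall (0 : E) 1).exists_bound_of_continuousOn hcont
  have hC0 : 0 ≤ C := (norm_nonneg _).trans (hC 0 (by simp))
  obtain ⟨η, hη, hdet⟩ := Metric.eventually_nhds_iff.1 (eventually_det_one_add_pos (E := E))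
  obtain ⟨δ, ⟨hδ1, hδC⟩, hδ⟩ : ∃ δ : ℝ, (δ < 1 ∧ δ * C < min 1 η) ∧ 0 < δ := by
    have hlim : Tendsto (fun δ : ℝ => δ * C) (𝓝 0) (𝓝 0) := by
      simpa using (tendsto_id (α := ℝ) (x := 𝓝 0)).mul_const C
    have hsmall := (gt_mem_nhds one_pos).and (hlim.eventually (gt_mem_nhds (lt_min one_pos hη)))
    exact ((hsmall.filter_mono nhdsWithin_le_nhds).and
      (self_mem_nhdsWithin (s := Set.Ioi (0 : ℝ)))).exists
  refine ⟨δ, hδ, fun t ⟨ht0, htδ⟩ => ?_⟩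
  have htC : t * C < min 1 η := (mul_le_mul_of_nonneg_right htδ hC0).trans_lt hδC
  refine setIntegral_det_one_add_smul_eq μ (fun x hx => (hg x hx).hasStrictFDerivAt one_ne_zero)
    hsphere hball hC ht0 (htδ.trans_lt hδ1) (htC.trans_le (min_le_left _ _)) fun x hx => hdet ?_
  rw [dist_zero_right, norm_smul, Real.norm_of_nonneg ht0]
  exact (mul_le_mul_of_nonneg_left (hC x hx) ht0).trans_lt (htC.trans_le (min_le_right _ _))

end Normed

variable {E : Type*} [NormedAddCommGroup E] [InnerProductSpace ℝ E]

/-- The point at which the ray from `x` in the direction `u` leaves the unit ball. -/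
def rayExit (x u : E) : E :=
  x + ((-⟪x, u⟫ + √(⟪x, u⟫ ^ 2 + ‖u‖ ^ 2 * (1 - ‖x‖ ^ 2))) / ‖u‖ ^ 2) • u

lemma norm_rayExit {x u : E} (hx : ‖x‖ ≤ 1) (hu : u ≠ 0) : ‖rayExit x u‖ = 1 := by
  have hu' : ‖u‖ ≠ 0 := norm_ne_zero_iff.2 hu
  have hx' : 0 ≤ 1 - ‖x‖ ^ 2 := by nlinarith [norm_nonneg x]
  have hsqrt := Real.sq_sqrt (by positivity : 0 ≤ ⟪x, u⟫ ^ 2 + ‖u‖ ^ 2 * (1 - ‖x‖ ^ 2))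
  have hsq : ‖rayExit x u‖ ^ 2 = 1 := by
    rw [rayExit, norm_add_sq_real, inner_smul_right, norm_smul, mul_pow, Real.norm_eq_abs, sq_abs]
    field_simp
    nlinarith
  exact (sq_eq_sq₀ (norm_nonneg _) zero_le_one).1 (by rw [hsq, one_pow])

lemma rayExit_eq_self {x u : E} (hx : ‖x‖ = 1) (hxu : 0 ≤ ⟪x, u⟫) : rayExit x u = x := by
  simp [rayExit, hx, Real.sqrt_sq hxu]

lemma contDiffAt_rayExit {u : E → E} {x : E} (hu : ContDiffAt ℝ 1 u x) (hux : u x ≠ 0)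
    (hpos : 0 < ⟪x, u x⟫ ^ 2 + ‖u x‖ ^ 2 * (1 - ‖x‖ ^ 2)) :
    ContDiffAt ℝ 1 (fun y => rayExit y (u y)) x := by
  have hinner : ContDiffAt ℝ 1 (fun y => ⟪y, u y⟫) x := contDiffAt_id.inner ℝ hu
  have hdisc : ContDiffAt ℝ 1 (fun y => ⟪y, u y⟫ ^ 2 + ‖u y‖ ^ 2 * (1 - ‖y‖ ^ 2)) x :=
    (hinner.pow 2).add ((hu.norm_sq ℝ).mul (contDiffAt_const.sub (contDiff_norm_sq ℝ).contDiffAt))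
  exact contDiffAt_id.add (((hinner.neg.add (hdisc.sqrt hpos.ne')).div (hu.norm_sq ℝ)
    (pow_ne_zero 2 (norm_ne_zero_iff.2 hux))).smul hu)

lemma inner_self_sub_pos {x y : E} (hx : ‖x‖ = 1) (hy : ‖y‖ ≤ 1) (hxy : y ≠ x) :
    0 < ⟪x, x - y⟫ := by
  have hpos : 0 < ‖x - y‖ ^ 2 := pow_pos (norm_pos_iff.2 (sub_ne_zero.2 hxy.symm)) 2
  have hexp : ‖x - y‖ ^ 2 = ‖x‖ ^ 2 - 2 * ⟪x, y⟫ + ‖y‖ ^ 2 := norm_sub_sq_real x y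
  rw [inner_sub_right, real_inner_self_eq_norm_sq]
  rw [hx] at hexp ⊢
  nlinarith [norm_nonneg y]

/-- Nearest-point projection. -/
lemma exists_lipschitzWith_retraction {K : Set E} (hne : K.Nonempty) (hK : IsComplete K)
    (hconv : Convex ℝ K) :
    ∃ ρ : E → E, LipschitzWith 1 ρ ∧ (∀ x, ρ x ∈ K) ∧ ∀ x ∈ K, ρ x = x := by
  choose ρ hρK hρmin using exists_norm_eq_iInf_of_complete_convex hne hK hconv
  have hinner : ∀ x, ∀ w ∈ K, ⟪x - ρ x, w - ρ x⟫ ≤ 0 := fun x =>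
    (norm_eq_iInf_iff_real_inner_le_zero hconv (hρK x)).1 (hρmin x)
  refine ⟨ρ, LipschitzWith.of_dist_le_mul fun x y => ?_, hρK, fun x hx => ?_⟩
  · have hsq : ‖ρ x - ρ y‖ ^ 2 ≤ ‖x - y‖ * ‖ρ x - ρ y‖ := by
      refine le_trans ?_ (real_inner_le_norm _ _)
      have hx := hinner x (ρ y) (hρK y)
      have hy := hinner y (ρ x) (hρK x)
      rw [← real_inner_self_eq_norm_sq]
      rw [← neg_sub (ρ x) (ρ y), inner_neg_right] at hx
      have hsum : ⟪x - y, ρ x - ρ y⟫ - ⟪ρ x - ρ y, ρ x - ρ y⟫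
          = ⟪x - ρ x, ρ x - ρ y⟫ - ⟪y - ρ y, ρ x - ρ y⟫ := by
        rw [← inner_sub_left, ← inner_sub_left]
        congr 1
        abel
      linarith
    rw [NNReal.coe_one, one_mul, dist_eq_norm, dist_eq_norm]
    by_contra! hlt
    nlinarith [norm_nonneg (x - y)]
  · have h := hinner x x hx
    rw [real_inner_self_eq_norm_sq] at h
    have hnorm : ‖x - ρ x‖ = 0 := pow_eq_zero_iff two_ne_zero |>.1 (h.antisymm (sq_nonneg _))
    exact (sub_eq_zero.1 (norm_eq_zero.1 hnorm)).symm

variable [FiniteDimensional ℝ E]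

lemma det_eq_zero_of_norm_eventually_const {r : E → E} {r' : E →L[ℝ] E} {x : E} {c : ℝ}
    (hc : c ≠ 0) (hr : HasFDerivAt r r' x) (hnorm : ∀ᶠ y in 𝓝 x, ‖r y‖ = c) : r'.det = 0 := by
  by_contra hdet
  have hconst : HasFDerivAt (fun y => ‖r y‖ ^ 2) (0 : E →L[ℝ] ℝ) x :=
    (hasFDerivAt_const (c ^ 2) x).congr_of_eventuallyEq (hnorm.mono fun y hy => by simp [hy])
  obtain ⟨v, hv⟩ : ∃ v, r' v = r x := ⟨(r'.toContinuousLinearEquivOfDetNeZero hdet).symm (r x), by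
    rw [← ContinuousLinearMap.toContinuousLinearEquivOfDetNeZero_apply _ hdet]; simp⟩
  have := DFunLike.congr_fun (hr.norm_sq.unique hconst) v
  simp [hv, hnorm.self_of_nhds, hc] at this

lemma no_contDiffAt_retraction {r : E → E} (hr : ∀ x ∈ closedBall (0 : E) 1, ContDiffAt ℝ 1 r x)
    (hnorm : ∀ x ∈ closedBall (0 : E) 1, ‖r x‖ = 1) (hsphere : ∀ x, ‖x‖ = 1 → r x = x) :
    False := by
  borelize E
  let μ : Measure E := Measure.addHaar
  let g : E → E := fun x => r x - x
  have hg : ∀ x ∈ closedBall (0 : E) 1, ContDiffAt ℝ 1 g x := fun x hx =>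
    (hr x hx).sub contDiffAt_id
  obtain ⟨δ, hδ, hvol⟩ := exists_forall_setIntegral_det_eq μ hg
    (fun x hx => by simp [g, hsphere x hx]) fun x hx => by simp [g, hnorm x hx]
  choose q hq hqdet using fun x => exists_polynomial_eval_eq_det_one_add_smul (fderiv ℝ g x)
  have hint : ∀ s, IntegrableOn (fun x => (q x).eval s) (ball 0 1) μ := fun s => by
    have hcont : ContinuousOn (fderiv ℝ g) (closedBall 0 1) := fun x hx =>
      ((hg x hx).fderiv_right (m := 0) le_rfl).continuousAt.continuousWithinAt
    simp only [hqdet]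
    exact (ContinuousLinearMap.continuous_det.comp_continuousOn
      (continuousOn_const.add (hcont.const_smul s))).integrableOn_compact
      (isCompact_closedBall _ _) |>.mono_set ball_subset_closedBall
  have hdet : ∀ x ∈ ball (0 : E) 1, (q x).eval 1 = 0 := fun x hx => by
    have hrd := ((hr x (ball_subset_closedBall hx)).differentiableAt one_ne_zero).hasFDerivAt
    have hgd : fderiv ℝ g x = fderiv ℝ r x - 1 := (hrd.sub (hasFDerivAt_id x)).fderiv
    rw [hqdet, one_smul, hgd, add_sub_cancel]
    exact det_eq_zero_of_norm_eventually_const one_ne_zero hrd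
      (eventually_of_mem (isOpen_ball.mem_nhds hx) fun y hy => hnorm y (ball_subset_closedBall hy))
  have hone := integral_eval_one_eq_of_forall_Icc hq hint hδ fun s hs => by
    simpa only [hqdet] using hvol s hs
  rw [setIntegral_congr_fun measurableSet_ball hdet, integral_zero] at hone
  exact (ENNReal.toReal_pos (measure_ball_pos μ 0 one_pos).ne' measure_ball_lt_top.ne).ne hone

lemma exists_fixedPoint_closedBall_of_contDiff {F : E → E} (hF : ContDiff ℝ 1 F)
    (hmaps : MapsTo F (closedBall 0 1) (closedBall 0 1)) :
    ∃ x ∈ closedBall (0 : E) 1, F x = x := by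
  by_contra! hne
  have hFx : ∀ x ∈ closedBall (0 : E) 1, ‖F x‖ ≤ 1 := fun x hx => by simpa using hmaps hx
  have hdir : ∀ x ∈ closedBall (0 : E) 1, x - F x ≠ 0 := fun x hx =>
    sub_ne_zero.2 (hne x hx).symm
  have hout : ∀ x, ‖x‖ = 1 → 0 < ⟪x, x - F x⟫ := fun x hx =>
    have hx' : x ∈ closedBall (0 : E) 1 := by simp [hx]
    inner_self_sub_pos hx (hFx x hx') (hne x hx')
  refine no_contDiffAt_retraction (r := fun x => rayExit x (x - F x)) (fun x hx => ?_)
    (fun x hx => norm_rayExit (by simpa using hx) (hdir x hx))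
    fun x hx => rayExit_eq_self hx (hout x hx).le
  refine contDiffAt_rayExit (contDiffAt_id.sub hF.contDiffAt) (hdir x hx) ?_
  have hx1 : ‖x‖ ≤ 1 := by simpa using hx
  rcases hx1.lt_or_eq with hlt | heq
  · have h1 : 0 < 1 - ‖x‖ ^ 2 := by nlinarith [norm_nonneg x]
    have h2 : 0 < ‖x - F x‖ := norm_pos_iff.2 (hdir x hx)
    positivity
  · simpa [heq] using pow_pos (hout x heq) 2

lemma exists_fixedPoint_of_forall_exists_dist_lt {X : Type*} [MetricSpace X] {K : Set X}
    (hK : IsCompact K) {F : X → X} (hF : ContinuousOn F K)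
    (h : ∀ ε > 0, ∃ x ∈ K, dist (F x) x < ε) : ∃ x ∈ K, F x = x := by
  obtain ⟨x₁, hx₁, -⟩ := h 1 one_pos
  obtain ⟨x, hx, hmin⟩ := hK.exists_isMinOn ⟨x₁, hx₁⟩ 
    (continuous_dist.comp_continuousOn (hF.prodMk continuousOn_id))
  refine ⟨x, hx, dist_le_zero.1 (le_of_forall_pos_lt_add fun ε hε => ?_)⟩
  obtain ⟨y, hy, hlt⟩ := h ε hε
  simpa using (hmin hy).trans_lt hlt

lemma exists_fixedPoint_closedBall {F : E → E} (hF : Continuous F)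
    (hmaps : MapsTo F (closedBall 0 1) (closedBall 0 1)) :
    ∃ x ∈ closedBall (0 : E) 1, F x = x := by
  refine exists_fixedPoint_of_forall_exists_dist_lt (isCompact_closedBall 0 1) hF.continuousOn
    fun ε hε => ?_
  obtain ⟨g, hg, hgF, -⟩ := hF.exists_contDiff_approx 1 continuous_const
    (fun _ : E => (by positivity : 0 < ε / 3))
  have hgF' : ∀ x, ‖g x - F x‖ < ε / 3 := fun x => by simpa [dist_eq_norm] using hgF x
  have hk : 0 < 1 + ε / 3 := by positivity
  obtain ⟨x, hx, hfix⟩ := exists_fixedPoint_closedBall_of_contDiff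
    (F := fun x => (1 + ε / 3)⁻¹ • g x) (contDiff_const.smul hg) fun x hx => by
      have hFx : ‖F x‖ ≤ 1 := by simpa using hmaps hx
      rw [mem_closedBall_zero_iff, norm_smul, norm_inv, Real.norm_of_nonneg hk.le,
        inv_mul_le_iff₀ hk, mul_one]
      linarith [norm_le_norm_add_norm_sub' (g x) (F x), hgF' x]
  refine ⟨x, hx, ?_⟩
  have hgx : g x = (1 + ε / 3) • x := (inv_smul_eq_iff₀ hk.ne').1 hfix
  have hsub : F x - x = (ε / 3) • x - (g x - F x) := by
    rw [hgx]
    module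
  have hsmul : ‖(ε / 3) • x‖ ≤ ε / 3 := by
    rw [norm_smul, Real.norm_of_nonneg (by positivity)]
    exact mul_le_of_le_one_right (by positivity) (by simpa using hx)
  rw [dist_eq_norm, hsub]
  linarith [norm_sub_le ((ε / 3) • x) (g x - F x), hgF' x]

/-- **Brouwer's fixed point theorem**. -/
theorem exists_fixedPoint_of_isCompact_of_convex {E : Type*} [NormedAddCommGroup E]
    [NormedSpace ℝ E] [FiniteDimensional ℝ E] {K : Set E} (hK : IsCompact K) (hconv : Convex ℝ K)
    (hne : K.Nonempty) {F : E → E} (hF : ContinuousOn F K) (hmaps : MapsTo F K K) :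
    ∃ x ∈ K, F x = x := by
  let e : E ≃L[ℝ] EuclideanSpace ℝ (Fin (Module.finrank ℝ E)) := toEuclidean
  have hK' : IsCompact (e '' K) := hK.image e.continuous
  obtain ⟨ρ, hρ, hρK, hρid⟩ := exists_lipschitzWith_retraction (hne.image e) hK'.isComplete
    (hconv.is_linear_image e.toLinearMap.isLinear)
  have hρK' : ∀ y, e.symm (ρ y) ∈ K := fun y => by
    obtain ⟨x, hx, hxy⟩ := hρK y
    simpa [← hxy] using hx
  obtain ⟨R, hR, hKR⟩ := hK'.isBounded.subset_closedBall_lt 0 0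
  let G : EuclideanSpace ℝ (Fin (Module.finrank ℝ E)) → _ :=
    fun y => R⁻¹ • e (F (e.symm (ρ (R • y))))
  have hFρ : Continuous fun y => F (e.symm (ρ (R • y))) := hF.comp_continuous
    (e.symm.continuous.comp (hρ.continuous.comp (continuous_const_smul R))) fun y => hρK' _
  have hG : Continuous G := (e.continuous.comp hFρ).const_smul R⁻¹
  obtain ⟨y, -, hy⟩ := exists_fixedPoint_closedBall hG fun y _ => by
    have : ‖e (F (e.symm (ρ (R • y))))‖ ≤ R := by
      simpa using hKR (mem_image_of_mem e (hmaps (hρK' (R • y))))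
    rw [mem_closedBall_zero_iff, norm_smul, norm_inv, Real.norm_of_nonneg hR.le]
    exact inv_mul_le_one_of_le₀ this hR.le
  have hfix : e (F (e.symm (ρ (R • y)))) = R • y := (inv_smul_eq_iff₀ hR.ne').1 hy
  have hmem : R • y ∈ e '' K := hfix ▸ mem_image_of_mem e (hmaps (hρK' _))
  rw [hρid _ hmem] at hfix
  exact ⟨e.symm (R • y), hρid _ hmem ▸ hρK' _, e.injective (by simpa using hfix)⟩

end Brouwer

section SecondDerivative

lemma deriv_deriv_nonpos_of_isLocalMax {h : ℝ → ℝ} {t : ℝ} (hcont : ContinuousAt h t)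
    (hmax : IsLocalMax h t) : deriv (deriv h) t ≤ 0 := by
  by_contra! hpos
  have hmin : IsLocalMin h t := isLocalMin_of_deriv_deriv_pos hpos hmax.deriv_eq_zero hcont
  have hconst : h =ᶠ[𝓝 t] fun _ => h t := by
    filter_upwards [hmax, hmin] with s hs₁ hs₂
    exact le_antisymm hs₁ hs₂
  have hzero : deriv (deriv h) t = 0 := by
    rw [EventuallyEq.deriv_eq hconst.deriv]
    simp
  exact hpos.ne' hzero

lemma fderiv_fderiv_nonpos_of_isLocalMax {E : Type*} [NormedAddCommGroup E] [NormedSpace ℝ E]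
    {u : E → ℝ} (hu : ContDiff ℝ 2 u) {x : E} (hx : IsLocalMax u x) (v : E) :
    fderiv ℝ (fderiv ℝ u) x v v ≤ 0 := by
  have hline : ∀ t : ℝ, HasDerivAt (fun t : ℝ => x + t • v) v t := fun t => by
    simpa using ((hasDerivAt_id t).smul_const v).const_add x
  have hd : ∀ t : ℝ, HasDerivAt (fun t : ℝ => u (x + t • v)) (fderiv ℝ u (x + t • v) v) t :=
    fun t => (hu.differentiable two_ne_zero _).hasFDerivAt.comp_hasDerivAt t (hline t)
  have hd2 : HasDerivAt (fun t : ℝ => fderiv ℝ u (x + t • v) v)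
      (fderiv ℝ (fderiv ℝ u) (x + (0 : ℝ) • v) v v) 0 := by
    have hu' : Differentiable ℝ (fderiv ℝ u) :=
      (hu.fderiv_right (m := 1) (by norm_num)).differentiable one_ne_zero
    simpa using ((hu' _).hasFDerivAt.comp_hasDerivAt (0 : ℝ) (hline 0)).clm_apply
      (hasDerivAt_const 0 v)
  have hmax : IsLocalMax (fun t : ℝ => u (x + t • v)) 0 := by
    have hc : Tendsto (fun t : ℝ => x + t • v) (𝓝 0) (𝓝 x) := by
      simpa using (hline 0).continuousAt.tendsto
    filter_upwards [hc.eventually hx] with t ht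
    simpa using ht
  have := deriv_deriv_nonpos_of_isLocalMax (hd 0).continuousAt hmax
  rwa [funext fun t => (hd t).deriv, hd2.deriv, zero_smul, add_zero] at this

lemma bilin_apply_eq_sum {n : Type*} [Fintype n] [DecidableEq n]
    (D : EuclideanSpace ℝ n →L[ℝ] EuclideanSpace ℝ n →L[ℝ] ℝ) (v w : EuclideanSpace ℝ n) :
    D v w = ∑ i, ∑ j,
      v i * w j * D (EuclideanSpace.single i 1) (EuclideanSpace.single j 1) := by
  conv_lhs => rw [← (EuclideanSpace.basisFun n ℝ).sum_repr v,
    ← (EuclideanSpace.basisFun n ℝ).sum_repr w]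
  simp only [EuclideanSpace.basisFun_repr, EuclideanSpace.basisFun_apply, map_sum, map_smul,
    sum_apply, smul_apply, smul_eq_mul, Finset.mul_sum, mul_assoc]
  rw [Finset.sum_comm]
  exact Finset.sum_congr rfl fun i _ => Finset.sum_congr rfl fun j _ => by ring

lemma sum_sum_mul_nonpos_of_posSemidef {n : Type*} [Fintype n] [DecidableEq n]
    {M : Matrix n n ℝ} (hM : M.PosSemidef)
    {D : EuclideanSpace ℝ n →L[ℝ] EuclideanSpace ℝ n →L[ℝ] ℝ} (hD : ∀ v, D v v ≤ 0) :
    ∑ i, ∑ j, M i j * D (EuclideanSpace.single i 1) (EuclideanSpace.single j 1) ≤ 0 := by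
  obtain ⟨m, v, rfl⟩ := Matrix.posSemidef_iff_eq_sum_vecMulVec.1 hM
  calc _ = ∑ k, D (WithLp.toLp 2 (v k)) (WithLp.toLp 2 (v k)) := by
        rw [Finset.sum_congr rfl fun k _ => bilin_apply_eq_sum D _ _]
        simp only [Matrix.sum_apply, Matrix.vecMulVec_apply, Finset.sum_mul, star_trivial]
        rw [Finset.sum_comm (s := (Finset.univ : Finset (Fin m)))]
        refine Finset.sum_congr rfl fun i _ => ?_
        rw [Finset.sum_comm]
    _ ≤ 0 := Finset.sum_nonpos fun k _ => hD _

end SecondDerivative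

section Operator

variable {A : Ed d → Matrix (Fin d) (Fin d) ℝ} {B : Ed d → Ed d} {φ ψ : Ed d → ℝ} {x : Ed d}

lemma hess2_eq_fderiv_fderiv (φ : Ed d → ℝ) (x : Ed d) (i j : Fin d) :
    hess2 φ x i j = fderiv ℝ (fderiv ℝ φ) x (EuclideanSpace.single i 1)
      (EuclideanSpace.single j 1) := by
  simp [hess2, iteratedFDeriv_two_apply]

lemma inner_gradient_eq_fderiv (φ : Ed d → ℝ) (x v : Ed d) :
    ⟪v, gradient φ x⟫ = fderiv ℝ φ x v := by
  simp [inner_gradient_right]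

lemma Lop_eq_Lop_zero_add (A : Ed d → Matrix (Fin d) (Fin d) ℝ) (B : Ed d → Ed d)
    (φ : Ed d → ℝ) (x : Ed d) : Lop A B φ x = Lop A 0 φ x + ⟪B x, gradient φ x⟫ := by
  simp [Lop]

lemma continuous_gradient (hφ : ContDiff ℝ 2 φ) : Continuous (gradient φ) :=
  (LinearIsometryEquiv.continuous _).comp (hφ.continuous_fderiv two_ne_zero)

lemma continuous_hess2 (hφ : ContDiff ℝ 2 φ) (i j : Fin d) :
    Continuous fun x => hess2 φ x i j := by
  simp_rw [hess2_eq_fderiv_fderiv]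
  have : Continuous (fderiv ℝ (fderiv ℝ φ)) :=
    (hφ.fderiv_right (m := 1) (by norm_num)).continuous_fderiv one_ne_zero
  fun_prop

lemma continuous_Lop (hA : ∀ i j, Continuous fun x => A x i j) (hB : Continuous B)
    (hφ : ContDiff ℝ 2 φ) : Continuous (Lop A B φ) :=
  (continuous_finsetSum _ fun i _ => continuous_finsetSum _ fun j _ =>
    (hA i j).mul (continuous_hess2 hφ i j)).add (hB.inner (continuous_gradient hφ))

lemma fderiv_eq_zero_of_notMem_tsupport (hx : x ∉ tsupport φ) : fderiv ℝ φ x = 0 :=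
  Function.notMem_support.1 fun h => hx (support_fderiv_subset ℝ h)

lemma hess2_eq_zero_of_notMem_tsupport (hx : x ∉ tsupport φ) (i j : Fin d) :
    hess2 φ x i j = 0 := by
  have : fderiv ℝ (fderiv ℝ φ) x = 0 :=
    Function.notMem_support.1 fun h => hx (tsupport_fderiv_subset ℝ (support_fderiv_subset ℝ h))
  simp [hess2_eq_fderiv_fderiv, this]

lemma gradient_eq_zero_of_notMem_tsupport (hx : x ∉ tsupport φ) : gradient φ x = 0 := by
  simp [gradient, fderiv_eq_zero_of_notMem_tsupport hx]

lemma Lop_eq_zero_of_notMem_tsupport (A : Ed d → Matrix (Fin d) (Fin d) ℝ) (B : Ed d → Ed d)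
    (hx : x ∉ tsupport φ) : Lop A B φ x = 0 := by
  simp [Lop, gradient_eq_zero_of_notMem_tsupport hx, hess2_eq_zero_of_notMem_tsupport hx]

lemma hasCompactSupport_Lop (A : Ed d → Matrix (Fin d) (Fin d) ℝ) (B : Ed d → Ed d)
    (hφ : HasCompactSupport φ) : HasCompactSupport (Lop A B φ) :=
  HasCompactSupport.intro hφ fun _ hx => Lop_eq_zero_of_notMem_tsupport A B hx

lemma hasCompactSupport_gradient (hφ : HasCompactSupport φ) : HasCompactSupport (gradient φ) :=
  HasCompactSupport.intro hφ fun _ hx => gradient_eq_zero_of_notMem_tsupport hx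

lemma Lop_add (A : Ed d → Matrix (Fin d) (Fin d) ℝ) (B : Ed d → Ed d)
    (hφ : ContDiff ℝ 2 φ) (hψ : ContDiff ℝ 2 ψ) (x : Ed d) :
    Lop A B (φ + ψ) x = Lop A B φ x + Lop A B ψ x := by
  have hfd : fderiv ℝ (φ + ψ) = fderiv ℝ φ + fderiv ℝ ψ := funext fun y =>
    fderiv_add (hφ.differentiable two_ne_zero y) (hψ.differentiable two_ne_zero y)
  have hfd2 : fderiv ℝ (fderiv ℝ φ + fderiv ℝ ψ) x
      = fderiv ℝ (fderiv ℝ φ) x + fderiv ℝ (fderiv ℝ ψ) x :=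
    fderiv_add ((hφ.fderiv_right (m := 1) (by norm_num)).differentiable one_ne_zero x)
      ((hψ.fderiv_right (m := 1) (by norm_num)).differentiable one_ne_zero x)
  simp only [Lop, hess2_eq_fderiv_fderiv, inner_gradient_eq_fderiv, hfd, hfd2, add_apply,
    Pi.add_apply, mul_add, Finset.sum_add_distrib]
  ring

lemma Lop_const_smul (A : Ed d → Matrix (Fin d) (Fin d) ℝ) (B : Ed d → Ed d)
    (hφ : ContDiff ℝ 2 φ) (c : ℝ) (x : Ed d) : Lop A B (c • φ) x = c * Lop A B φ x := by
  have hfd : fderiv ℝ (c • φ) = c • fderiv ℝ φ := funext fun y =>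
    fderiv_const_smul (hφ.differentiable two_ne_zero y) c
  have hfd2 : fderiv ℝ (c • fderiv ℝ φ) x = c • fderiv ℝ (fderiv ℝ φ) x :=
    fderiv_const_smul ((hφ.fderiv_right (m := 1) (by norm_num)).differentiable one_ne_zero x) c
  simp only [Lop, hess2_eq_fderiv_fderiv, inner_gradient_eq_fderiv, hfd, hfd2, smul_apply,
    Pi.smul_apply, smul_eq_mul, mul_add, Finset.mul_sum, mul_left_comm c]

lemma IsTestFun.contDiff_two (hφ : IsTestFun φ) : ContDiff ℝ 2 φ :=
  contDiff_infty.1 hφ.1 2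

lemma isTestFun_zero : IsTestFun (0 : Ed d → ℝ) :=
  ⟨contDiff_const, HasCompactSupport.zero⟩

lemma IsTestFun.add (hφ : IsTestFun φ) (hψ : IsTestFun ψ) : IsTestFun (φ + ψ) :=
  ⟨hφ.1.add hψ.1, hφ.2.add hψ.2⟩

lemma IsTestFun.const_smul (hφ : IsTestFun φ) (c : ℝ) : IsTestFun (c • φ) :=
  ⟨hφ.1.const_smul c, hφ.2.smul_left (f := fun _ => c)⟩

lemma IsTestFun.integrable_Lop {μ : Measure (Ed d)} [IsFiniteMeasure μ] (hφ : IsTestFun φ)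
    (hA : ∀ i j, Continuous fun x => A x i j) (hB : Continuous B) : Integrable (Lop A B φ) μ :=
  (continuous_Lop hA hB hφ.contDiff_two).integrable_of_hasCompactSupport
    (hasCompactSupport_Lop A B hφ.2)

lemma exists_isTestFun_Lop_eq_sum (A : Ed d → Matrix (Fin d) (Fin d) ℝ) (B : Ed d → Ed d)
    {ι : Type*} (s : Finset ι) (θ : ι → ℝ) {φ : ι → Ed d → ℝ} (hφ : ∀ i, IsTestFun (φ i)) :
    ∃ ψ, IsTestFun ψ ∧ ∀ x, Lop A B ψ x = ∑ i ∈ s, θ i * Lop A B (φ i) x := by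
  classical
  induction s using Finset.induction_on with
  | empty =>
    exact ⟨0, isTestFun_zero, fun x => by
      simpa using Lop_const_smul A B (contDiff_const (c := (0 : ℝ))) 0 x⟩
  | insert a s ha ih =>
    obtain ⟨ψ, hψ, hsum⟩ := ih
    refine ⟨θ a • φ a + ψ, ((hφ a).const_smul _).add hψ, fun x => ?_⟩
    rw [Lop_add A B ((hφ a).const_smul _).contDiff_two hψ.contDiff_two,
      Lop_const_smul A B (hφ a).contDiff_two, hsum, Finset.sum_insert ha]

lemma Lop_nonpos_of_isLocalMax (hA : (A x).PosSemidef) {u : Ed d → ℝ} (hu : ContDiff ℝ 2 u)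
    (hx : IsLocalMax u x) : Lop A B u x ≤ 0 := by
  simp only [Lop, hess2_eq_fderiv_fderiv, inner_gradient_eq_fderiv, hx.fderiv_eq_zero, zero_apply,
    add_zero]
  exact sum_sum_mul_nonpos_of_posSemidef hA fun v => fderiv_fderiv_nonpos_of_isLocalMax hu hx v

lemma exists_Lop_le_mul_Lop (hA : ∀ x, (A x).PosSemidef) {V : Ed d → ℝ} (hV : ContDiff ℝ 2 V)
    (hVinf : Tendsto V (cocompact (Ed d)) atTop) (hψ : IsTestFun ψ) {k : ℝ} (hk : 0 ≤ k) :
    ∃ x, Lop A B ψ x ≤ k * Lop A B V x := by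
  have hkV : ContDiff ℝ 2 ((-k) • V) := hV.const_smul (-k)
  have hu : ContDiff ℝ 2 (ψ + (-k) • V) := hψ.contDiff_two.add hkV
  obtain ⟨x, hx⟩ : ∃ x, ∀ y, (ψ + (-k) • V) y ≤ (ψ + (-k) • V) x := by
    rcases hk.eq_or_lt with rfl | hk
    · exact hu.continuous.exists_forall_ge_of_hasCompactSupport (by simpa using hψ.2)
    · obtain ⟨M, hM⟩ := hψ.1.continuous.bounded_above_of_compact_support hψ.2
      refine hu.continuous.exists_forall_ge (tendsto_atBot_mono (fun y => ?_)
        (tendsto_atBot_add_const_left _ M (hVinf.const_mul_atTop_of_neg (neg_neg_of_pos hk))))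
      exact add_le_add_left ((le_abs_self _).trans (hM y)) _
  refine ⟨x, ?_⟩
  have h := Lop_nonpos_of_isLocalMax (B := B) (hA x) hu (Eventually.of_forall hx)
  rw [Lop_add A B hψ.contDiff_two hkV, Lop_const_smul A B hV] at h
  linarith

end Operator

section Moments

variable {X : Type*} [MeasurableSpace X] [TopologicalSpace X] {V : X → ℝ} {c : ℝ}

lemma lowerSemicontinuous_lintegral_coe [OpensMeasurableSpace X] {f : X → ℝ≥0}
    (hf : Continuous f) :
    LowerSemicontinuous fun P : ProbabilityMeasure X => ∫⁻ x, f x ∂(P : Measure X) := by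
  let g : ℕ → BoundedContinuousFunction X ℝ≥0 := fun n =>
    BoundedContinuousFunction.mkOfBound ⟨fun x => min (f x) n, by fun_prop⟩ n fun x y => by
      rw [NNReal.dist_eq, abs_le]
      have hle : ∀ z, ((min (f z) n : ℝ≥0) : ℝ) ≤ n := fun z => by exact_mod_cast min_le_right _ _
      simp only [ContinuousMap.coe_mk]
      constructor <;> linarith [hle x, hle y, (min (f x) n).coe_nonneg, (min (f y) n).coe_nonneg]
  have hg : ∀ n x, g n x = min (f x) n := fun n x => rfl
  have hsup : ∀ x, (f x : ℝ≥0∞) = ⨆ n, (g n x : ℝ≥0∞) := fun x => by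
    obtain ⟨n, hn⟩ := exists_nat_ge (f x)
    exact le_antisymm (le_iSup_of_le n (by rw [hg, min_eq_left hn]))
      (iSup_le fun n => ENNReal.coe_le_coe.2 (min_le_left _ _))
  simp_rw [hsup]
  simp_rw [lintegral_iSup (fun n => (g n).continuous.measurable.coe_nnreal_ennreal)
    fun _ _ hnm _ => ENNReal.coe_le_coe.2 (min_le_min le_rfl (Nat.cast_le.2 hnm))]
  exact lowerSemicontinuous_iSup fun n =>
    (ProbabilityMeasure.continuous_lintegral_boundedContinuousFunction (g n)).lowerSemicontinuous

/-- The probability measures `P` with `∫ V dP ≤ c` (for `0 ≤ V` and `0 ≤ c`). -/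
def momentSet (V : X → ℝ) (c : ℝ) : Set (ProbabilityMeasure X) :=
  {P | ∫⁻ x, ENNReal.ofReal (V x) ∂(P : Measure X) ≤ ENNReal.ofReal c}

lemma mem_momentSet_iff [OpensMeasurableSpace X] (hV : Continuous V) (hV0 : ∀ x, 0 ≤ V x)
    (hc : 0 ≤ c) {P : ProbabilityMeasure X} : P ∈ momentSet V c ↔
      Integrable V (P : Measure X) ∧ ∫ x, V x ∂(P : Measure X) ≤ c := by
  have hV0' : 0 ≤ᵐ[(P : Measure X)] V := Eventually.of_forall hV0
  refine ⟨fun h => ?_, fun ⟨hint, h⟩ => ?_⟩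
  · refine ⟨⟨hV.aestronglyMeasurable, ?_⟩, ?_⟩
    · exact (hasFiniteIntegral_iff_ofReal hV0').2 (h.trans_lt ENNReal.ofReal_lt_top)
    · rw [integral_eq_lintegral_of_nonneg_ae hV0' hV.aestronglyMeasurable]
      exact ENNReal.toReal_le_of_le_ofReal hc h
  · rw [momentSet, mem_ofPred_eq, ← ofReal_integral_eq_lintegral_ofReal hint hV0']
    exact ENNReal.ofReal_le_ofReal h

lemma isClosed_momentSet [OpensMeasurableSpace X] (hV : Continuous V) (c : ℝ) :
    IsClosed (momentSet V c) :=
  (lowerSemicontinuous_lintegral_coe (continuous_real_toNNReal.comp hV)).isClosed_preimage _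

lemma isCompact_momentSet [T2Space X] [BorelSpace X] (hV : Continuous V)
    (hVinf : Tendsto V (cocompact X) atTop) (c : ℝ) : IsCompact (momentSet V c) := by
  have hcpt := isCompact_closure_of_isTightMeasureSet (S := momentSet V c) ?_
  · rwa [(isClosed_momentSet hV c).closure_eq] at hcpt
  rw [isTightMeasureSet_iff_exists_isCompact_measure_compl_le]
  intro ε hε
  have hlim : Tendsto (fun R : ℝ => ENNReal.ofReal c / ENNReal.ofReal R) atTop (𝓝 0) :=
    ENNReal.Tendsto.const_div ENNReal.tendsto_ofReal_atTop (.inr ENNReal.ofReal_ne_top)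
      |>.trans_eq (by simp)
  obtain ⟨R, hR, hR0⟩ := ((hlim.eventually_le_const hε).and (eventually_gt_atTop 0)).exists
  obtain ⟨K, hK, hKR⟩ := mem_cocompact.1 (hVinf.eventually_ge_atTop R)
  refine ⟨K, hK, ?_⟩
  rintro μ ⟨P, hP, rfl⟩
  calc (P : Measure X) Kᶜ ≤ (P : Measure X) {x | ENNReal.ofReal R ≤ ENNReal.ofReal (V x)} :=
        measure_mono fun x hx => ENNReal.ofReal_le_ofReal (hKR hx)
    _ ≤ (∫⁻ x, ENNReal.ofReal (V x) ∂(P : Measure X)) / ENNReal.ofReal R :=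
        meas_ge_le_lintegral_div hV.measurable.ennreal_ofReal.aemeasurable (by simpa using hR0)
          ENNReal.ofReal_ne_top
    _ ≤ ENNReal.ofReal c / ENNReal.ofReal R := ENNReal.div_le_div_right hP _
    _ ≤ ε := hR

lemma integral_le_of_tendsto [OpensMeasurableSpace X] (hV : Continuous V) (hV0 : ∀ x, 0 ≤ V x)
    {ι : Type*} {l : Filter ι} [l.NeBot] {Q : ι → ProbabilityMeasure X} {P : ProbabilityMeasure X}
    (hQ : Tendsto Q l (𝓝 P)) (hint : ∀ i, Integrable V (Q i : Measure X))
    (h : ∀ ε > 0, ∀ᶠ i in l, ∫ x, V x ∂(Q i : Measure X) ≤ c + ε) :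
    Integrable V (P : Measure X) ∧ ∫ x, V x ∂(P : Measure X) ≤ c := by
  have hP : ∀ ε > 0, Integrable V (P : Measure X) ∧ ∫ x, V x ∂(P : Measure X) ≤ c + ε :=
    fun ε hε => by
    obtain ⟨i, hi⟩ := (h ε hε).exists
    have h0 : 0 ≤ c + ε := (integral_nonneg hV0).trans hi
    exact (mem_momentSet_iff hV hV0 h0).1 ((isClosed_momentSet hV _).mem_of_tendsto hQ
      ((h ε hε).mono fun i hi => (mem_momentSet_iff hV hV0 h0).2 ⟨hint i, hi⟩))
  exact ⟨(hP 1 one_pos).1, le_of_forall_pos_le_add fun ε hε => (hP ε hε).2⟩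

lemma continuous_integral_of_hasCompactSupport [OpensMeasurableSpace X] {f : X → ℝ}
    (hf : Continuous f) (hc : HasCompactSupport f) :
    Continuous fun P : ProbabilityMeasure X => ∫ x, f x ∂(P : Measure X) := by
  obtain ⟨C, hC⟩ := hf.bounded_above_of_compact_support hc
  exact ProbabilityMeasure.continuous_integral_boundedContinuousFunction
    (BoundedContinuousFunction.ofNormedAddCommGroup f hf C hC)

end Moments

section ContinuousDrift

/-- Gordan's alternative for a convex set. -/
lemma exists_forall_lt_of_convex {κ : Type*} [Fintype κ] {S : Set (κ → ℝ)} (hS : Convex ℝ S)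
    (h : ∀ θ : κ → ℝ, (∀ i, 0 ≤ θ i) → ∃ z ∈ S, ∑ i, θ i * z i ≤ 0) {ε : ℝ} (hε : 0 < ε) :
    ∃ z ∈ S, ∀ i, z i < ε := by
  classical
  by_contra! hcon
  obtain ⟨f, u, hfT, hfS⟩ := geometric_hahn_banach_open
    (convex_pi fun (_ : κ) (_ : _ ∈ univ) => convex_Iio ε)
    (isOpen_set_pi finite_univ fun _ _ => isOpen_Iio) hS (Set.disjoint_left.2 fun z hzT hzS => by
      obtain ⟨i, hi⟩ := hcon z hzS
      exact (hzT i (mem_univ i)).not_ge hi)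
  have hu : 0 < u := by simpa using hfT 0 fun _ _ => hε
  have hf : ∀ z, f z = ∑ i, f (Pi.single i 1) * z i := fun z => by
    conv_lhs => rw [← Finset.univ_sum_single z, map_sum]
    refine Finset.sum_congr rfl fun i _ => ?_
    rw [← mul_one (z i), ← smul_eq_mul, Pi.single_smul, map_smul, smul_eq_mul, smul_eq_mul,
      mul_one, mul_comm]
  obtain ⟨z, hz, hz0⟩ := h (fun i => f (Pi.single i 1)) fun i => by
    by_contra! hneg
    have hmem : Pi.single i (u / f (Pi.single i 1)) ∈ univ.pi fun _ : κ => Iio ε := fun j _ => by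
      rcases eq_or_ne j i with rfl | hj
      · simpa using (div_neg_of_pos_of_neg hu hneg).trans hε
      · simpa [hj] using hε
    have := hfT _ hmem
    rw [hf, Finset.sum_eq_single i (by simp +contextual) (by simp), Pi.single_eq_same,
      mul_div_cancel₀ _ hneg.ne] at this
    exact this.false
  exact (hu.trans_le (hfS z hz)).not_ge (hf z ▸ hz0)

lemma convex_setOf_integral {Ω κ : Type*} [MeasurableSpace Ω] (f : κ → Ω → ℝ) :
    Convex ℝ {z : κ → ℝ | ∃ P : Measure Ω, IsProbabilityMeasure P ∧
      ∀ k, Integrable (f k) P ∧ z k = ∫ x, f k x ∂P} := by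
  rintro z ⟨P, hP, hz⟩ z' ⟨P', hP', hz'⟩ a b ha hb hab
  have hint := fun k => (hz k).1.smul_measure (ENNReal.ofReal_ne_top (r := a))
  have hint' := fun k => (hz' k).1.smul_measure (ENNReal.ofReal_ne_top (r := b))
  refine ⟨ENNReal.ofReal a • P + ENNReal.ofReal b • P',
    ⟨by simp [← ENNReal.ofReal_add ha hb, hab]⟩,
    fun k => ⟨(hint k).add_measure (hint' k), ?_⟩⟩
  rw [integral_add_measure (hint k) (hint' k), integral_smul_measure, integral_smul_measure,
    ENNReal.toReal_ofReal ha, ENNReal.toReal_ofReal hb, ← (hz k).2, ← (hz' k).2]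
  rfl

variable {A : Ed d → Matrix (Fin d) (Fin d) ℝ} {B : Ed d → Ed d} {V : Ed d → ℝ} {C₁ C₂ : ℝ}

lemma exists_memPV_integral_Lop_lt (hApos : ∀ x, (A x).PosSemidef) (hV : ContDiff ℝ 2 V)
    (hVinf : Tendsto V (cocompact (Ed d)) atTop) (hC₂ : 0 < C₂)
    (hLyap : ∀ x, Lop A B V x ≤ C₁ - C₂ * V x) {ι : Type*} [Finite ι] {φ : ι → Ed d → ℝ}
    (hφ : ∀ i, IsTestFun (φ i)) {ε : ℝ} (hε : 0 < ε) :
    ∃ P : Measure (Ed d), memPV V P ∧ (∀ i, ∫ x, Lop A B (φ i) x ∂P < ε) ∧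
      C₂ * ∫ x, V x ∂P - C₁ < ε := by
  have := Fintype.ofFinite ι
  let f : Option ι → Ed d → ℝ := fun k => k.elim (fun x => C₂ * V x - C₁) fun i => Lop A B (φ i)
  obtain ⟨z, ⟨P, hP, hz⟩, hlt⟩ := exists_forall_lt_of_convex (convex_setOf_integral f)
    (fun θ hθ => by
      obtain ⟨ψ, hψ, hsum⟩ :=
        exists_isTestFun_Lop_eq_sum A B Finset.univ (fun i => θ (some i)) hφ
      obtain ⟨x, hx⟩ := exists_Lop_le_mul_Lop (B := B) hApos hV hVinf hψ (hθ none)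
      refine ⟨fun k => f k x, ⟨Measure.dirac x, inferInstance, fun k =>
        ⟨integrable_dirac (by simp), by rw [integral_dirac]⟩⟩, ?_⟩
      have := mul_le_mul_of_nonneg_left (hLyap x) (hθ none)
      simp only [Fintype.sum_option, f, Option.elim, ← hsum]
      linarith) hε
  have hVint : Integrable V P := by
    have := ((hz none).1.add (integrable_const C₁)).const_mul C₂⁻¹
    refine this.congr (Eventually.of_forall fun x => ?_)
    simp only [f, Option.elim, Pi.add_apply, sub_add_cancel, inv_mul_cancel_left₀ hC₂.ne']
  refine ⟨P, ⟨hP, hVint⟩, fun i => (hz (some i)).2 ▸ hlt (some i), ?_⟩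
  have hnone := (hz none).2 ▸ hlt none
  simpa [f, integral_sub (hVint.const_mul C₂) (integrable_const C₁), integral_const_mul]
    using hnone

lemma exists_isStationarySol_of_continuous (hA : ∀ i j, Continuous fun x => A x i j)
    (hApos : ∀ x, (A x).PosSemidef) (hV : ContDiff ℝ 2 V) (hV0 : ∀ x, 0 ≤ V x)
    (hVinf : Tendsto V (cocompact (Ed d)) atTop) (hB : Continuous B) (hC₂ : 0 < C₂)
    (hLyap : ∀ x, Lop A B V x ≤ C₁ - C₂ * V x) :
    ∃ μ : Measure (Ed d), memPV V μ ∧ IsStationarySol A B μ ∧ ∫ x, V x ∂μ ≤ C₁ / C₂ := by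
  classical
  let l : Filter (Finset {φ : Ed d → ℝ // IsTestFun φ} × ℕ) := atTop
  choose P hP hPφ hPV using fun i : Finset {φ : Ed d → ℝ // IsTestFun φ} × ℕ =>
    exists_memPV_integral_Lop_lt hApos hV hVinf hC₂ hLyap (φ := fun φ : i.1 => φ.1.1)
      (fun φ => φ.1.2) (Nat.one_div_pos_of_nat (α := ℝ) (n := i.2))
  let Q : Finset {φ : Ed d → ℝ // IsTestFun φ} × ℕ → ProbabilityMeasure (Ed d) :=
    fun i => ⟨P i, (hP i).1⟩
  have hsnd : Tendsto (fun i => 1 / ((i.2 : ℝ) + 1)) l (𝓝 0) :=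
    tendsto_one_div_add_atTop_nhds_zero_nat.comp (tendsto_snd.mono_left prod_atTop_atTop_eq.ge)
  have hmoment : ∀ ε > 0, ∀ᶠ i in l, ∫ x, V x ∂(P i) ≤ C₁ / C₂ + ε := fun ε hε => by
    filter_upwards [hsnd.eventually_lt_const (mul_pos hε hC₂)] with i hi
    rw [← sub_le_iff_le_add, le_div_iff₀ hC₂]
    linarith [hPV i]
  have hbound : 0 ≤ C₁ / C₂ + 1 :=
    let ⟨_, hi⟩ := (hmoment 1 one_pos).exists
    (integral_nonneg hV0).trans hi
  have hmem : ∀ᶠ i in l, Q i ∈ momentSet V (C₁ / C₂ + 1) :=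
    (hmoment 1 one_pos).mono fun i hi =>
      (mem_momentSet_iff hV.continuous hV0 hbound).2 ⟨(hP i).2, hi⟩
  obtain ⟨μ, -, hμ⟩ := (isCompact_momentSet hV.continuous hVinf _).ultrafilter_le_nhds
    ((Ultrafilter.of l).map Q) (le_principal_iff.2 (Ultrafilter.of_le l hmem))
  have hlim : Tendsto Q (Ultrafilter.of l) (𝓝 μ) := hμ
  have hμV := integral_le_of_tendsto hV.continuous hV0 hlim (fun i => (hP i).2)
    fun ε hε => Ultrafilter.of_le l (hmoment ε hε)
  have hnonpos : ∀ φ, IsTestFun φ → ∫ x, Lop A B φ x ∂(μ : Measure (Ed d)) ≤ 0 := fun φ hφ => by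
    have hcont := continuous_integral_of_hasCompactSupport
      (continuous_Lop hA hB hφ.contDiff_two) (hasCompactSupport_Lop A B hφ.2)
    refine le_of_tendsto_of_tendsto ((hcont.tendsto μ).comp hlim)
      (hsnd.mono_left (Ultrafilter.of_le l)) (Ultrafilter.of_le l ?_)
    filter_upwards [eventually_ge_atTop (({⟨φ, hφ⟩}, 0) : Finset _ × ℕ)] with i hi
    exact (hPφ i ⟨⟨φ, hφ⟩, Finset.singleton_subset_iff.1 hi.1⟩).le
  refine ⟨μ, ⟨μ.2, hμV.1⟩, fun φ hφ => (hnonpos φ hφ).antisymm ?_, hμV.2⟩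
  have := hnonpos _ (hφ.const_smul (-1))
  simp only [Lop_const_smul A B hφ.contDiff_two, integral_const_mul] at this
  linarith

end ContinuousDrift

section InverseMatrix

variable {n : Type*} [Fintype n] {M : Matrix n n ℝ} {K : ℝ}

/-- A symmetric matrix with `K⁻¹ • 1 ≤ M ≤ K • 1` as quadratic forms, where `0 < K`. -/
structure IsElliptic (K : ℝ) (M : Matrix n n ℝ) : Prop where
  pos : 0 < K
  isSymm : M.IsSymm
  le_sum : ∀ v : EuclideanSpace ℝ n, K⁻¹ * ‖v‖ ^ 2 ≤ ∑ i, ∑ j, M i j * v i * v j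
  sum_le : ∀ v : EuclideanSpace ℝ n, ∑ i, ∑ j, M i j * v i * v j ≤ K * ‖v‖ ^ 2

lemma sum_sum_mul_eq_inner [DecidableEq n] (M : Matrix n n ℝ) (v w : EuclideanSpace ℝ n) :
    ∑ i, ∑ j, M i j * v i * w j = ⟪v, Matrix.toEuclideanCLM (𝕜 := ℝ) M w⟫ := by
  rw [Matrix.inner_toEuclideanCLM]
  simp only [dotProduct, Matrix.mulVec, Finset.mul_sum]
  exact Finset.sum_congr rfl fun i _ => Finset.sum_congr rfl fun j _ => by ring

lemma IsElliptic.posSemidef (hM : IsElliptic K M) : M.PosSemidef := by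
  classical
  refine .of_dotProduct_mulVec_nonneg hM.isSymm fun v => ?_
  have hv := hM.le_sum (WithLp.toLp 2 v)
  rw [sum_sum_mul_eq_inner, Matrix.inner_toEuclideanCLM] at hv
  exact (mul_nonneg (inv_nonneg.2 hM.pos.le) (sq_nonneg _)).trans hv

variable [DecidableEq n]

/-- The inverse matrix `M⁻¹`, acting on Euclidean space. -/
def invOp (M : Matrix n n ℝ) : EuclideanSpace ℝ n →L[ℝ] EuclideanSpace ℝ n :=
  Matrix.toEuclideanCLM (𝕜 := ℝ) M⁻¹

lemma inner_toEuclideanCLM_left (hM : M.IsSymm) (v w : EuclideanSpace ℝ n) :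
    ⟪Matrix.toEuclideanCLM (𝕜 := ℝ) M v, w⟫ = ⟪v, Matrix.toEuclideanCLM (𝕜 := ℝ) M w⟫ :=
  Matrix.isSymmetric_toEuclideanLin_iff.2 hM v w

namespace IsElliptic

lemma det_ne_zero (hM : IsElliptic K M) : M.det ≠ 0 := fun hdet => by
  obtain ⟨v, hv, hMv⟩ := Matrix.exists_mulVec_eq_zero_iff.2 hdet
  have hle := hM.le_sum (WithLp.toLp 2 v)
  rw [sum_sum_mul_eq_inner, Matrix.toEuclideanCLM_toLp, hMv, WithLp.toLp_zero,
    inner_zero_right] at hle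
  have hnorm : 0 < ‖WithLp.toLp 2 v‖ := norm_pos_iff.2 (by simpa using hv)
  have := hM.pos
  exact hle.not_gt (by positivity)

lemma toEuclideanCLM_invOp (hM : IsElliptic K M) (z : EuclideanSpace ℝ n) :
    Matrix.toEuclideanCLM (𝕜 := ℝ) M (invOp M z) = z := by
  rw [invOp, ← mul_apply_eq_comp, ← map_mul,
    Matrix.mul_nonsing_inv _ (isUnit_iff_ne_zero.2 hM.det_ne_zero), map_one,
    one_apply_eq_self]

lemma inner_invOp_left (hM : IsElliptic K M) (v w : EuclideanSpace ℝ n) :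
    ⟪invOp M v, w⟫ = ⟪v, invOp M w⟫ :=
  inner_toEuclideanCLM_left hM.isSymm.inv v w

lemma norm_invOp_le (hM : IsElliptic K M) (z : EuclideanSpace ℝ n) :
    ‖invOp M z‖ ≤ K * ‖z‖ := by
  have hle := hM.le_sum (invOp M z)
  rw [sum_sum_mul_eq_inner, hM.toEuclideanCLM_invOp, inv_mul_le_iff₀ hM.pos] at hle
  rcases (norm_nonneg (invOp M z)).eq_or_lt with h0 | hpos
  · rw [← h0]
    exact mul_nonneg hM.pos.le (norm_nonneg z)
  · nlinarith [real_inner_le_norm (invOp M z) z, hM.pos]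

-- Nonnegativity of `M` at the vector `invOp M z - K⁻¹ • z`.
lemma le_inner_invOp (hM : IsElliptic K M) (z : EuclideanSpace ℝ n) :
    K⁻¹ * ‖z‖ ^ 2 ≤ ⟪invOp M z, z⟫ := by
  have hK := hM.pos
  have hnonneg : 0 ≤ ⟪invOp M z - K⁻¹ • z,
      Matrix.toEuclideanCLM (𝕜 := ℝ) M (invOp M z - K⁻¹ • z)⟫ := by
    rw [← sum_sum_mul_eq_inner]
    exact le_trans (by positivity) (hM.le_sum _)
  have hup : K⁻¹ * ⟪z, Matrix.toEuclideanCLM (𝕜 := ℝ) M z⟫ ≤ ‖z‖ ^ 2 := by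
    rw [inv_mul_le_iff₀ hK, ← sum_sum_mul_eq_inner]
    exact hM.sum_le z
  rw [map_sub, map_smul, hM.toEuclideanCLM_invOp, inner_sub_left, inner_sub_right,
    inner_sub_right, real_inner_smul_left, real_inner_smul_left, real_inner_smul_right,
    real_inner_smul_right, ← inner_toEuclideanCLM_left hM.isSymm, hM.toEuclideanCLM_invOp,
    real_inner_self_eq_norm_sq] at hnonneg
  have := mul_le_mul_of_nonneg_left hup (inv_nonneg.2 hK.le)
  linarith

lemma inner_invOp_le (hM : IsElliptic K M) (z : EuclideanSpace ℝ n) :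
    ⟪invOp M z, z⟫ ≤ K * ‖z‖ ^ 2 :=
  (real_inner_le_norm _ _).trans <| by
    nlinarith [hM.norm_invOp_le z, norm_nonneg z]

lemma inner_invOp_nonneg (hM : IsElliptic K M) (z : EuclideanSpace ℝ n) :
    0 ≤ ⟪invOp M z, z⟫ :=
  (mul_nonneg (inv_nonneg.2 hM.pos.le) (sq_nonneg _)).trans (hM.le_inner_invOp z)

lemma sum_sum_mul_invOp_mul_invOp (hM : IsElliptic K M) (z : EuclideanSpace ℝ n) :
    ∑ i, ∑ j, M i j * invOp M z i * invOp M z j = ⟪invOp M z, z⟫ := by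
  rw [sum_sum_mul_eq_inner, hM.toEuclideanCLM_invOp]

lemma sum_sum_mul_inner_invOp_single (hM : IsElliptic K M) :
    ∑ i, ∑ j, M i j * ⟪invOp M (EuclideanSpace.single i 1), EuclideanSpace.single j 1⟫ =
      Fintype.card n := by
  rw [← Matrix.trace_one (R := ℝ),
    ← Matrix.mul_nonsing_inv _ (isUnit_iff_ne_zero.2 hM.det_ne_zero)]
  simp [Matrix.trace, Matrix.mul_apply, invOp, EuclideanSpace.inner_single_right,
    Matrix.ofLp_toEuclideanCLM]

end IsElliptic

lemma continuous_invOp {X : Type*} [TopologicalSpace X] {A : X → Matrix n n ℝ}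
    (hcont : ∀ i j, Continuous fun x => A x i j) (hA : ∀ x, IsElliptic K (A x)) :
    Continuous fun x => invOp (A x) := by
  have hAc : Continuous A := continuous_pi fun i => continuous_pi fun j => hcont i j
  have hinv : Continuous fun x => (A x)⁻¹ := by
    simp_rw [Matrix.inv_def, Ring.inverse_eq_inv']
    exact (hAc.matrix_det.inv₀ fun x => (hA x).det_ne_zero).smul hAc.matrix_adjugate
  exact (LinearMap.continuous_of_finiteDimensional
    (Matrix.toEuclideanCLM (𝕜 := ℝ) (n := n)).toAlgEquiv.toLinearMap).comp hinv

end InverseMatrix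

section Profile

/-- A smooth cutoff on the line, equal to `1` on `[0, 1/2]` and to `0` on `[1, ∞)`. -/
def profile (s : ℝ) : ℝ :=
  (⟨1 / 2, 1, by norm_num, by norm_num⟩ : ContDiffBump (0 : ℝ)) s

/-- The primitive of `-profile` which vanishes on `[1, ∞)`. -/
def profilePrim (s : ℝ) : ℝ :=
  ∫ u in s..1, profile u

lemma contDiff_profile {k : ℕ∞} : ContDiff ℝ k profile :=
  ContDiffBump.contDiff _

lemma profile_nonneg (s : ℝ) : 0 ≤ profile s :=
  ContDiffBump.nonneg _

lemma profile_le_one (s : ℝ) : profile s ≤ 1 :=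
  ContDiffBump.le_one _

lemma profile_eq_zero {s : ℝ} (hs : 1 ≤ s) : profile s = 0 :=
  ContDiffBump.zero_of_le_dist _ (by simpa using hs.trans (le_abs_self s))

lemma profile_eq_one {s : ℝ} (hs : 0 ≤ s) (hs' : s ≤ 1 / 2) : profile s = 1 :=
  ContDiffBump.one_of_mem_closedBall _ (by simpa [abs_of_nonneg hs] using hs')

lemma hasDerivAt_profile (s : ℝ) : HasDerivAt profile (deriv profile s) s :=
  ((contDiff_profile (k := 1)).differentiable one_ne_zero s).hasDerivAt

lemma continuous_deriv_profile : Continuous (deriv profile) :=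
  (contDiff_profile (k := 1)).continuous_deriv le_rfl

lemma deriv_profile_eq_zero {s : ℝ} (hs : 1 ≤ s) : deriv profile s = 0 :=
  IsLocalMin.deriv_eq_zero <| Eventually.of_forall fun u => by
    rw [profile_eq_zero hs]
    exact profile_nonneg u

lemma exists_abs_deriv_profile_le : ∃ D, ∀ s, |deriv profile s| ≤ D :=
  continuous_deriv_profile.bounded_above_of_compact_support <|
    HasCompactSupport.deriv (ContDiffBump.hasCompactSupport _)

lemma hasDerivAt_profilePrim (s : ℝ) : HasDerivAt profilePrim (-profile s) s :=
  have hcont := (contDiff_profile (k := 0)).continuous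
  intervalIntegral.integral_hasDerivAt_left (hcont.intervalIntegrable _ _)
    (hcont.stronglyMeasurableAtFilter _ _) hcont.continuousAt

lemma contDiff_profilePrim : ContDiff ℝ (⊤ : ℕ∞) profilePrim := by
  rw [contDiff_infty_iff_deriv, funext fun s => (hasDerivAt_profilePrim s).deriv]
  exact ⟨fun s => (hasDerivAt_profilePrim s).differentiableAt, contDiff_profile.neg⟩

lemma profilePrim_eq_zero {s : ℝ} (hs : 1 ≤ s) : profilePrim s = 0 := by
  rw [profilePrim, intervalIntegral.integral_symm, neg_eq_zero]
  refine (intervalIntegral.integral_congr fun u hu => ?_).trans intervalIntegral.integral_zero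
  rw [uIcc_of_le hs] at hu
  exact profile_eq_zero hu.1

end Profile

section QuadraticForm

variable {E : Type*} [NormedAddCommGroup E] [InnerProductSpace ℝ E] {T : E →L[ℝ] E} {g : ℝ → ℝ}
  {c g' : ℝ}

lemma hasFDerivAt_comp_quadraticForm (hT : ∀ v w, ⟪T v, w⟫ = ⟪v, T w⟫) {y x : E}
    (hg : HasDerivAt g g' (c * ⟪T (x - y), x - y⟫)) :
    HasFDerivAt (fun x => g (c * ⟪T (x - y), x - y⟫)) ((2 * c * g') • innerSL ℝ (T (x - y))) x := by
  have hquad : HasFDerivAt (fun x => ⟪T (x - y), x - y⟫)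
      ((2 • innerSL ℝ (T (x - y))).comp (.id ℝ E)) x :=
    (LinearMap.IsSymmetric.hasStrictFDerivAt_reApplyInnerSelf (T := T) hT
      (x - y)).hasFDerivAt.comp x (f := fun x => x - y) (hasFDerivAt_sub_const y)
  refine (hg.comp_hasFDerivAt x (hquad.const_mul c)).congr_fderiv ?_
  ext v
  simp
  ring

lemma fderiv_comp_quadraticForm (hT : ∀ v w, ⟪T v, w⟫ = ⟪v, T w⟫) {g' : ℝ → ℝ}
    (hg : ∀ s, HasDerivAt g (g' s) s) (c : ℝ) (y : E) :
    fderiv ℝ (fun x => g (c * ⟪T (x - y), x - y⟫)) =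
      fun x => (2 * c * g' (c * ⟪T (x - y), x - y⟫)) • innerSL ℝ (T (x - y)) :=
  funext fun _ => (hasFDerivAt_comp_quadraticForm hT (hg _)).fderiv

lemma fderiv_fderiv_comp_quadraticForm (hT : ∀ v w, ⟪T v, w⟫ = ⟪v, T w⟫) {g' g'' : ℝ → ℝ}
    (hg : ∀ s, HasDerivAt g (g' s) s) (hg' : ∀ s, HasDerivAt g' (g'' s) s) (c : ℝ)
    (y x v w : E) :
    fderiv ℝ (fderiv ℝ fun x => g (c * ⟪T (x - y), x - y⟫)) x v w =
      4 * c ^ 2 * g'' (c * ⟪T (x - y), x - y⟫) * ⟪T (x - y), v⟫ * ⟪T (x - y), w⟫ +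
        2 * c * g' (c * ⟪T (x - y), x - y⟫) * ⟪T v, w⟫ := by
  have hlin : HasFDerivAt (fun x => innerSL ℝ (T (x - y))) ((innerSL ℝ).comp T) x :=
    ((innerSL ℝ).comp T).hasFDerivAt.comp x ((hasFDerivAt_id x).sub_const y)
  have hsnd := ((hasFDerivAt_comp_quadraticForm (y := y) (x := x) (c := c) hT
    (hg' _)).const_mul (2 * c)).smul hlin
  rw [fderiv_comp_quadraticForm hT hg]
  refine (congrArg (fun f : E →L[ℝ] E →L[ℝ] ℝ => f v w) hsnd.fderiv).trans ?_
  simp [-map_sub]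
  ring

end QuadraticForm

section Parametrix

variable {A : Ed d → Matrix (Fin d) (Fin d) ℝ} {K t : ℝ} {x y : Ed d}

/-- The parametrix kernel at inverse scale `t`, with the coefficients frozen at `y`. -/
def parametrixKer (A : Ed d → Matrix (Fin d) (Fin d) ℝ) (t : ℝ) (y x : Ed d) : ℝ :=
  t ^ d * profile (t ^ 2 * ⟪invOp (A y) (x - y), x - y⟫)

/-- The derivative of `parametrixKer` in the inverse scale `t`. -/
def parametrixKerDeriv (A : Ed d → Matrix (Fin d) (Fin d) ℝ) (t : ℝ) (y x : Ed d) : ℝ :=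
  d * t ^ (d - 1) * profile (t ^ 2 * ⟪invOp (A y) (x - y), x - y⟫) +
    t ^ d * (deriv profile (t ^ 2 * ⟪invOp (A y) (x - y), x - y⟫) *
      (2 * t * ⟪invOp (A y) (x - y), x - y⟫))

/-- A compactly supported potential of `parametrixKerDeriv` for the operator frozen at `y`. -/
def parametrixPot (A : Ed d → Matrix (Fin d) (Fin d) ℝ) (t : ℝ) (y x : Ed d) : ℝ :=
  t ^ d * profilePrim (t ^ 2 * ⟪invOp (A y) (x - y), x - y⟫)

lemma IsElliptic.one_le_sq_mul_inner_invOp {M : Matrix (Fin d) (Fin d) ℝ} (hM : IsElliptic K M)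
    (ht : 0 < t) (hx : x ∉ closedBall y (√K / t)) :
    1 ≤ t ^ 2 * ⟪invOp M (x - y), x - y⟫ := by
  have hK := hM.pos
  rw [mem_closedBall, dist_eq_norm, not_le, div_lt_iff₀ ht] at hx
  have hlt := lt_sq_of_sqrt_lt hx
  calc (1 : ℝ) = K⁻¹ * K := (inv_mul_cancel₀ hK.ne').symm
    _ ≤ K⁻¹ * (‖x - y‖ * t) ^ 2 := by gcongr
    _ = t ^ 2 * (K⁻¹ * ‖x - y‖ ^ 2) := by ring
    _ ≤ t ^ 2 * ⟪invOp M (x - y), x - y⟫ := by gcongr; exact hM.le_inner_invOp _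

lemma IsElliptic.mul_norm_invOp_le {M : Matrix (Fin d) (Fin d) ℝ} (hM : IsElliptic K M)
    (ht : 0 < t) (hx : x ∈ closedBall y (√K / t)) : t * ‖invOp M (x - y)‖ ≤ K * √K := by
  rw [mem_closedBall, dist_eq_norm, le_div_iff₀ ht] at hx
  have hK := hM.pos
  calc t * ‖invOp M (x - y)‖ ≤ t * (K * ‖x - y‖) := by gcongr; exact hM.norm_invOp_le _
    _ = K * (‖x - y‖ * t) := by ring
    _ ≤ K * √K := by gcongr

lemma parametrixKer_nonneg (ht : 0 ≤ t) : 0 ≤ parametrixKer A t y x :=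
  mul_nonneg (pow_nonneg ht d) (profile_nonneg _)

lemma parametrixKer_le (ht : 0 ≤ t) : parametrixKer A t y x ≤ t ^ d :=
  mul_le_of_le_one_right (pow_nonneg ht d) (profile_le_one _)

lemma parametrixKer_eq_zero (hA : IsElliptic K (A y)) (ht : 0 < t)
    (hx : x ∉ closedBall y (√K / t)) : parametrixKer A t y x = 0 := by
  rw [parametrixKer, profile_eq_zero (hA.one_le_sq_mul_inner_invOp ht hx), mul_zero]

lemma parametrixKerDeriv_eq_zero (hA : IsElliptic K (A y)) (ht : 0 < t)
    (hx : x ∉ closedBall y (√K / t)) : parametrixKerDeriv A t y x = 0 := by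
  have hle := hA.one_le_sq_mul_inner_invOp ht hx
  rw [parametrixKerDeriv, profile_eq_zero hle, deriv_profile_eq_zero hle]
  ring

lemma continuous_parametrixKer (hA : ∀ x, IsElliptic K (A x))
    (hAc : ∀ i j, Continuous fun x => A x i j) (t : ℝ) :
    Continuous fun w : Ed d × Ed d => parametrixKer A t w.1 w.2 := by
  have hinv : Continuous fun w : Ed d × Ed d => invOp (A w.1) (w.2 - w.1) :=
    ((continuous_invOp hAc hA).comp continuous_fst).clm_apply (by fun_prop)
  have hprofile := (contDiff_profile (k := 0)).continuous
  unfold parametrixKer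
  fun_prop

lemma continuous_parametrixKer_right (t : ℝ) (y : Ed d) : Continuous (parametrixKer A t y) := by
  have hprofile := (contDiff_profile (k := 0)).continuous
  unfold parametrixKer
  fun_prop

lemma continuous_parametrixKerDeriv (y : Ed d) :
    Continuous fun w : ℝ × Ed d => parametrixKerDeriv A w.1 y w.2 := by
  have hprofile := (contDiff_profile (k := 0)).continuous
  have hderiv := continuous_deriv_profile
  unfold parametrixKerDeriv
  fun_prop

lemma hasDerivAt_parametrixKer (t : ℝ) (y x : Ed d) :
    HasDerivAt (fun t => parametrixKer A t y x) (parametrixKerDeriv A t y x) t := by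
  have hsq : HasDerivAt (fun t : ℝ => t ^ 2 * ⟪invOp (A y) (x - y), x - y⟫)
      (2 * t * ⟪invOp (A y) (x - y), x - y⟫) t := by
    simpa using (hasDerivAt_pow 2 t).mul_const ⟪invOp (A y) (x - y), x - y⟫
  exact (hasDerivAt_pow d t).mul ((hasDerivAt_profile _).comp t hsq)

lemma integrable_parametrixKer (hA : IsElliptic K (A y)) (ht : 0 < t) (μ : Measure (Ed d))
    [IsFiniteMeasureOnCompacts μ] : Integrable (parametrixKer A t y) μ :=
  (continuous_parametrixKer_right t y).integrable_of_hasCompactSupport <|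
    HasCompactSupport.intro (isCompact_closedBall y (√K / t)) fun _ => parametrixKer_eq_zero hA ht

lemma tsupport_parametrixPot_subset (hA : IsElliptic K (A y)) (ht : 0 < t) :
    tsupport (parametrixPot A t y) ⊆ closedBall y (√K / t) := by
  refine closure_minimal (fun x hx => ?_) isClosed_closedBall
  by_contra hxy
  exact hx (by rw [parametrixPot, profilePrim_eq_zero (hA.one_le_sq_mul_inner_invOp ht hxy),
    mul_zero])

lemma isTestFun_parametrixPot (hA : IsElliptic K (A y)) (ht : 0 < t) :
    IsTestFun (parametrixPot A t y) := by
  refine ⟨?_, HasCompactSupport.of_support_subset_isCompact (isCompact_closedBall y (√K / t))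
    ((subset_tsupport _).trans (tsupport_parametrixPot_subset hA ht))⟩
  exact contDiff_const.mul <| contDiff_profilePrim.comp <| contDiff_const.mul <|
    ContDiff.inner ℝ (by fun_prop) (by fun_prop)

lemma norm_gradient_parametrixPot (hA : IsElliptic K (A y)) (ht : 0 ≤ t) :
    ‖gradient (parametrixPot A t y) x‖ = 2 * t ^ (d + 2) *
      profile (t ^ 2 * ⟪invOp (A y) (x - y), x - y⟫) * ‖invOp (A y) (x - y)‖ := by
  have hfderiv := congrFun (fderiv_comp_quadraticForm hA.inner_invOp_left
    (fun s => (hasDerivAt_profilePrim s).const_mul (t ^ d)) (t ^ 2) y) x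
  have hprofile := profile_nonneg (t ^ 2 * ⟪invOp (A y) (x - y), x - y⟫)
  rw [gradient, LinearIsometryEquiv.norm_map]
  refine (congrArg norm hfderiv).trans ?_
  rw [norm_smul, innerSL_apply_norm, norm_mul, norm_mul, norm_mul, norm_neg, Real.norm_eq_abs,
    Real.norm_eq_abs, Real.norm_eq_abs, Real.norm_eq_abs, abs_of_nonneg hprofile, abs_two,
    abs_of_nonneg (by positivity), abs_of_nonneg (by positivity)]
  ring

lemma hess2_parametrixPot (hA : IsElliptic K (A y)) (i j : Fin d) :
    hess2 (parametrixPot A t y) x i j =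
      -(2 * t ^ (d + 2)) * (2 * deriv profile (t ^ 2 * ⟪invOp (A y) (x - y), x - y⟫) *
        (t * invOp (A y) (x - y) i) * (t * invOp (A y) (x - y) j) +
        profile (t ^ 2 * ⟪invOp (A y) (x - y), x - y⟫) *
          ⟪invOp (A y) (EuclideanSpace.single i 1), EuclideanSpace.single j 1⟫) := by
  rw [hess2_eq_fderiv_fderiv]
  refine (fderiv_fderiv_comp_quadraticForm hA.inner_invOp_left
    (fun s => (hasDerivAt_profilePrim s).const_mul (t ^ d))
    (fun s => (hasDerivAt_profile s).neg.const_mul (t ^ d)) (t ^ 2) y x _ _).trans ?_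
  simp only [EuclideanSpace.inner_single_right, conj_trivial, one_mul]
  ring

lemma Lop_parametrixPot (hA : IsElliptic K (A y)) (t : ℝ) (x : Ed d) :
    Lop (fun _ => A y) 0 (parametrixPot A t y) x = -2 * t ^ 3 * parametrixKerDeriv A t y x := by
  set q := ⟪invOp (A y) (x - y), x - y⟫ with hq
  have hsum : ∑ i, ∑ j, A y i j * hess2 (parametrixPot A t y) x i j =
      -(2 * t ^ (d + 2)) * (2 * deriv profile (t ^ 2 * q) * t ^ 2 *
        (∑ i, ∑ j, A y i j * invOp (A y) (x - y) i * invOp (A y) (x - y) j) +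
        profile (t ^ 2 * q) * ∑ i, ∑ j, A y i j *
          ⟪invOp (A y) (EuclideanSpace.single i 1), EuclideanSpace.single j 1⟫) := by
    simp only [Finset.mul_sum, ← Finset.sum_add_distrib, hess2_parametrixPot hA, ← hq]
    exact Finset.sum_congr rfl fun i _ => Finset.sum_congr rfl fun j _ => by ring
  have hpow : t ^ 3 * (d * t ^ (d - 1)) = t ^ (d + 2) * d := by
    rcases Nat.eq_zero_or_pos d with rfl | hd
    · simp
    · obtain ⟨n, rfl⟩ := Nat.exists_eq_succ_of_ne_zero hd.ne'
      simp only [Nat.succ_eq_add_one, Nat.add_sub_cancel]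
      ring
  rw [Lop, Pi.zero_apply, inner_zero_left, add_zero, hsum, hA.sum_sum_mul_invOp_mul_invOp,
    hA.sum_sum_mul_inner_invOp_single, parametrixKerDeriv, Fintype.card_fin, ← hq]
  linear_combination 2 * profile (t ^ 2 * q) * hpow

lemma norm_gradient_parametrixPot_le (hA : IsElliptic K (A y)) (ht : 0 < t) :
    ‖gradient (parametrixPot A t y) x‖ ≤ 2 * t ^ (d + 1) * (K * √K) := by
  have hK := hA.pos
  by_cases hx : x ∈ closedBall y (√K / t)
  · have hprofile := profile_le_one (t ^ 2 * ⟪invOp (A y) (x - y), x - y⟫)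
    calc ‖gradient (parametrixPot A t y) x‖ = 2 * t ^ (d + 2) *
          profile (t ^ 2 * ⟪invOp (A y) (x - y), x - y⟫) * ‖invOp (A y) (x - y)‖ :=
          norm_gradient_parametrixPot hA ht.le
      _ ≤ 2 * t ^ (d + 2) * 1 * ‖invOp (A y) (x - y)‖ := by gcongr
      _ = 2 * t ^ (d + 1) * (t * ‖invOp (A y) (x - y)‖) := by ring
      _ ≤ 2 * t ^ (d + 1) * (K * √K) :=
          mul_le_mul_of_nonneg_left (hA.mul_norm_invOp_le ht hx) (by positivity)
  · rw [gradient_eq_zero_of_notMem_tsupport fun h => hx (tsupport_parametrixPot_subset hA ht h),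
      norm_zero]
    positivity

lemma exists_abs_hess2_parametrixPot_le (hA : ∀ x, IsElliptic K (A x)) :
    ∃ C ≥ 0, ∀ t > 0, ∀ y x i j, |hess2 (parametrixPot A t y) x i j| ≤ C * t ^ (d + 2) := by
  obtain ⟨D, hD⟩ := exists_abs_deriv_profile_le
  have hK := (hA 0).pos
  have hD0 : 0 ≤ D := (abs_nonneg _).trans (hD 0)
  refine ⟨2 * (2 * D * (K * √K) * (K * √K) + 1 * K), by positivity, fun t ht y x i j => ?_⟩
  by_cases hx : x ∈ closedBall y (√K / t)
  swap
  · rw [hess2_eq_zero_of_notMem_tsupport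
      fun h => hx (tsupport_parametrixPot_subset (hA y) ht h), abs_zero]
    positivity
  have hcoord (m) : |t * invOp (A y) (x - y) m| ≤ K * √K := by
    rw [abs_mul, abs_of_pos ht]
    exact (mul_le_mul_of_nonneg_left (PiLp.norm_apply_le _ m) ht.le).trans
      ((hA y).mul_norm_invOp_le ht hx)
  have hinv : |⟪invOp (A y) (EuclideanSpace.single i 1), EuclideanSpace.single j 1⟫| ≤ K :=
    calc _ ≤ _ := abs_real_inner_le_norm _ _
      _ ≤ K := by simpa using (hA y).norm_invOp_le (EuclideanSpace.single i 1)
  rw [hess2_parametrixPot (hA y), abs_mul, abs_neg, abs_of_pos (by positivity)]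
  calc _ ≤ 2 * t ^ (d + 2) * (2 * D * (K * √K) * (K * √K) + 1 * K) := by
        gcongr
        refine (abs_add_le _ _).trans (add_le_add ?_ ?_)
        · rw [abs_mul, abs_mul, abs_mul, abs_two]
          gcongr
          exacts [hD _, hcoord i, hcoord j]
        · rw [abs_mul, abs_of_nonneg (profile_nonneg _)]
          gcongr
          exact profile_le_one _
    _ = _ := by ring

end Parametrix

section ScaleEstimate

variable {A : Ed d → Matrix (Fin d) (Fin d) ℝ} {N : ℝ → ℝ} {K K₂ : ℝ} {μ : Measure (Ed d)}

/-- The weak form of the statement that `μ` solves a stationary equation with diffusion matrix `A`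
and some drift bounded by `N R` on the ball of radius `R` around the origin. -/
def DriftBounded (A : Ed d → Matrix (Fin d) (Fin d) ℝ) (N : ℝ → ℝ) (μ : Measure (Ed d)) : Prop :=
  ∀ R > 0, ∀ φ : Ed d → ℝ, IsTestFun φ → tsupport φ ⊆ closedBall 0 R →
    |∫ x, Lop A 0 φ x ∂μ| ≤ N R * ∫ x, ‖gradient φ x‖ ∂μ

lemma abs_integral_le_mul_measureReal {Ω : Type*} [MeasurableSpace Ω] {μ : Measure Ω}
    {f : Ω → ℝ} {S : Set Ω} {C : ℝ} (hS : μ S < ∞) (h0 : ∀ x ∉ S, f x = 0)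
    (hC : ∀ x ∈ S, |f x| ≤ C) : |∫ x, f x ∂μ| ≤ C * μ.real S := by
  rw [← setIntegral_eq_integral_of_forall_compl_eq_zero h0]
  exact norm_setIntegral_le_of_norm_le_const (f := f) hS hC

lemma continuous_of_abs_sub_le {f : Ed d → ℝ} {C : ℝ} (hf : ∀ x y, |f x - f y| ≤ C * ‖x - y‖) :
    Continuous f :=
  (LipschitzWith.of_dist_le' (K := C) fun x y => by
    rw [Real.dist_eq, dist_eq_norm]
    exact hf x y).continuous

lemma abs_Lop_zero_sub_le {A' : Ed d → Matrix (Fin d) (Fin d) ℝ} {φ : Ed d → ℝ} {x : Ed d}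
    {a h : ℝ} (hA : ∀ i j, |A x i j - A' x i j| ≤ a) (hφ : ∀ i j, |hess2 φ x i j| ≤ h) :
    |Lop A 0 φ x - Lop A' 0 φ x| ≤ d ^ 2 * (a * h) := by
  have hdiff : Lop A 0 φ x - Lop A' 0 φ x =
      ∑ i, ∑ j, (A x i j - A' x i j) * hess2 φ x i j := by
    simp only [Lop, add_sub_add_right_eq_sub, sub_mul, Finset.sum_sub_distrib]
  calc |Lop A 0 φ x - Lop A' 0 φ x| ≤ ∑ _i : Fin d, ∑ _j : Fin d, a * h := by
        rw [hdiff]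
        refine (Finset.abs_sum_le_sum_abs _ _).trans (Finset.sum_le_sum fun i _ =>
          (Finset.abs_sum_le_sum_abs _ _).trans (Finset.sum_le_sum fun j _ => ?_))
        rw [abs_mul]
        exact mul_le_mul (hA i j) (hφ i j) (abs_nonneg _) ((abs_nonneg _).trans (hA i j))
    _ = d ^ 2 * (a * h) := by
        simp only [Finset.sum_const, Finset.card_univ, Fintype.card_fin, nsmul_eq_mul]
        ring

lemma exists_abs_integral_Lop_parametrixPot_sub_le (hA : ∀ x, IsElliptic K (A x))
    (hLip : ∀ i j x y, |A x i j - A y i j| ≤ K₂ * ‖x - y‖) :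
    ∃ C ≥ 0, ∀ (μ : Measure (Ed d)) [IsFiniteMeasure μ], ∀ y, ∀ t > 0,
      |∫ x, Lop (fun _ => A y) 0 (parametrixPot A t y) x ∂μ -
        ∫ x, Lop A 0 (parametrixPot A t y) x ∂μ| ≤
      C * t ^ (d + 1) * μ.real (closedBall y (√K / t)) := by
  obtain ⟨H, hH0, hH⟩ := exists_abs_hess2_parametrixPot_le hA
  refine ⟨d ^ 2 * (|K₂| * √K * H), by positivity, fun μ _ y t ht => ?_⟩
  have htest := isTestFun_parametrixPot (hA y) ht
  have hzero {B : Ed d → Matrix (Fin d) (Fin d) ℝ} {x} (hx : x ∉ closedBall y (√K / t)) :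
      Lop B 0 (parametrixPot A t y) x = 0 :=
    Lop_eq_zero_of_notMem_tsupport _ _ fun h => hx (tsupport_parametrixPot_subset (hA y) ht h)
  rw [← integral_sub
    (htest.integrable_Lop (A := fun _ => A y) (fun _ _ => continuous_const) continuous_zero)
    (htest.integrable_Lop (fun i j => continuous_of_abs_sub_le (hLip i j)) continuous_zero)]
  refine abs_integral_le_mul_measureReal (measure_lt_top μ _)
    (fun x hx => by rw [hzero hx, hzero hx, sub_zero]) fun x hx => ?_
  have hcoeff (i j) : |A y i j - A x i j| ≤ |K₂| * (√K / t) := by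
    refine (hLip i j y x).trans (mul_le_mul (le_abs_self _) ?_ (norm_nonneg _) (abs_nonneg _))
    rwa [mem_closedBall', dist_eq_norm] at hx
  refine (abs_Lop_zero_sub_le hcoeff (hH t ht y x)).trans_eq ?_
  field_simp
  ring

lemma abs_integral_Lop_parametrixPot_le (hA : ∀ x, IsElliptic K (A x)) (hN : ∀ R, 0 ≤ N R)
    [IsFiniteMeasure μ] (hμ : DriftBounded A N μ) {R t : ℝ} (hR : 0 ≤ R) (ht : 1 ≤ t)
    {y : Ed d} (hy : y ∈ closedBall 0 R) :
    |∫ x, Lop A 0 (parametrixPot A t y) x ∂μ| ≤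
      N (R + √K) * (2 * t ^ (d + 1) * (K * √K) * μ.real (closedBall y (√K / t))) := by
  have ht0 : 0 < t := zero_lt_one.trans_le ht
  have hK := sqrt_pos.2 (hA y).pos
  have hball : closedBall y (√K / t) ⊆ closedBall 0 (R + √K) :=
    closedBall_subset_closedBall' <| by
      linarith [mem_closedBall.1 hy, div_le_self hK.le ht]
  have hsupp := tsupport_parametrixPot_subset (hA y) ht0
  refine (hμ (R + √K) (by positivity) _ (isTestFun_parametrixPot (hA y) ht0)
    (hsupp.trans hball)).trans (mul_le_mul_of_nonneg_left ?_ (hN _))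
  refine (le_abs_self _).trans
    (abs_integral_le_mul_measureReal (measure_lt_top μ _) (fun x hx => ?_) fun x _ => ?_)
  · rw [gradient_eq_zero_of_notMem_tsupport fun h => hx (hsupp h), norm_zero]
  · rw [abs_norm]
    exact norm_gradient_parametrixPot_le (hA y) ht0

lemma exists_abs_integral_parametrixKerDeriv_le (hA : ∀ x, IsElliptic K (A x))
    (hLip : ∀ i j x y, |A x i j - A y i j| ≤ K₂ * ‖x - y‖) (hN : ∀ R, 0 ≤ N R) {R : ℝ}
    (hR : 0 ≤ R) :
    ∃ C ≥ 0, ∀ (μ : Measure (Ed d)) [IsFiniteMeasure μ], DriftBounded A N μ →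
      ∀ y ∈ closedBall (0 : Ed d) R, ∀ t ≥ 1,
        t ^ 2 * |∫ x, parametrixKerDeriv A t y x ∂μ| ≤
          C * t ^ d * μ.real (closedBall y (√K / t)) := by
  obtain ⟨C, hC0, hC⟩ := exists_abs_integral_Lop_parametrixPot_sub_le hA hLip
  have hK := (hA 0).pos
  have hNR := hN (R + √K)
  refine ⟨(C + N (R + √K) * (2 * (K * √K))) / 2, by positivity, fun μ _ hμ y hy t ht => ?_⟩
  have ht0 : 0 < t := zero_lt_one.trans_le ht
  have hfrozen := hC μ y t ht0
  have hdrift := abs_integral_Lop_parametrixPot_le hA hN hμ hR ht hy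
  simp only [Lop_parametrixPot (hA y), integral_const_mul] at hfrozen
  set I := ∫ x, parametrixKerDeriv A t y x ∂μ
  set J := ∫ x, Lop A 0 (parametrixPot A t y) x ∂μ
  refine le_of_mul_le_mul_left ?_ (by positivity : 0 < 2 * t)
  calc 2 * t * (t ^ 2 * |I|) = |-2 * t ^ 3 * I| := by
        rw [abs_mul, abs_mul, abs_neg, abs_two, abs_of_pos (pow_pos ht0 3)]
        ring
    _ ≤ |-2 * t ^ 3 * I - J| + |J| := sub_le_iff_le_add.1 (abs_sub_abs_le_abs_sub _ _)
    _ ≤ C * t ^ (d + 1) * μ.real (closedBall y (√K / t)) +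
          N (R + √K) * (2 * t ^ (d + 1) * (K * √K) * μ.real (closedBall y (√K / t))) :=
        add_le_add hfrozen hdrift
    _ = _ := by ring

/-- The regularization of `μ` by the parametrix kernel at inverse scale `t`; it approximates a
multiple of the density of `μ`. -/
def parametrixReg (A : Ed d → Matrix (Fin d) (Fin d) ℝ) (μ : Measure (Ed d)) (t : ℝ)
    (y : Ed d) : ℝ :=
  ∫ x, parametrixKer A t y x ∂μ

lemma hasDerivAt_parametrixReg {y : Ed d} (hA : IsElliptic K (A y)) [IsFiniteMeasure μ] {t : ℝ}
    (ht : 0 < t) :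
    HasDerivAt (fun t => parametrixReg A μ t y) (∫ x, parametrixKerDeriv A t y x ∂μ) t := by
  obtain ⟨C, hC⟩ := ((isCompact_Icc (a := t / 2) (b := 2 * t)).prod
    (isCompact_closedBall y (√K / (t / 2)))).exists_bound_of_continuousOn
      (continuous_parametrixKerDeriv (A := A) y).continuousOn
  refine (hasDerivAt_integral_of_dominated_loc_of_deriv_le (bound := fun _ => max C 0)
    (s := Icc (t / 2) (2 * t)) (Icc_mem_nhds (by linarith) (by linarith))
    (Eventually.of_forall fun s => (continuous_parametrixKer_right s y).aestronglyMeasurable)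
    (integrable_parametrixKer hA ht μ)
    ((continuous_parametrixKerDeriv y).comp (.prodMk_right t)).aestronglyMeasurable
    (Eventually.of_forall fun x s hs => ?_) (integrable_const _)
    (Eventually.of_forall fun x s _ => hasDerivAt_parametrixKer s y x)).2
  by_cases hx : x ∈ closedBall y (√K / (t / 2))
  · exact (hC (s, x) ⟨hs, hx⟩).trans (le_max_left _ _)
  · have hs0 : 0 < s := by linarith [hs.1]
    have hsub := closedBall_subset_closedBall (x := y)
      (div_le_div_of_nonneg_left (sqrt_nonneg K) (half_pos ht) hs.1)
    rw [parametrixKerDeriv_eq_zero hA hs0 fun h => hx (hsub h), norm_zero]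
    exact le_max_right _ _

lemma exists_abs_parametrixReg_sub_le (hA : ∀ x, IsElliptic K (A x))
    (hLip : ∀ i j x y, |A x i j - A y i j| ≤ K₂ * ‖x - y‖) (hN : ∀ R, 0 ≤ N R) {R : ℝ}
    (hR : 0 ≤ R) :
    ∃ C ≥ 0, ∀ (μ : Measure (Ed d)) [IsFiniteMeasure μ], DriftBounded A N μ →
      ∀ y ∈ closedBall (0 : Ed d) R, ∀ t ≥ 1,
        |parametrixReg A μ (2 * t) y - parametrixReg A μ t y| ≤
          C * t⁻¹ * (t ^ d * μ.real (closedBall y (√K / t))) := by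
  obtain ⟨C, hC0, hC⟩ := exists_abs_integral_parametrixKerDeriv_le hA hLip hN hR
  refine ⟨C * 2 ^ d, by positivity, fun μ _ hμ y hy t ht => ?_⟩
  have ht0 : 0 < t := zero_lt_one.trans_le ht
  have hderiv : ∀ s ∈ Icc t (2 * t), ‖∫ x, parametrixKerDeriv A s y x ∂μ‖ ≤
      C * (2 * t) ^ d * μ.real (closedBall y (√K / t)) / t ^ 2 := fun s hs => by
    have hs0 : 0 < s := ht0.trans_le hs.1
    rw [Real.norm_eq_abs, le_div_iff₀' (by positivity)]
    calc t ^ 2 * |∫ x, parametrixKerDeriv A s y x ∂μ|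
        ≤ s ^ 2 * |∫ x, parametrixKerDeriv A s y x ∂μ| := by gcongr; exact hs.1
      _ ≤ C * s ^ d * μ.real (closedBall y (√K / s)) := hC μ hμ y hy s (ht.trans hs.1)
      _ ≤ C * (2 * t) ^ d * μ.real (closedBall y (√K / t)) := by
          gcongr
          exacts [hs.2, measure_ne_top _ _, hs.1]
  refine ((convex_Icc t (2 * t)).norm_image_sub_le_of_norm_hasDerivWithin_le
    (fun s hs => (hasDerivAt_parametrixReg (hA y) (ht0.trans_le hs.1)).hasDerivWithinAt) hderiv
    (left_mem_Icc.2 (by linarith)) (right_mem_Icc.2 (by linarith))).trans_eq ?_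
  rw [show 2 * t - t = t by ring, Real.norm_of_nonneg ht0.le]
  field_simp
  ring

end ScaleEstimate

section BallAverages

variable {E : Type*} [NormedAddCommGroup E] [MeasurableSpace E] [BorelSpace E]

lemma lintegral_measure_closedBall [SecondCountableTopology E] (ν : Measure E)
    [ν.IsAddHaarMeasure] [SFinite ν] (μ : Measure E) [SFinite μ] (r : ℝ) :
    ∫⁻ y, μ (closedBall y r) ∂ν = ν (closedBall 0 r) * μ univ := by
  have hmeas : MeasurableSet {w : E × E | dist w.2 w.1 ≤ r} :=
    (isClosed_le (by fun_prop) continuous_const).measurableSet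
  have hleft (y : E) : Prod.mk y ⁻¹' {w : E × E | dist w.2 w.1 ≤ r} = closedBall y r := rfl
  have hright (x : E) : (fun y => (y, x)) ⁻¹' {w : E × E | dist w.2 w.1 ≤ r} = closedBall x r :=
    Set.ext fun y => by simp [dist_comm]
  have hprod := (Measure.prod_apply (μ := ν) (ν := μ) hmeas).symm.trans
    (Measure.prod_apply_symm hmeas)
  simpa only [hleft, hright, Measure.addHaar_closedBall_center, lintegral_const] using hprod

variable [NormedSpace ℝ E] [FiniteDimensional ℝ E] (ν : Measure E) [ν.IsAddHaarMeasure]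
  (μ : Measure E) [IsProbabilityMeasure μ]

lemma integrable_measureReal_closedBall (r : ℝ) :
    Integrable (fun y => μ.real (closedBall y r)) ν := by
  have := FiniteDimensional.proper_real E
  have hmeas : Measurable fun y => μ (closedBall y r) :=
    measurable_measure_prodMk_left (s := {w : E × E | dist w.2 w.1 ≤ r})
      (isClosed_le (by fun_prop) continuous_const).measurableSet
  refine integrable_toReal_of_lintegral_ne_top hmeas.aemeasurable ?_
  rw [lintegral_measure_closedBall, measure_univ, mul_one]
  exact measure_closedBall_lt_top.ne

lemma integral_measureReal_closedBall {r t : ℝ} (hr : 0 ≤ r) (ht : 0 < t) :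
    ∫ y, t ^ Module.finrank ℝ E * μ.real (closedBall y (r / t)) ∂ν = ν.real (closedBall 0 r) := by
  have := FiniteDimensional.proper_real E
  have hmass : ∫ y, μ.real (closedBall y (r / t)) ∂ν = ν.real (closedBall 0 (r / t)) := by
    rw [integral_eq_lintegral_of_nonneg_ae (Eventually.of_forall fun _ => measureReal_nonneg)
      (integrable_measureReal_closedBall ν μ _).aestronglyMeasurable]
    simp only [ofReal_measureReal (measure_ne_top μ _)]
    rw [lintegral_measure_closedBall, measure_univ, mul_one, measureReal_def]
  rw [integral_const_mul, hmass, Measure.addHaar_real_closedBall _ _ (by positivity),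
    Measure.addHaar_real_closedBall _ _ hr, div_pow]
  field_simp

end BallAverages

section Approximation

variable {E : Type*} [NormedAddCommGroup E]

/-- A continuous function equal to one on the ball of radius `R` and vanishing outside the ball of
radius `R + 1`. -/
def cutoff (R : ℝ) (x : E) : ℝ :=
  max 0 (min 1 (R + 1 - ‖x‖))

lemma continuous_cutoff (R : ℝ) : Continuous (cutoff R : E → ℝ) := by
  unfold cutoff
  fun_prop

lemma cutoff_nonneg (R : ℝ) (x : E) : 0 ≤ cutoff R x :=
  le_max_left _ _

lemma cutoff_le_one (R : ℝ) (x : E) : cutoff R x ≤ 1 :=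
  max_le zero_le_one (min_le_left _ _)

lemma cutoff_eq_one {R : ℝ} {x : E} (hx : x ∈ closedBall 0 R) : cutoff R x = 1 := by
  rw [mem_closedBall_zero_iff] at hx
  rw [cutoff, min_eq_left (by linarith), max_eq_right zero_le_one]

lemma cutoff_eq_zero {R : ℝ} {x : E} (hx : x ∉ closedBall 0 (R + 1)) : cutoff R x = 0 := by
  rw [mem_closedBall_zero_iff, not_le] at hx
  exact max_eq_left ((min_le_right _ _).trans (by linarith))

variable [ProperSpace E] [MeasurableSpace E] {f : E → ℝ} {R M : ℝ}

lemma integrable_of_forall_notMem_closedBall {μ : Measure E} [IsFiniteMeasureOnCompacts μ]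
    (hf : AEStronglyMeasurable f μ) (hf0 : ∀ x ∉ closedBall 0 R, f x = 0) (hM : ∀ x, |f x| ≤ M) :
    Integrable f μ :=
  (integrableOn_iff_integrable_of_support_subset (s := closedBall 0 R)
    fun x hx => by_contra fun h => hx (hf0 x h)).1 <|
      Measure.integrableOn_of_bounded (isCompact_closedBall 0 R).measure_lt_top.ne hf
        (Eventually.of_forall hM)

variable [BorelSpace E]

lemma exists_continuous_integral_abs_sub_le (μ : Measure E) [IsFiniteMeasureOnCompacts μ]
    (hf : AEStronglyMeasurable f μ) (hf0 : ∀ x ∉ closedBall 0 R, f x = 0) (hM : ∀ x, |f x| ≤ M)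
    {ε : ℝ} (hε : 0 < ε) :
    ∃ g : E → ℝ, Continuous g ∧ (∀ x ∉ closedBall 0 (R + 1), g x = 0) ∧ (∀ x, |g x| ≤ M) ∧
      ∫ x, |f x - g x| ∂μ ≤ ε := by
  have hM0 : -M ≤ M := neg_le_self ((abs_nonneg _).trans (hM 0))
  have hfint := integrable_of_forall_notMem_closedBall hf hf0 hM
  obtain ⟨g, -, hfg, hg, hgint⟩ := hfint.exists_hasCompactSupport_integral_sub_le hε
  have hclamp (x) : f x = cutoff R x * projIcc (-M) M hM0 (f x) := by
    have hmem : f x ∈ Icc (-M) M := abs_le.1 (hM x)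
    rw [projIcc_of_mem hM0 hmem]
    by_cases hx : x ∈ closedBall 0 R
    · rw [cutoff_eq_one hx, one_mul]
    · simp only [hf0 x hx, mul_zero]
  refine ⟨fun x => cutoff R x * projIcc (-M) M hM0 (g x), (continuous_cutoff R).mul
    (continuous_subtype_val.comp (continuous_projIcc.comp hg)),
    fun x hx => mul_eq_zero_of_left (cutoff_eq_zero hx) _, fun x => ?_, le_trans ?_ hfg⟩
  · rw [abs_mul, abs_of_nonneg (cutoff_nonneg R x)]
    exact (mul_le_of_le_one_left (abs_nonneg _) (cutoff_le_one R x)).trans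
      (abs_le.2 (projIcc (-M) M hM0 (g x)).2)
  · refine integral_mono_of_nonneg (Eventually.of_forall fun _ => abs_nonneg _)
      (hfint.sub hgint).norm (Eventually.of_forall fun x => ?_)
    calc |f x - cutoff R x * projIcc (-M) M hM0 (g x)|
        = cutoff R x * |(projIcc (-M) M hM0 (f x) : ℝ) - projIcc (-M) M hM0 (g x)| := by
          rw [← abs_of_nonneg (cutoff_nonneg R x), ← abs_mul, abs_of_nonneg (cutoff_nonneg R x),
            mul_sub, ← hclamp]
      _ ≤ 1 * |f x - g x| := mul_le_mul (cutoff_le_one R x) (abs_projIcc_sub_projIcc hM0)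
          (abs_nonneg _) zero_le_one
      _ = ‖(f - g) x‖ := one_mul _

lemma abs_integral_sub_integral_le_of_forall_continuous {σ τ : Measure E}
    [IsFiniteMeasureOnCompacts σ] [IsFiniteMeasureOnCompacts τ] {C : ℝ}
    (hC : ∀ g : E → ℝ, Continuous g → (∀ x ∉ closedBall 0 (R + 1), g x = 0) → (∀ x, |g x| ≤ M) →
      |∫ x, g x ∂σ - ∫ x, g x ∂τ| ≤ C)
    (hf : Measurable f) (hf0 : ∀ x ∉ closedBall 0 R, f x = 0) (hM : ∀ x, |f x| ≤ M) :
    |∫ x, f x ∂σ - ∫ x, f x ∂τ| ≤ C := by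
  refine le_of_forall_pos_le_add fun ε hε => ?_
  have : IsFiniteMeasureOnCompacts (σ + τ) :=
    ⟨fun K hK => by simp [Measure.add_apply, hK.measure_lt_top]⟩
  obtain ⟨g, hg, hg0, hgM, hfg⟩ :=
    exists_continuous_integral_abs_sub_le (σ + τ) hf.aestronglyMeasurable hf0 hM hε
  have hint (μ : Measure E) [IsFiniteMeasureOnCompacts μ] : Integrable f μ ∧ Integrable g μ :=
    ⟨integrable_of_forall_notMem_closedBall hf.aestronglyMeasurable hf0 hM,
      integrable_of_forall_notMem_closedBall hg.aestronglyMeasurable hg0 hgM⟩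
  have hsub (μ : Measure E) [IsFiniteMeasureOnCompacts μ] :
      |∫ x, f x ∂μ - ∫ x, g x ∂μ| ≤ ∫ x, |f x - g x| ∂μ := by
    rw [← integral_sub (hint μ).1 (hint μ).2]
    exact abs_integral_le_integral_abs
  have hdiff (μ : Measure E) [IsFiniteMeasureOnCompacts μ] :
      Integrable (fun x => |f x - g x|) μ := ((hint μ).1.sub (hint μ).2).abs
  rw [integral_add_measure (hdiff σ) (hdiff τ)] at hfg
  have hσ := abs_le.1 (hsub σ)
  have hτ := abs_le.1 (hsub τ)
  have hg := abs_le.1 (hC g hg hg0 hgM)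
  exact abs_le.2 ⟨by linarith, by linarith⟩

end Approximation

section Density

variable {A : Ed d → Matrix (Fin d) (Fin d) ℝ} {N : ℝ → ℝ} {K K₂ : ℝ} {μ : Measure (Ed d)}
  {f : Ed d → ℝ} {M R t : ℝ} {y : Ed d}

/-- The integral of the parametrix kernel `parametrixKer A t y` over space, which does not depend
on `t > 0`. -/
def parametrixMass (A : Ed d → Matrix (Fin d) (Fin d) ℝ) (y : Ed d) : ℝ :=
  ∫ z, profile ⟪invOp (A y) z, z⟫

lemma IsElliptic.profile_inner_invOp_le_indicator {B : Matrix (Fin d) (Fin d) ℝ}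
    (hB : IsElliptic K B) (z : Ed d) :
    profile ⟪invOp B z, z⟫ ≤ (closedBall 0 (√K)).indicator 1 z := by
  by_cases hz : z ∈ closedBall 0 (√K)
  · rw [indicator_of_mem hz]
    exact profile_le_one _
  · have hle := hB.one_le_sq_mul_inner_invOp one_pos (y := 0) (by rwa [div_one])
    rw [indicator_of_notMem hz, profile_eq_zero (by simpa using hle)]

lemma IsElliptic.indicator_le_profile_inner_invOp {B : Matrix (Fin d) (Fin d) ℝ}
    (hB : IsElliptic K B) (z : Ed d) :
    (closedBall 0 (√(2 * K))⁻¹).indicator 1 z ≤ profile ⟪invOp B z, z⟫ := by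
  have hK := hB.pos
  by_cases hz : z ∈ closedBall 0 (√(2 * K))⁻¹
  swap
  · rw [indicator_of_notMem hz]
    exact profile_nonneg _
  rw [indicator_of_mem hz, profile_eq_one (hB.inner_invOp_nonneg z), Pi.one_apply]
  rw [mem_closedBall_zero_iff] at hz
  calc ⟪invOp B z, z⟫ ≤ K * ‖z‖ ^ 2 := hB.inner_invOp_le z
    _ ≤ K * (√(2 * K))⁻¹ ^ 2 := by gcongr
    _ = 1 / 2 := by
      rw [inv_pow, sq_sqrt (by positivity)]
      field_simp

lemma integrable_indicator_closedBall (r : ℝ) :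
    Integrable ((closedBall (0 : Ed d) r).indicator (1 : Ed d → ℝ)) :=
  (integrable_indicator_iff isClosed_closedBall.measurableSet).2
    (integrableOn_const measure_closedBall_lt_top.ne)

lemma continuous_profile_inner_invOp (hA : ∀ x, IsElliptic K (A x))
    (hAc : ∀ i j, Continuous fun x => A x i j) :
    Continuous fun w : Ed d × Ed d => profile ⟪invOp (A w.1) w.2, w.2⟫ := by
  have hinv : Continuous fun w : Ed d × Ed d => invOp (A w.1) w.2 :=
    ((continuous_invOp hAc hA).comp continuous_fst).clm_apply continuous_snd
  have hprofile := (contDiff_profile (k := 0)).continuous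
  fun_prop

lemma continuous_parametrixMass (hA : ∀ x, IsElliptic K (A x))
    (hAc : ∀ i j, Continuous fun x => A x i j) : Continuous (parametrixMass A) := by
  have hcont := continuous_profile_inner_invOp hA hAc
  refine continuous_of_dominated
    (fun y => (hcont.curry_right).aestronglyMeasurable)
    (fun y => Eventually.of_forall fun z => ?_) (integrable_indicator_closedBall √K)
    (Eventually.of_forall fun z => hcont.curry_left)
  rw [Real.norm_of_nonneg (profile_nonneg _)]
  exact (hA y).profile_inner_invOp_le_indicator z

lemma measureReal_closedBall_le_parametrixMass (hA : IsElliptic K (A y)) :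
    volume.real (closedBall (0 : Ed d) (√(2 * K))⁻¹) ≤ parametrixMass A y := by
  have hprofile := (contDiff_profile (k := 0)).continuous
  have hint : Integrable fun z => profile ⟪invOp (A y) z, z⟫ :=
    (integrable_indicator_closedBall √K).mono' (by fun_prop) <| Eventually.of_forall fun z => by
      rw [Real.norm_of_nonneg (profile_nonneg _)]
      exact hA.profile_inner_invOp_le_indicator z
  rw [← integral_indicator_one isClosed_closedBall.measurableSet]
  exact integral_mono (integrable_indicator_closedBall _) hint
    hA.indicator_le_profile_inner_invOp

lemma measureReal_closedBall_pos {r : ℝ} (hr : 0 < r) :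
    0 < volume.real (closedBall (0 : Ed d) r) :=
  ENNReal.toReal_pos (measure_closedBall_pos _ _ hr).ne' measure_closedBall_lt_top.ne

lemma parametrixMass_pos (hA : IsElliptic K (A y)) : 0 < parametrixMass A y := by
  have hK := hA.pos
  exact (measureReal_closedBall_pos (by positivity)).trans_le
    (measureReal_closedBall_le_parametrixMass hA)

/-- The density `parametrixReg A μ t / parametrixMass A`, which approximates `μ` at scale `t⁻¹`. -/
def parametrixDensity (A : Ed d → Matrix (Fin d) (Fin d) ℝ) (μ : Measure (Ed d)) (t : ℝ)
    (y : Ed d) : ℝ :=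
  parametrixReg A μ t y / parametrixMass A y

lemma parametrixReg_nonneg (ht : 0 ≤ t) : 0 ≤ parametrixReg A μ t y :=
  integral_nonneg fun _ => parametrixKer_nonneg ht

lemma parametrixReg_le [IsProbabilityMeasure μ] (hA : IsElliptic K (A y)) (ht : 0 < t) :
    parametrixReg A μ t y ≤ t ^ d := by
  simpa [parametrixReg] using integral_mono (integrable_parametrixKer hA ht μ)
    (integrable_const (t ^ d)) fun _ => parametrixKer_le ht.le

lemma continuous_parametrixReg [IsFiniteMeasure μ] (hA : ∀ x, IsElliptic K (A x))
    (hAc : ∀ i j, Continuous fun x => A x i j) (ht : 0 ≤ t) :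
    Continuous (parametrixReg A μ t) := by
  refine continuous_of_dominated (bound := fun _ => t ^ d)
    (fun y => (continuous_parametrixKer_right t y).aestronglyMeasurable)
    (fun y => Eventually.of_forall fun x => ?_) (integrable_const _)
    (Eventually.of_forall fun x => (continuous_parametrixKer hA hAc t).curry_left)
  rw [Real.norm_of_nonneg (parametrixKer_nonneg ht)]
  exact parametrixKer_le ht

lemma integral_mul_parametrixKer (A : Ed d → Matrix (Fin d) (Fin d) ℝ) (f : Ed d → ℝ) (ht : 0 < t)
    (x : Ed d) :
    ∫ y, f y * parametrixKer A t y x =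
      ∫ z, f (x - t⁻¹ • z) * profile ⟪invOp (A (x - t⁻¹ • z)) z, z⟫ := by
  have hscale := Measure.integral_comp_inv_smul volume
    (fun z => f (x - z) * parametrixKer A t (x - z) x) t
  have hker (z : Ed d) : parametrixKer A t (x - t⁻¹ • z) x =
      t ^ d * profile ⟪invOp (A (x - t⁻¹ • z)) z, z⟫ := by
    rw [parametrixKer, sub_sub_cancel, map_smul, real_inner_smul_left, real_inner_smul_right]
    congr 2
    field_simp
  rw [integral_sub_left_eq_self (fun y => f y * parametrixKer A t y x), finrank_euclideanSpace,
    Fintype.card_fin, abs_of_pos (pow_pos ht d), smul_eq_mul] at hscale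
  simp only [hker, mul_left_comm _ (t ^ d), integral_const_mul] at hscale
  exact (mul_left_cancel₀ (pow_pos ht d).ne' hscale).symm

lemma integral_mul_parametrixReg [IsFiniteMeasure μ] (hA : ∀ x, IsElliptic K (A x))
    (hAc : ∀ i j, Continuous fun x => A x i j) (hf : Integrable f) (ht : 0 ≤ t) :
    ∫ y, f y * parametrixReg A μ t y = ∫ x, ∫ y, f y * parametrixKer A t y x ∂volume ∂μ := by
  have hint : Integrable (Function.uncurry fun y x => f y * parametrixKer A t y x)
      (volume.prod μ) :=
    hf.comp_fst μ |>.mul_bdd (c := t ^ d)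
      (continuous_parametrixKer hA hAc t).aestronglyMeasurable <| Eventually.of_forall fun w => by
        rw [Real.norm_of_nonneg (parametrixKer_nonneg ht)]
        exact parametrixKer_le ht
  rw [← integral_integral_swap hint]
  simp only [integral_const_mul, parametrixReg]

lemma norm_mul_profile_le {B : Matrix (Fin d) (Fin d) ℝ} (hB : IsElliptic K B) {a : ℝ}
    (ha : |a| ≤ M) (z : Ed d) :
    ‖a * profile ⟪invOp B z, z⟫‖ ≤ M * (closedBall 0 (√K)).indicator 1 z := by
  rw [norm_mul, Real.norm_of_nonneg (profile_nonneg _)]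
  exact mul_le_mul ha (hB.profile_inner_invOp_le_indicator z) (profile_nonneg _)
    ((abs_nonneg _).trans ha)

lemma tendsto_integral_mul_parametrixKer (hA : ∀ x, IsElliptic K (A x))
    (hAc : ∀ i j, Continuous fun x => A x i j) (hf : Continuous f) (hM : ∀ x, |f x| ≤ M)
    (x : Ed d) :
    Tendsto (fun t => ∫ y, f y * parametrixKer A t y x) atTop (𝓝 (f x * parametrixMass A x)) := by
  have hcont := continuous_profile_inner_invOp hA hAc
  have hlim : Tendsto (fun t : ℝ => ∫ z, f (x - t⁻¹ • z) *
      profile ⟪invOp (A (x - t⁻¹ • z)) z, z⟫) atTop (𝓝 (f x * parametrixMass A x)) := by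
    rw [parametrixMass, ← integral_const_mul]
    refine tendsto_integral_filter_of_dominated_convergence _ (Eventually.of_forall fun t => ?_)
      (Eventually.of_forall fun t => Eventually.of_forall fun z =>
        norm_mul_profile_le (hA _) (hM _) z)
      ((integrable_indicator_closedBall √K).const_mul M) (Eventually.of_forall fun z => ?_)
    · have hshift : Continuous fun z : Ed d => x - t⁻¹ • z := by fun_prop
      exact ((hf.comp hshift).mul
        (hcont.comp (hshift.prodMk continuous_id))).aestronglyMeasurable
    · have hshift : Tendsto (fun t : ℝ => x - t⁻¹ • z) atTop (𝓝 x) := by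
        simpa using (tendsto_const_nhds (x := x)).sub
          ((tendsto_inv_atTop_zero (𝕜 := ℝ)).smul_const z)
      have hmul : Continuous fun u => f u * profile ⟪invOp (A u) z, z⟫ :=
        hf.mul (hcont.curry_left)
      exact (hmul.tendsto x).comp hshift
  exact hlim.congr' <| (eventually_gt_atTop 0).mono fun t ht =>
    (integral_mul_parametrixKer A f ht x).symm

lemma tendsto_integral_mul_parametrixReg [IsFiniteMeasure μ] (hA : ∀ x, IsElliptic K (A x))
    (hAc : ∀ i j, Continuous fun x => A x i j) (hf : Continuous f) (hfint : Integrable f)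
    (hM : ∀ x, |f x| ≤ M) :
    Tendsto (fun t => ∫ y, f y * parametrixReg A μ t y) atTop
      (𝓝 (∫ x, f x * parametrixMass A x ∂μ)) := by
  have hlim : Tendsto (fun t => ∫ x, ∫ y, f y * parametrixKer A t y x ∂volume ∂μ) atTop
      (𝓝 (∫ x, f x * parametrixMass A x ∂μ)) := by
    refine tendsto_integral_filter_of_dominated_convergence
      (fun _ => M * volume.real (closedBall (0 : Ed d) (√K))) (Eventually.of_forall fun t => ?_)
      ((eventually_gt_atTop 0).mono fun t ht => Eventually.of_forall fun x => ?_)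
      (integrable_const _)
      (Eventually.of_forall fun x => tendsto_integral_mul_parametrixKer hA hAc hf hM x)
    · have hker := (continuous_parametrixKer hA hAc t).comp continuous_swap
      have hcont := (hf.comp continuous_snd).mul hker
      exact hcont.stronglyMeasurable.integral_prod_right'.aestronglyMeasurable
    · rw [integral_mul_parametrixKer A f ht]
      refine (norm_integral_le_of_norm_le ((integrable_indicator_closedBall √K).const_mul M)
        (Eventually.of_forall fun z => norm_mul_profile_le (hA _) (hM _) z)).trans_eq ?_
      rw [integral_const_mul, integral_indicator_one isClosed_closedBall.measurableSet]
  exact hlim.congr' <| (eventually_ge_atTop 0).mono fun t ht =>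
    (integral_mul_parametrixReg hA hAc hfint ht).symm

lemma exists_abs_integral_mul_parametrixReg_sub_le (hA : ∀ x, IsElliptic K (A x))
    (hLip : ∀ i j x y, |A x i j - A y i j| ≤ K₂ * ‖x - y‖) (hN : ∀ R, 0 ≤ N R) (hR : 0 ≤ R) :
    ∃ C ≥ 0, ∀ (μ : Measure (Ed d)) [IsProbabilityMeasure μ], DriftBounded A N μ →
      ∀ f : Ed d → ℝ, Integrable f → (∀ x ∉ closedBall 0 R, f x = 0) → ∀ M, (∀ x, |f x| ≤ M) →
      ∀ t ≥ 1, |(∫ y, f y * parametrixReg A μ (2 * t) y) - ∫ y, f y * parametrixReg A μ t y| ≤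
        M * C * t⁻¹ := by
  obtain ⟨C, hC0, hC⟩ := exists_abs_parametrixReg_sub_le hA hLip hN hR
  have hAc i j := continuous_of_abs_sub_le (hLip i j)
  refine ⟨C * volume.real (closedBall (0 : Ed d) (√K)), by positivity,
    fun μ _ hμ f hf hf0 M hM t ht => ?_⟩
  have ht0 : 0 < t := zero_lt_one.trans_le ht
  have hM0 : 0 ≤ M := (abs_nonneg _).trans (hM 0)
  have hint {s : ℝ} (hs : 0 < s) : Integrable fun y => f y * parametrixReg A μ s y :=
    hf.mul_bdd (c := s ^ d) (continuous_parametrixReg hA hAc hs.le).aestronglyMeasurable <|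
      Eventually.of_forall fun y => by
        rw [Real.norm_of_nonneg (parametrixReg_nonneg hs.le)]
        exact parametrixReg_le (hA y) hs
  have hball := integral_measureReal_closedBall volume μ (sqrt_nonneg K) ht0
  rw [finrank_euclideanSpace, Fintype.card_fin] at hball
  calc |(∫ y, f y * parametrixReg A μ (2 * t) y) - ∫ y, f y * parametrixReg A μ t y|
      = ‖∫ y, f y * (parametrixReg A μ (2 * t) y - parametrixReg A μ t y)‖ := by
        rw [← integral_sub (hint (by positivity)) (hint ht0), Real.norm_eq_abs]
        simp only [mul_sub]
    _ ≤ ∫ y, M * (C * t⁻¹) * (t ^ d * μ.real (closedBall y (√K / t))) := by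
        refine norm_integral_le_of_norm_le
          (((integrable_measureReal_closedBall volume μ _).const_mul _).const_mul _)
          (Eventually.of_forall fun y => ?_)
        by_cases hy : y ∈ closedBall 0 R
        · rw [norm_mul, mul_assoc M]
          exact mul_le_mul (hM y) (hC μ hμ y hy t ht) (norm_nonneg _) hM0
        · rw [hf0 y hy, zero_mul, norm_zero]
          positivity
    _ = M * (C * volume.real (closedBall (0 : Ed d) (√K))) * t⁻¹ := by
        rw [integral_const_mul, hball]
        ring

lemma exists_abs_integral_parametrixMass_sub_le_of_continuous (hA : ∀ x, IsElliptic K (A x))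
    (hLip : ∀ i j x y, |A x i j - A y i j| ≤ K₂ * ‖x - y‖) (hN : ∀ R, 0 ≤ N R) (hR : 0 ≤ R) :
    ∃ C ≥ 0, ∀ (μ : Measure (Ed d)) [IsProbabilityMeasure μ], DriftBounded A N μ →
      ∀ f : Ed d → ℝ, Continuous f → (∀ x ∉ closedBall 0 R, f x = 0) → ∀ M, (∀ x, |f x| ≤ M) →
      ∀ n : ℕ, |∫ x, f x * parametrixMass A x ∂μ - ∫ y, f y * parametrixReg A μ (2 ^ n) y| ≤
        M * C / 2 ^ n := by
  obtain ⟨C, hC0, hC⟩ := exists_abs_integral_mul_parametrixReg_sub_le hA hLip hN hR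
  have hAc i j := continuous_of_abs_sub_le (hLip i j)
  refine ⟨2 * C, by positivity, fun μ _ hμ f hf hf0 M hM n => ?_⟩
  have hfint : Integrable f := hf.integrable_of_hasCompactSupport <|
    HasCompactSupport.intro (isCompact_closedBall 0 R) hf0
  rw [abs_sub_comm, ← Real.dist_eq]
  refine dist_le_of_le_geometric_two_of_tendsto
    (f := fun n => ∫ y, f y * parametrixReg A μ (2 ^ n) y) (fun m => ?_)
    ((tendsto_integral_mul_parametrixReg hA hAc hf hfint hM).comp
      (tendsto_pow_atTop_atTop_of_one_lt one_lt_two)) n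
  rw [dist_comm, Real.dist_eq, pow_succ']
  refine (hC μ hμ f hfint hf0 M hM (2 ^ m) (one_le_pow₀ one_le_two)).trans_eq ?_
  ring

lemma exists_abs_integral_parametrixMass_sub_le (hA : ∀ x, IsElliptic K (A x))
    (hLip : ∀ i j x y, |A x i j - A y i j| ≤ K₂ * ‖x - y‖) (hN : ∀ R, 0 ≤ N R) (hR : 0 ≤ R) :
    ∃ C ≥ 0, ∀ (μ : Measure (Ed d)) [IsProbabilityMeasure μ], DriftBounded A N μ →
      ∀ f : Ed d → ℝ, Measurable f → (∀ x ∉ closedBall 0 R, f x = 0) → ∀ M, (∀ x, |f x| ≤ M) →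
      ∀ n : ℕ, |∫ x, f x * parametrixMass A x ∂μ - ∫ y, f y * parametrixReg A μ (2 ^ n) y| ≤
        M * C / 2 ^ n := by
  obtain ⟨C, hC0, hC⟩ :=
    exists_abs_integral_parametrixMass_sub_le_of_continuous hA hLip hN (R := R + 1) (by positivity)
  have hAc i j := continuous_of_abs_sub_le (hLip i j)
  refine ⟨C, hC0, fun μ _ hμ f hf hf0 M hM n => ?_⟩
  have hmass := continuous_parametrixMass hA hAc
  have hreg := continuous_parametrixReg (μ := μ) hA hAc (t := 2 ^ n) (by positivity)
  have := IsLocallyFiniteMeasure.withDensity_ofReal (μ := μ) hmass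
  have := IsLocallyFiniteMeasure.withDensity_ofReal (μ := volume) hreg
  have hσ (g : Ed d → ℝ) : ∫ x, g x ∂μ.withDensity (fun x => .ofReal (parametrixMass A x)) =
      ∫ x, g x * parametrixMass A x ∂μ := by
    rw [integral_withDensity_eq_integral_toReal_smul hmass.measurable.ennreal_ofReal (by simp)]
    simp only [ENNReal.toReal_ofReal (parametrixMass_pos (hA _)).le, smul_eq_mul, mul_comm]
  have hτ (g : Ed d → ℝ) :
      ∫ x, g x ∂volume.withDensity (fun x => .ofReal (parametrixReg A μ (2 ^ n) x)) =
        ∫ x, g x * parametrixReg A μ (2 ^ n) x := by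
    rw [integral_withDensity_eq_integral_toReal_smul hreg.measurable.ennreal_ofReal (by simp)]
    simp only [ENNReal.toReal_ofReal (parametrixReg_nonneg (pow_nonneg zero_le_two n)),
      smul_eq_mul, mul_comm]
  rw [← hσ, ← hτ]
  refine abs_integral_sub_integral_le_of_forall_continuous (fun g hg hg0 hgM => ?_) hf hf0 hM
  rw [hσ, hτ]
  exact hC μ hμ g hg hg0 M hgM n

lemma exists_abs_integral_sub_integral_mul_le (hA : ∀ x, IsElliptic K (A x))
    (hLip : ∀ i j x y, |A x i j - A y i j| ≤ K₂ * ‖x - y‖) (hN : ∀ R, 0 ≤ N R) (hR : 0 ≤ R) :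
    ∃ C ≥ 0, ∀ (μ : Measure (Ed d)) [IsProbabilityMeasure μ], DriftBounded A N μ →
      ∀ f : Ed d → ℝ, Measurable f → (∀ x ∉ closedBall 0 R, f x = 0) → ∀ M, (∀ x, |f x| ≤ M) →
      ∀ n : ℕ, |∫ x, f x ∂μ - ∫ y, f y * parametrixDensity A μ (2 ^ n) y| ≤ M * C / 2 ^ n := by
  obtain ⟨C, hC0, hC⟩ := exists_abs_integral_parametrixMass_sub_le hA hLip hN hR
  have hK := (hA 0).pos
  have hAc i j := continuous_of_abs_sub_le (hLip i j)
  set m := volume.real (closedBall (0 : Ed d) (√(2 * K))⁻¹)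
  have hm : 0 < m := measureReal_closedBall_pos (by positivity)
  refine ⟨C / m, by positivity, fun μ _ hμ f hf hf0 M hM n => ?_⟩
  have h := hC μ hμ (fun x => f x / parametrixMass A x)
    (hf.div (continuous_parametrixMass hA hAc).measurable)
    (fun x hx => by rw [hf0 x hx, zero_div]) (M / m) (fun x => ?_) n
  · simp only [div_mul_cancel₀ _ (parametrixMass_pos (hA _)).ne', div_mul_eq_mul_div] at h
    simpa only [parametrixDensity, mul_div_assoc, div_mul_eq_mul_div] using h
  · rw [abs_div, abs_of_pos (parametrixMass_pos (hA x))]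
    exact div_le_div₀ ((abs_nonneg _).trans (hM 0)) (hM x) hm
      (measureReal_closedBall_le_parametrixMass (hA x))

lemma tendsto_div_two_pow (c : ℝ) : Tendsto (fun n : ℕ => c / 2 ^ n) atTop (𝓝 0) :=
  tendsto_const_nhds.div_atTop (tendsto_pow_atTop_atTop_of_one_lt one_lt_two)

lemma absolutelyContinuous_of_driftBounded [IsProbabilityMeasure μ]
    (hA : ∀ x, IsElliptic K (A x)) (hLip : ∀ i j x y, |A x i j - A y i j| ≤ K₂ * ‖x - y‖)
    (hN : ∀ R, 0 ≤ N R) (hμ : DriftBounded A N μ) : μ ≪ volume := by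
  refine Measure.AbsolutelyContinuous.mk fun s hs hs0 => ?_
  have hball (R : ℕ) : μ (s ∩ closedBall 0 R) = 0 := by
    obtain ⟨C, -, hC⟩ := exists_abs_integral_sub_integral_mul_le hA hLip hN R.cast_nonneg
    have ht : MeasurableSet (s ∩ closedBall (0 : Ed d) R) :=
      hs.inter isClosed_closedBall.measurableSet
    have hvol : ∀ᵐ y, y ∉ s ∩ closedBall (0 : Ed d) R :=
      measure_eq_zero_iff_ae_notMem.1 (measure_inter_null_of_null_left _ hs0)
    have hle (n : ℕ) : |μ.real (s ∩ closedBall (0 : Ed d) R)| ≤ 1 * C / 2 ^ n := by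
      have h := hC μ hμ ((s ∩ closedBall 0 R).indicator 1) (measurable_one.indicator ht)
        (fun x hx => indicator_of_notMem (fun h => hx h.2) _) 1
        (fun x => by by_cases hx : x ∈ s ∩ closedBall 0 (R : ℝ) <;> simp [hx]) n
      rwa [integral_indicator_one ht, integral_eq_zero_of_ae, sub_zero] at h
      filter_upwards [hvol] with y hy
      simp [hy]
    exact (measureReal_eq_zero_iff).1 <| abs_nonpos_iff.1 <|
      ge_of_tendsto' (tendsto_div_two_pow _) hle
  rw [← inter_univ s, ← iUnion_closedBall_nat 0, inter_iUnion]
  exact measure_iUnion_null hball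

end Density

section WeightedDistance

variable {W f : Ed d → ℝ} {μ ν ρ : Measure (Ed d)} {c : ℝ}

lemma integral_sub_le_wDist (hμ : Integrable W μ) (hν : Integrable W ν) (hfm : Measurable f)
    (hf : ∀ x, |f x| ≤ W x) : ∫ x, f x ∂μ - ∫ x, f x ∂ν ≤ wDist W μ ν := by
  refine le_ciSup (f := fun f : {f : Ed d → ℝ // Measurable f ∧ ∀ x, |f x| ≤ W x} =>
    ∫ x, f.1 x ∂μ - ∫ x, f.1 x ∂ν) ⟨∫ x, W x ∂μ + ∫ x, W x ∂ν, ?_⟩ ⟨f, hfm, hf⟩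
  rintro _ ⟨g, rfl⟩
  have hgμ : |∫ x, g.1 x ∂μ| ≤ ∫ x, W x ∂μ :=
    norm_integral_le_of_norm_le (f := g.1) hμ (Eventually.of_forall g.2.2)
  have hgν : |∫ x, g.1 x ∂ν| ≤ ∫ x, W x ∂ν :=
    norm_integral_le_of_norm_le (f := g.1) hν (Eventually.of_forall g.2.2)
  exact (sub_le_sub (le_of_abs_le hgμ) (neg_le_of_abs_le hgν)).trans_eq (sub_neg_eq_add _ _)

lemma wDist_le (hW : ∀ x, 0 ≤ W x)
    (h : ∀ f : Ed d → ℝ, Measurable f → (∀ x, |f x| ≤ W x) → ∫ x, f x ∂μ - ∫ x, f x ∂ν ≤ c) :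
    wDist W μ ν ≤ c := by
  have : Nonempty {f : Ed d → ℝ // Measurable f ∧ ∀ x, |f x| ≤ W x} :=
    ⟨⟨0, measurable_const, fun x => by simpa using hW x⟩⟩
  exact ciSup_le fun f => h f.1 f.2.1 f.2.2

lemma wDist_nonneg (hW : ∀ x, 0 ≤ W x) (hμ : Integrable W μ) (hν : Integrable W ν) :
    0 ≤ wDist W μ ν := by
  simpa using integral_sub_le_wDist (f := fun _ => 0) hμ hν measurable_const
    fun x => by simpa using hW x

lemma wDist_comm (hW : ∀ x, 0 ≤ W x) (hμ : Integrable W μ) (hν : Integrable W ν) :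
    wDist W μ ν = wDist W ν μ := by
  have hle {μ ν : Measure (Ed d)} (hμ : Integrable W μ) (hν : Integrable W ν) :
      wDist W μ ν ≤ wDist W ν μ := by
    refine wDist_le hW fun f hfm hf => ?_
    have h := integral_sub_le_wDist (f := fun x => -f x) hν hμ hfm.neg
      fun x => by simpa using hf x
    rw [integral_neg, integral_neg] at h
    linarith
  exact le_antisymm (hle hμ hν) (hle hν hμ)

lemma wDist_triangle (hW : ∀ x, 0 ≤ W x) (hμ : Integrable W μ) (hν : Integrable W ν)
    (hρ : Integrable W ρ) : wDist W μ ρ ≤ wDist W μ ν + wDist W ν ρ := by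
  refine wDist_le hW fun f hfm hf => ?_
  linarith [integral_sub_le_wDist hμ hν hfm hf, integral_sub_le_wDist hν hρ hfm hf]

lemma abs_wDist_sub_wDist_le (hW : ∀ x, 0 ≤ W x) (hμ : Integrable W μ) (hν : Integrable W ν)
    (hρ : Integrable W ρ) : |wDist W μ ρ - wDist W ν ρ| ≤ wDist W μ ν := by
  have hμν := wDist_triangle hW hμ hν hρ
  have hνμ := wDist_triangle hW hν hμ hρ
  rw [wDist_comm hW hν hμ] at hνμ
  rw [abs_le]
  constructor <;> linarith

end WeightedDistance

section Compactness

variable {A : Ed d → Matrix (Fin d) (Fin d) ℝ} {V W f : Ed d → ℝ} {N : ℝ → ℝ} {K K₂ R M α δ : ℝ}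
  {t : ℝ} {ι : Type*} {l : Filter ι} {P : ι → ProbabilityMeasure (Ed d)}
  {Q : ProbabilityMeasure (Ed d)}

lemma parametrixDensity_nonneg {μ : Measure (Ed d)} {y : Ed d} (hA : IsElliptic K (A y))
    (ht : 0 ≤ t) : 0 ≤ parametrixDensity A μ t y :=
  div_nonneg (parametrixReg_nonneg ht) (parametrixMass_pos hA).le

lemma parametrixDensity_le {μ : Measure (Ed d)} [IsProbabilityMeasure μ] {y : Ed d}
    (hA : IsElliptic K (A y)) (ht : 0 < t) :
    parametrixDensity A μ t y ≤ t ^ d / volume.real (closedBall (0 : Ed d) (√(2 * K))⁻¹) := by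
  have hK := hA.pos
  exact div_le_div₀ (by positivity) (parametrixReg_le hA ht)
    (measureReal_closedBall_pos (by positivity)) (measureReal_closedBall_le_parametrixMass hA)

lemma continuous_parametrixDensity {μ : Measure (Ed d)} [IsFiniteMeasure μ]
    (hA : ∀ x, IsElliptic K (A x)) (hAc : ∀ i j, Continuous fun x => A x i j) (ht : 0 ≤ t) :
    Continuous (parametrixDensity A μ t) :=
  (continuous_parametrixReg hA hAc ht).div (continuous_parametrixMass hA hAc)
    fun y => (parametrixMass_pos (hA y)).ne'

lemma tendsto_parametrixDensity (hP : Tendsto P l (𝓝 Q)) (ht : 0 < t) {y : Ed d}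
    (hA : IsElliptic K (A y)) :
    Tendsto (fun i => parametrixDensity A (P i) t y) l (𝓝 (parametrixDensity A Q t y)) :=
  ((continuous_integral_of_hasCompactSupport (continuous_parametrixKer_right t y)
    (HasCompactSupport.intro (isCompact_closedBall y (√K / t))
      fun _ hx => parametrixKer_eq_zero hA ht hx)).tendsto Q).comp hP |>.div_const _

lemma tendsto_setIntegral_abs_parametrixDensity_sub [l.IsCountablyGenerated]
    (hA : ∀ x, IsElliptic K (A x)) (hAc : ∀ i j, Continuous fun x => A x i j)
    (hP : Tendsto P l (𝓝 Q)) (ht : 0 < t) (R : ℝ) :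
    Tendsto (fun i => ∫ y in closedBall 0 R,
      |parametrixDensity A (P i) t y - parametrixDensity A Q t y|) l (𝓝 0) := by
  have : IsFiniteMeasure (volume.restrict (closedBall (0 : Ed d) R)) :=
    ⟨by simpa using measure_closedBall_lt_top⟩
  have hcont (μ : ProbabilityMeasure (Ed d)) :=
    continuous_parametrixDensity (μ := μ) hA hAc ht.le
  rw [← integral_zero (Ed d) ℝ (μ := volume.restrict (closedBall 0 R))]
  refine tendsto_integral_filter_of_dominated_convergence
    (fun _ => t ^ d / volume.real (closedBall (0 : Ed d) (√(2 * K))⁻¹))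
    (Eventually.of_forall fun i => ((hcont (P i)).sub (hcont Q)).abs.aestronglyMeasurable)
    (Eventually.of_forall fun i => Eventually.of_forall fun y => ?_) (integrable_const _)
    (Eventually.of_forall fun y => ?_)
  · rw [Real.norm_eq_abs, abs_abs]
    exact abs_sub_le_of_nonneg_of_le (parametrixDensity_nonneg (hA y) ht.le)
      (parametrixDensity_le (hA y) ht) (parametrixDensity_nonneg (hA y) ht.le)
      (parametrixDensity_le (hA y) ht)
  · simpa using ((tendsto_parametrixDensity hP ht (hA y)).sub_const
      (parametrixDensity A Q t y)).abs

lemma abs_integral_mul_sub_integral_mul_le {X : Type*} [MeasurableSpace X] {ν : Measure X}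
    {s : Set X} {f g h : X → ℝ} (hf : AEStronglyMeasurable f (ν.restrict s))
    (hf0 : ∀ x ∉ s, f x = 0) (hM : ∀ x, |f x| ≤ M) (hg : IntegrableOn g s ν)
    (hh : IntegrableOn h s ν) :
    |∫ x, f x * g x ∂ν - ∫ x, f x * h x ∂ν| ≤ M * ∫ x in s, |g x - h x| ∂ν := by
  have hrestrict (k : X → ℝ) : ∫ x, f x * k x ∂ν = ∫ x in s, f x * k x ∂ν :=
    (setIntegral_eq_integral_of_forall_compl_eq_zero fun x hx => by rw [hf0 x hx, zero_mul]).symm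
  rw [hrestrict, hrestrict, ← integral_sub (hg.bdd_mul hf (Eventually.of_forall hM))
    (hh.bdd_mul hf (Eventually.of_forall hM)), ← integral_const_mul, ← Real.norm_eq_abs]
  refine norm_integral_le_of_norm_le ((hg.sub hh).abs.const_mul M)
    (Eventually.of_forall fun x => ?_)
  rw [← mul_sub, norm_mul]
  exact mul_le_mul_of_nonneg_right (hM x) (norm_nonneg _)

lemma eventually_abs_integral_sub_le [l.IsCountablyGenerated] (hA : ∀ x, IsElliptic K (A x))
    (hLip : ∀ i j x y, |A x i j - A y i j| ≤ K₂ * ‖x - y‖) (hN : ∀ R, 0 ≤ N R)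
    (hP : Tendsto P l (𝓝 Q)) (hPd : ∀ᶠ i in l, DriftBounded A N (P i : Measure (Ed d)))
    (hQd : DriftBounded A N (Q : Measure (Ed d))) (hR : 0 ≤ R) (M : ℝ) (hδ : 0 < δ) :
    ∀ᶠ i in l, ∀ f : Ed d → ℝ, Measurable f → (∀ x ∉ closedBall 0 R, f x = 0) →
      (∀ x, |f x| ≤ M) →
      |∫ x, f x ∂(P i : Measure (Ed d)) - ∫ x, f x ∂(Q : Measure (Ed d))| ≤ δ := by
  obtain ⟨C, -, hC⟩ := exists_abs_integral_sub_integral_mul_le hA hLip hN hR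
  have hAc i j := continuous_of_abs_sub_le (hLip i j)
  obtain ⟨n, hn⟩ : ∃ n : ℕ, M * C / 2 ^ n < δ / 4 :=
    ((tendsto_div_two_pow _).eventually (gt_mem_nhds (by positivity))).exists
  have hlim := (tendsto_setIntegral_abs_parametrixDensity_sub hA hAc hP
    (pow_pos two_pos n) R).const_mul M
  rw [mul_zero] at hlim
  filter_upwards [hPd, hlim.eventually (gt_mem_nhds (half_pos hδ))] with i hi hdens f hfm hf0 hfM
  have hint (μ : ProbabilityMeasure (Ed d)) :
      IntegrableOn (parametrixDensity A μ (2 ^ n)) (closedBall 0 R) :=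
    (continuous_parametrixDensity hA hAc (pow_nonneg two_pos.le n)).continuousOn
      |>.integrableOn_compact (isCompact_closedBall _ _)
  have hmid := abs_integral_mul_sub_integral_mul_le hfm.aestronglyMeasurable hf0 hfM
    (hint (P i)) (hint Q)
  have hPi := hC (P i) hi f hfm hf0 M hfM n
  have hQ := hC Q hQd f hfm hf0 M hfM n
  rw [abs_le] at hPi hQ hmid ⊢
  constructor <;> linarith

lemma exists_closedBall_forall_le_of_isLittleO {E : Type*} [SeminormedAddCommGroup E]
    [ProperSpace E] {V W : E → ℝ} (hWV : W =o[cocompact E] V) (hV0 : ∀ x, 0 ≤ V x)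
    (hδ : 0 < δ) : ∃ R, 0 ≤ R ∧ ∀ x ∉ closedBall 0 R, W x ≤ δ * V x := by
  rw [← cobounded_eq_cocompact] at hWV
  obtain ⟨R, -, hR⟩ := (hasBasis_cobounded_compl_closedBall (0 : E)).eventually_iff.1 (hWV.def hδ)
  refine ⟨max R 0, le_max_right _ _, fun x hx => (le_abs_self _).trans ?_⟩
  simpa [abs_of_nonneg (hV0 x)] using
    hR fun h => hx (closedBall_subset_closedBall (le_max_left _ _) h)

lemma integrable_of_isLittleO {μ : Measure (Ed d)} [IsFiniteMeasure μ] (hWc : Continuous W)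
    (hWV : W =o[cocompact (Ed d)] V) (hV : Integrable V μ) : Integrable W μ :=
  hWc.locallyIntegrable.integrable_of_isBigO_cocompact hWV.isBigO (hV.integrableAtFilter _)

lemma abs_setIntegral_compl_le {X : Type*} [MeasurableSpace X] {V W f : X → ℝ} {μ : Measure X}
    {s : Set X} (hs : MeasurableSet s) (hV : Integrable V μ) (hV0 : ∀ x, 0 ≤ V x) (hδ : 0 ≤ δ)
    (hα : ∫ x, V x ∂μ ≤ α) (hWV : ∀ x ∉ s, W x ≤ δ * V x) (hf : ∀ x, |f x| ≤ W x) :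
    |∫ x in sᶜ, f x ∂μ| ≤ δ * α :=
  calc |∫ x in sᶜ, f x ∂μ|
      ≤ ∫ x in sᶜ, δ * V x ∂μ := norm_integral_le_of_norm_le (f := f)
        (hV.const_mul δ).integrableOn <|
        (ae_restrict_iff' hs.compl).2 <| Eventually.of_forall fun x hx =>
          (hf x).trans (hWV x hx)
    _ ≤ ∫ x, δ * V x ∂μ := setIntegral_le_integral (hV.const_mul δ) <|
        Eventually.of_forall fun x => mul_nonneg hδ (hV0 x)
    _ ≤ δ * α := by
        rw [integral_const_mul]
        gcongr

/-- Weak convergence upgrades to weighted total variation convergence: local convergence comes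
from the parametrix densities, and the tails are controlled by the `V`-moments. -/
lemma tendsto_wDist [l.IsCountablyGenerated] (hA : ∀ x, IsElliptic K (A x))
    (hLip : ∀ i j x y, |A x i j - A y i j| ≤ K₂ * ‖x - y‖) (hVc : Continuous V)
    (hV0 : ∀ x, 0 ≤ V x) (hWc : Continuous W) (hW0 : ∀ x, 0 ≤ W x)
    (hWV : W =o[cocompact (Ed d)] V) (hN : ∀ R, 0 ≤ N R) (hα : 0 ≤ α)
    (hP : Tendsto P l (𝓝 Q)) (hPd : ∀ᶠ i in l, DriftBounded A N (P i : Measure (Ed d)))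
    (hQd : DriftBounded A N (Q : Measure (Ed d))) (hPV : ∀ᶠ i in l, P i ∈ momentSet V α)
    (hQV : Q ∈ momentSet V α) :
    Tendsto (fun i => wDist W (P i : Measure (Ed d)) (Q : Measure (Ed d))) l (𝓝 0) := by
  simp only [mem_momentSet_iff hVc hV0 hα] at hPV hQV
  have hQW := integrable_of_isLittleO hWc hWV hQV.1
  refine tendsto_order.2 ⟨fun c hc => hPV.mono fun i hi =>
    hc.trans_le (wDist_nonneg hW0 (integrable_of_isLittleO hWc hWV hi.1) hQW), fun ε hε => ?_⟩
  have hδ : 0 < ε / (8 * (α + 1)) := by positivity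
  have hδα : ε / (8 * (α + 1)) * α ≤ ε / 8 := by
    rw [div_mul_eq_mul_div, div_le_div_iff₀ (by positivity) (by norm_num)]
    nlinarith
  obtain ⟨R, hR, hRW⟩ := exists_closedBall_forall_le_of_isLittleO hWV hV0 hδ
  obtain ⟨M, hM⟩ :=
    (isCompact_closedBall (0 : Ed d) R).exists_bound_of_continuousOn hWc.continuousOn
  have hB : MeasurableSet (closedBall (0 : Ed d) R) := isClosed_closedBall.measurableSet
  filter_upwards [hPV, eventually_abs_integral_sub_le hA hLip hN hP hPd hQd hR M (half_pos hε)]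
    with i hi hloc
  refine (wDist_le hW0 fun f hfm hf => ?_).trans_lt (show 3 / 4 * ε < ε by linarith)
  have hfint {μ : Measure (Ed d)} (hμ : Integrable W μ) : Integrable f μ :=
    hμ.mono' hfm.aestronglyMeasurable (Eventually.of_forall hf)
  have hball := hloc ((closedBall 0 R).indicator f) (hfm.indicator hB)
    (fun x hx => indicator_of_notMem hx _) fun x => by
      by_cases hx : x ∈ closedBall (0 : Ed d) R
      · rw [indicator_of_mem hx]
        exact (hf x).trans ((le_abs_self _).trans (hM x hx))
      · rw [indicator_of_notMem hx, abs_zero]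
        exact (norm_nonneg _).trans (hM 0 (mem_closedBall_self hR))
  rw [integral_indicator hB, integral_indicator hB] at hball
  have hPtail := abs_setIntegral_compl_le hB hi.1 hV0 hδ.le hi.2 hRW hf
  have hQtail := abs_setIntegral_compl_le hB hQV.1 hV0 hδ.le hQV.2 hRW hf
  rw [← integral_add_compl hB (hfint (integrable_of_isLittleO hWc hWV hi.1)),
    ← integral_add_compl hB (hfint hQW)]
  rw [abs_le] at hball hPtail hQtail
  linarith

/-- The probability measures with `V`-moment at most `α` whose drift is bounded by `N`; both
conditions are satisfied by the stationary solutions under consideration. -/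
def driftBoundedMomentSet (A : Ed d → Matrix (Fin d) (Fin d) ℝ) (V : Ed d → ℝ) (N : ℝ → ℝ)
    (α : ℝ) : Set (ProbabilityMeasure (Ed d)) :=
  momentSet V α ∩ {P | DriftBounded A N (P : Measure (Ed d))}

lemma isClosed_setOf_driftBounded (hAc : ∀ i j, Continuous fun x => A x i j) (N : ℝ → ℝ) :
    IsClosed {P : ProbabilityMeasure (Ed d) | DriftBounded A N (P : Measure (Ed d))} := by
  simp only [DriftBounded, ofPred_forall]
  refine isClosed_iInter fun R => isClosed_iInter fun _ => isClosed_iInter fun φ =>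
    isClosed_iInter fun hφ => isClosed_iInter fun _ => isClosed_le ?_ ?_
  · exact (continuous_integral_of_hasCompactSupport
      (continuous_Lop hAc continuous_zero hφ.contDiff_two) (hasCompactSupport_Lop A 0 hφ.2)).abs
  · exact continuous_const.mul (continuous_integral_of_hasCompactSupport
      (continuous_gradient hφ.contDiff_two).norm (hasCompactSupport_gradient hφ.2).norm)

lemma isCompact_driftBoundedMomentSet (hAc : ∀ i j, Continuous fun x => A x i j)
    (hVc : Continuous V) (hVinf : Tendsto V (cocompact (Ed d)) atTop) (N : ℝ → ℝ) (α : ℝ) :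
    IsCompact (driftBoundedMomentSet A V N α) :=
  (isCompact_momentSet hVc hVinf α).inter_right (isClosed_setOf_driftBounded hAc N)

lemma exists_finset_forall_wDist_lt (hA : ∀ x, IsElliptic K (A x))
    (hLip : ∀ i j x y, |A x i j - A y i j| ≤ K₂ * ‖x - y‖) (hVc : Continuous V)
    (hV0 : ∀ x, 0 ≤ V x) (hVinf : Tendsto V (cocompact (Ed d)) atTop) (hWc : Continuous W)
    (hW0 : ∀ x, 0 ≤ W x) (hWV : W =o[cocompact (Ed d)] V) (hN : ∀ R, 0 ≤ N R) (hα : 0 ≤ α)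
    (hδ : 0 < δ) :
    ∃ t : Finset (ProbabilityMeasure (Ed d)), (∀ Q ∈ t, Q ∈ driftBoundedMomentSet A V N α) ∧
      ∀ P ∈ driftBoundedMomentSet A V N α, ∃ Q ∈ t,
        wDist W (P : Measure (Ed d)) (Q : Measure (Ed d)) < δ := by
  have hAc i j := continuous_of_abs_sub_le (hLip i j)
  obtain ⟨t, htS, hcover⟩ :=
    (isCompact_driftBoundedMomentSet hAc hVc hVinf N α).elim_nhdsWithin_subcover
      (fun Q => {P | wDist W (P : Measure (Ed d)) (Q : Measure (Ed d)) < δ}) fun Q hQ => by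
        have hmem := self_mem_nhdsWithin (a := Q) (s := driftBoundedMomentSet A V N α)
        exact (tendsto_wDist hA hLip hVc hV0 hWc hW0 hWV hN hα (P := id)
          (tendsto_id'.2 nhdsWithin_le_nhds) (mem_of_superset hmem fun P hP => hP.2) hQ.2
          (mem_of_superset hmem fun P hP => hP.1) hQ.1).eventually (gt_mem_nhds hδ)
  refine ⟨t, htS, fun P hP => ?_⟩
  simpa only [mem_iUnion, exists_prop, mem_ofPred_eq] using hcover hP

lemma exists_subseq_tendsto_wDist (hA : ∀ x, IsElliptic K (A x))
    (hLip : ∀ i j x y, |A x i j - A y i j| ≤ K₂ * ‖x - y‖) (hVc : Continuous V)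
    (hV0 : ∀ x, 0 ≤ V x) (hVinf : Tendsto V (cocompact (Ed d)) atTop) (hWc : Continuous W)
    (hW0 : ∀ x, 0 ≤ W x) (hWV : W =o[cocompact (Ed d)] V) (hN : ∀ R, 0 ≤ N R) (hα : 0 ≤ α)
    {P : ℕ → ProbabilityMeasure (Ed d)} (hP : ∀ n, P n ∈ driftBoundedMomentSet A V N α) :
    ∃ Q ∈ driftBoundedMomentSet A V N α, ∃ u : ℕ → ℕ, StrictMono u ∧
      Tendsto (P ∘ u) atTop (𝓝 Q) ∧
      Tendsto (fun n => wDist W (P (u n) : Measure (Ed d)) (Q : Measure (Ed d))) atTop (𝓝 0) := by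
  have hAc i j := continuous_of_abs_sub_le (hLip i j)
  obtain ⟨Q, hQ, u, hu, hlim⟩ :=
    (isCompact_driftBoundedMomentSet hAc hVc hVinf N α).isSeqCompact hP
  exact ⟨Q, hQ, u, hu, hlim, tendsto_wDist hA hLip hVc hV0 hWc hW0 hWV hN hα hlim
    (Eventually.of_forall fun n => (hP _).2) hQ.2 (Eventually.of_forall fun n => (hP _).1) hQ.1⟩

end Compactness

section Mollification

variable {E F : Type*} [NormedAddCommGroup E] [InnerProductSpace ℝ E] [FiniteDimensional ℝ E]
  [MeasurableSpace E] [BorelSpace E] [NormedAddCommGroup F] [NormedSpace ℝ F]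
  (ψ : ContDiffBump (0 : E)) {β β' : E → F} {s : Set F} {x : E}

/-- The mollification of a vector field: its convolution with a normalized bump function. -/
def moll (β : E → F) (x : E) : F :=
  convolution (ψ.normed volume) β (ContinuousLinearMap.lsmul ℝ ℝ) volume x

lemma moll_eq_integral (β : E → F) (x : E) :
    moll ψ β x = ∫ t, ψ.normed volume t • β (x - t) := rfl

lemma integrable_normed_smul (hβ : LocallyIntegrable β) (x : E) :
    Integrable fun t => ψ.normed volume t • β (x - t) :=
  ψ.hasCompactSupport_normed.convolutionExists_left (ContinuousLinearMap.lsmul ℝ ℝ)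
    ψ.continuous_normed hβ x

lemma continuous_moll (hβ : LocallyIntegrable β) : Continuous (moll ψ β) :=
  ψ.hasCompactSupport_normed.continuous_convolution_left (ContinuousLinearMap.lsmul ℝ ℝ)
    ψ.continuous_normed hβ

lemma moll_sub (hβ : LocallyIntegrable β) (hβ' : LocallyIntegrable β') (x : E) :
    moll ψ (β - β') x = moll ψ β x - moll ψ β' x := by
  simp only [moll_eq_integral, Pi.sub_apply, smul_sub]
  exact integral_sub (integrable_normed_smul ψ hβ x) (integrable_normed_smul ψ hβ' x)

-- Jensen for the probability measure with density `ψ.normed volume`.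
lemma moll_mem_of_convex [CompleteSpace F] (hβ : LocallyIntegrable β) (hs : Convex ℝ s)
    (hsc : IsClosed s) (h : ∀ y ∈ ball x ψ.rOut, β y ∈ s) : moll ψ β x ∈ s := by
  let ρ : E → ℝ≥0∞ := fun t => ENNReal.ofReal (ψ.normed volume t)
  have hρm : Measurable ρ := ψ.continuous_normed.measurable.ennreal_ofReal
  have hρ : ∀ᵐ t, ρ t < ∞ := .of_forall fun t => ENNReal.ofReal_lt_top
  have hρr (t : E) : (ρ t).toReal = ψ.normed volume t :=
    ENNReal.toReal_ofReal (ψ.nonneg_normed t)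
  have hprob : IsProbabilityMeasure (volume.withDensity ρ) := ⟨by
    rw [withDensity_apply _ .univ, setLIntegral_univ,
      ← ofReal_integral_eq_lintegral_ofReal ψ.integrable_normed (.of_forall ψ.nonneg_normed),
      ψ.integral_normed, ENNReal.ofReal_one]⟩
  have hmem : ∀ᵐ t ∂volume.withDensity ρ, β (x - t) ∈ s := by
    refine (ae_withDensity_iff hρm).2 (.of_forall fun t ht => h _ ?_)
    have : t ∈ Function.support (ψ.normed volume) := fun h0 => ht (by simp [ρ, h0])
    rw [ψ.support_normed_eq] at this
    simpa using this
  have hint : Integrable (fun t => β (x - t)) (volume.withDensity ρ) := by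
    rw [integrable_withDensity_iff_integrable_smul' hρm hρ]
    simpa only [hρr] using integrable_normed_smul ψ hβ x
  have := hs.integral_mem hsc hmem hint
  rw [integral_withDensity_eq_integral_toReal_smul hρm hρ] at this
  simpa only [hρr, ← moll_eq_integral] using this

lemma norm_moll_le [CompleteSpace F] (hβ : LocallyIntegrable β) {c : ℝ}
    (h : ∀ y ∈ ball x ψ.rOut, ‖β y‖ ≤ c) : ‖moll ψ β x‖ ≤ c := by
  simpa using moll_mem_of_convex ψ hβ (convex_closedBall 0 c) isClosed_closedBall
    fun y hy => mem_closedBall_zero_iff.2 (h y hy)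

end Mollification

section DriftConstraint

variable {E : Type*} [NormedAddCommGroup E] [InnerProductSpace ℝ E] {F : E → ℝ} {G : E → E}
  {N : ℝ → ℝ} {β : E → E} {ε R : ℝ}

/-- The values at `x` allowed to a drift that is bounded by `N S` on each ball of radius `S` and
satisfies the one-sided condition `⟪β, G⟫ ≤ F`. With `G = ∇V` and
`F = C₁ - C₂ V - tr (A D²V)` the latter is the Lyapunov condition. -/
def driftConstraint (F : E → ℝ) (G : E → E) (N : ℝ → ℝ) (x : E) : Set E :=
  {v | (∀ S > 0, ‖x‖ ≤ S → ‖v‖ ≤ N S) ∧ ⟪v, G x⟫ ≤ F x}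

lemma convex_driftConstraint (x : E) : Convex ℝ (driftConstraint F G N x) := by
  have hball : Convex ℝ {v : E | ∀ S > 0, ‖x‖ ≤ S → ‖v‖ ≤ N S} := fun u hu v hv a b ha hb hab S hS
    hx => by
    simpa using convex_closedBall (0 : E) (N S) (by simpa using hu S hS hx)
      (by simpa using hv S hS hx) ha hb hab
  refine hball.inter (convex_halfSpace_le (f := fun v => ⟪v, G x⟫) ?_ _)
  exact ⟨fun u v => inner_add_left u v _, fun c v => real_inner_smul_left v _ c⟩

lemma isClosed_driftConstraint (x : E) : IsClosed (driftConstraint F G N x) := by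
  have hball : IsClosed {v : E | ∀ S > 0, ‖x‖ ≤ S → ‖v‖ ≤ N S} := by
    simp only [Set.ofPred_forall]
    exact isClosed_iInter fun S => isClosed_iInter fun _ => isClosed_iInter fun _ =>
      isClosed_le continuous_norm continuous_const
  exact hball.inter (isClosed_Iic.preimage
    ((continuous_id.inner continuous_const : Continuous fun v : E => ⟪v, G x⟫)))

lemma exists_pos_forall_driftConstraint_subset [ProperSpace E] (hF : Continuous F)
    (hG : Continuous G) (N : ℝ → ℝ) (hε : 0 < ε) (R : ℝ) :
    ∃ r > 0, ∀ x ∈ closedBall (0 : E) R, ∀ y, dist y x < r →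
      driftConstraint F G N y ⊆ driftConstraint (fun x => F x + ε) G (fun S => N (S + 1)) x := by
  let Φ : E × E → ℝ := fun p => ⟪p.2, G p.1⟫ - F p.1
  have hΦ : Continuous Φ := by fun_prop
  obtain ⟨r, hr, hrΦ⟩ := Metric.uniformContinuousOn_iff.1
    (((isCompact_closedBall (0 : E) (R + 1)).prod
      (isCompact_closedBall (0 : E) (N (R + 2)))).uniformContinuousOn_of_continuous
        hΦ.continuousOn) ε hε
  refine ⟨min r 1, by positivity, fun x hx y hyx v hv => ?_⟩
  rw [mem_closedBall_zero_iff] at hx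
  have hyx' : ‖y‖ ≤ ‖x‖ + 1 := by
    linarith [norm_le_norm_add_norm_sub' y x, dist_eq_norm y x, hyx.trans_le (min_le_right r 1)]
  have hvN : ‖v‖ ≤ N (R + 2) := hv.1 _ (by linarith [norm_nonneg x]) (by linarith)
  refine ⟨fun S hS hxS => hv.1 _ (by linarith) (by linarith), ?_⟩
  have hclose := hrΦ (y, v) ⟨by simpa using (by linarith : ‖y‖ ≤ R + 1), by simpa using hvN⟩
    (x, v) ⟨by simpa using (by linarith : ‖x‖ ≤ R + 1), by simpa using hvN⟩
    (by simpa [Prod.dist_eq, hr] using hyx.trans_le (min_le_left _ _))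
  rw [Real.dist_eq, abs_lt] at hclose
  have hvF := hv.2
  simp only [Φ] at hclose
  linarith

lemma exists_continuous_forall_mem_driftConstraint [ProperSpace E] (hF : Continuous F)
    (hG : Continuous G) (hne : ∀ x, (driftConstraint F G N x).Nonempty) (hε : 0 < ε) :
    ∃ B : E → E, Continuous B ∧
      ∀ x, B x ∈ driftConstraint (fun x => F x + ε) G (fun S => N (S + 1)) x := by
  obtain ⟨B, hB⟩ := exists_continuous_forall_mem_convex_of_local_const
    (t := driftConstraint (fun x => F x + ε) G fun S => N (S + 1)) convex_driftConstraint
    fun x => by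
      obtain ⟨v, hv⟩ := hne x
      obtain ⟨r, hr, hsub⟩ := exists_pos_forall_driftConstraint_subset hF hG N hε (‖x‖ + 1)
      refine ⟨v, ?_⟩
      filter_upwards [ball_mem_nhds x hr, ball_mem_nhds x one_pos] with y hyr hy1
      refine hsub y ?_ x (by rwa [dist_comm]) hv
      rw [mem_closedBall_zero_iff]
      linarith [norm_le_norm_add_norm_sub' y x, dist_eq_norm y x, mem_ball.1 hy1]
  exact ⟨B, B.continuous, hB⟩

variable [FiniteDimensional ℝ E] [MeasurableSpace E] [BorelSpace E]

lemma locallyIntegrable_of_forall_mem_driftConstraint (hβm : Measurable β)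
    (hβ : ∀ x, β x ∈ driftConstraint F G N x) : LocallyIntegrable β := by
  refine fun x => ⟨ball x 1, ball_mem_nhds x one_pos,
    Measure.integrableOn_of_bounded (M := N (‖x‖ + 1)) measure_ball_lt_top.ne
      hβm.aestronglyMeasurable ?_⟩
  refine (ae_restrict_iff' measurableSet_ball).2 (.of_forall fun y hy => ?_)
  refine (hβ y).1 _ (by positivity) ?_
  linarith [norm_le_norm_add_norm_sub' y x, dist_eq_norm y x, mem_ball.1 hy]

lemma exists_bump_forall_exists_continuous (hF : Continuous F) (hG : Continuous G)
    (hne : ∀ x, (driftConstraint F G N x).Nonempty) (hε : 0 < ε) (R : ℝ) :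
    ∃ ψ : ContDiffBump (0 : E), ψ.rOut < ε ∧ ψ.rOut ≤ 1 ∧ ψ.rOut ≤ 2 * ψ.rIn ∧
      ∀ β, Measurable β → (∀ x, β x ∈ driftConstraint F G N x) → ∃ B, Continuous B ∧
        (∀ x, B x ∈ driftConstraint (fun x => F x + ε) G (fun S => N (S + 1)) x) ∧
        EqOn B (moll ψ β) (closedBall 0 R) := by
  obtain ⟨B₀, hB₀c, hB₀⟩ := exists_continuous_forall_mem_driftConstraint hF hG hne hε
  obtain ⟨r₀, hr₀, hsub⟩ := exists_pos_forall_driftConstraint_subset hF hG N hε (R + 1)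
  obtain ⟨r, hr, hrr₀, hrε, hr1⟩ : ∃ r > 0, r ≤ r₀ ∧ r < ε ∧ r ≤ 1 :=
    ⟨min r₀ (min (ε / 2) 1), by positivity, min_le_left _ _,
      ((min_le_right _ _).trans (min_le_left _ _)).trans_lt (half_lt_self hε),
      (min_le_right _ _).trans (min_le_right _ _)⟩
  let ψ : ContDiffBump (0 : E) := ⟨r / 2, r, half_pos hr, half_lt_self hr⟩
  refine ⟨ψ, hrε, hr1, (mul_div_cancel₀ r two_ne_zero).ge, fun β hβm hβ => ?_⟩
  have hβi := locallyIntegrable_of_forall_mem_driftConstraint hβm hβ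
  refine ⟨fun x => cutoff R x • moll ψ β x + (1 - cutoff R x) • B₀ x,
    ((continuous_cutoff R).smul (continuous_moll ψ hβi)).add
      ((continuous_const.sub (continuous_cutoff R)).smul hB₀c), fun x => ?_, fun x hx => ?_⟩
  · by_cases hx : x ∈ closedBall (0 : E) (R + 1)
    · refine convex_driftConstraint x ?_ (hB₀ x) (cutoff_nonneg R x)
        (sub_nonneg.2 (cutoff_le_one R x)) (by ring)
      exact moll_mem_of_convex ψ hβi (convex_driftConstraint x) (isClosed_driftConstraint x)
        fun y hy => hsub x hx y ((mem_ball.1 hy).trans_le hrr₀) (hβ y)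
    · simpa [cutoff_eq_zero hx] using hB₀ x
  · simp [cutoff_eq_one hx]

end DriftConstraint

section Mixture

variable {X ι : Type*} [MeasurableSpace X] [Fintype ι] {p q : ι → ℝ} {μ : ι → Measure X}
  {f : X → ℝ} {c : ℝ}

/-- The mixture of the measures `μ j` with weights `p j`, meant for nonnegative weights: negative
ones are replaced by `0`. -/
def mixture (p : ι → ℝ) (μ : ι → Measure X) : Measure X :=
  ∑ j, ENNReal.ofReal (p j) • μ j

lemma isProbabilityMeasure_mixture (hp : p ∈ stdSimplex ℝ ι)
    (hμ : ∀ j, IsProbabilityMeasure (μ j)) : IsProbabilityMeasure (mixture p μ) := by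
  refine ⟨?_⟩
  rw [mixture, Measure.finsetSum_apply]
  simp only [Measure.smul_apply, measure_univ, smul_eq_mul, mul_one]
  rw [← ENNReal.ofReal_sum_of_nonneg fun j _ => hp.1 j, hp.2, ENNReal.ofReal_one]

lemma integrable_mixture (p : ι → ℝ) (hf : ∀ j, Integrable f (μ j)) :
    Integrable f (mixture p μ) :=
  integrable_finsetSum_measure.2 fun j _ => (hf j).smul_measure ENNReal.ofReal_ne_top

lemma integral_mixture (hp : ∀ j, 0 ≤ p j) (hf : ∀ j, Integrable f (μ j)) :
    ∫ x, f x ∂(mixture p μ) = ∑ j, p j * ∫ x, f x ∂(μ j) := by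
  rw [mixture, integral_finsetSum_measure fun j _ => (hf j).smul_measure ENNReal.ofReal_ne_top]
  exact Finset.sum_congr rfl fun j _ => by
    rw [integral_smul_measure, ENNReal.toReal_ofReal (hp j), smul_eq_mul]

lemma integral_mixture_le (hp : p ∈ stdSimplex ℝ ι) (hf : ∀ j, Integrable f (μ j))
    (h : ∀ j, 0 < p j → ∫ x, f x ∂(μ j) ≤ c) : ∫ x, f x ∂(mixture p μ) ≤ c := by
  rw [integral_mixture hp.1 hf]
  calc ∑ j, p j * ∫ x, f x ∂(μ j) ≤ ∑ j, p j * c := Finset.sum_le_sum fun j _ => by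
        rcases (hp.1 j).eq_or_lt with hj | hj
        · simp [← hj]
        · exact mul_le_mul_of_nonneg_left (h j hj) hj.le
    _ = c := by rw [← Finset.sum_mul, hp.2, one_mul]

lemma abs_integral_mixture_le (hp : p ∈ stdSimplex ℝ ι) (hf : ∀ j, Integrable f (μ j))
    (h : ∀ j, 0 < p j → |∫ x, f x ∂(μ j)| ≤ c) : |∫ x, f x ∂(mixture p μ)| ≤ c := by
  refine abs_le'.2 ⟨integral_mixture_le hp hf fun j hj => (abs_le'.1 (h j hj)).1, ?_⟩
  rw [← integral_neg]
  refine integral_mixture_le hp (fun j => (hf j).neg) fun j hj => ?_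
  rw [integral_neg]
  exact (abs_le'.1 (h j hj)).2

end Mixture

section MixtureDistance

variable {ι : Type*} [Fintype ι] {W : Ed d → ℝ} {p q : ι → ℝ} {μ ν : ι → Measure (Ed d)}
  {ρ : Measure (Ed d)}

lemma wDist_mixture_le (hW : ∀ x, 0 ≤ W x) (hp : ∀ j, 0 ≤ p j) (hq : ∀ j, 0 ≤ q j)
    (hμ : ∀ j, Integrable W (μ j)) :
    wDist W (mixture p μ) (mixture q μ) ≤ ∑ j, |p j - q j| * ∫ x, W x ∂(μ j) := by
  refine wDist_le hW fun f hfm hf => ?_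
  have hfi j : Integrable f (μ j) :=
    (hμ j).mono' hfm.aestronglyMeasurable (Eventually.of_forall hf)
  rw [integral_mixture hp hfi, integral_mixture hq hfi, ← Finset.sum_sub_distrib]
  refine Finset.sum_le_sum fun j _ => ?_
  rw [← sub_mul]
  refine (le_abs_self _).trans ((abs_mul _ _).trans_le ?_)
  exact mul_le_mul_of_nonneg_left
    (norm_integral_le_of_norm_le (f := f) (hμ j) (Eventually.of_forall hf)) (abs_nonneg _)

lemma continuousOn_wDist_mixture (hW : ∀ x, 0 ≤ W x) (hμ : ∀ j, Integrable W (μ j))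
    (hρ : Integrable W ρ) :
    ContinuousOn (fun p : ι → ℝ => wDist W (mixture p μ) ρ) (stdSimplex ℝ ι) := by
  intro p hp
  have hlim : Tendsto (fun q : ι → ℝ => ∑ j, |q j - p j| * ∫ x, W x ∂(μ j))
      (𝓝[stdSimplex ℝ ι] p) (𝓝 0) := by
    have hcont : Continuous fun q : ι → ℝ => ∑ j, |q j - p j| * ∫ x, W x ∂(μ j) := by fun_prop
    simpa using (hcont.tendsto p).mono_left nhdsWithin_le_nhds
  refine tendsto_iff_dist_tendsto_zero.2
    (squeeze_zero' (Eventually.of_forall fun _ => dist_nonneg) ?_ hlim)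
  filter_upwards [self_mem_nhdsWithin] with q hq
  rw [Real.dist_eq]
  exact (abs_wDist_sub_wDist_le hW (integrable_mixture q hμ) (integrable_mixture p hμ) hρ).trans
    (wDist_mixture_le hW hq.1 hp.1 hμ)

-- Weighting `μ j` by `max 0 (ε - wDist W · (ν j))`, normalized, gives a self-map of the simplex;
-- a fixed point charges only the `j` for which this weight is positive.
lemma exists_mixture_wDist_lt [Nonempty ι] (hW : ∀ x, 0 ≤ W x) (hμ : ∀ j, Integrable W (μ j))
    (hν : ∀ j, Integrable W (ν j)) {ε : ℝ}
    (h : ∀ p ∈ stdSimplex ℝ ι, ∃ j, wDist W (mixture p μ) (ν j) < ε) :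
    ∃ p ∈ stdSimplex ℝ ι, ∀ j, 0 < p j → wDist W (mixture p μ) (ν j) < ε := by
  classical
  let w : ι → (ι → ℝ) → ℝ := fun j p => max 0 (ε - wDist W (mixture p μ) (ν j))
  have hw0 j p : 0 ≤ w j p := le_max_left _ _
  have hwc j : ContinuousOn (w j) (stdSimplex ℝ ι) := continuousOn_const.sup
    (continuousOn_const.sub (continuousOn_wDist_mixture hW hμ (hν j)))
  have hsum : ∀ p ∈ stdSimplex ℝ ι, 0 < ∑ j, w j p := fun p hp => by
    obtain ⟨j, hj⟩ := h p hp
    exact Finset.sum_pos' (fun j _ => hw0 j p)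
      ⟨j, Finset.mem_univ _, lt_max_of_lt_right (sub_pos.2 hj)⟩
  obtain ⟨p, hp, hfix⟩ := exists_fixedPoint_of_isCompact_of_convex (isCompact_stdSimplex ℝ ι)
    (convex_stdSimplex ℝ ι) ⟨_, single_mem_stdSimplex ℝ (Classical.arbitrary ι)⟩
    (F := fun p j => w j p / ∑ i, w i p)
    (continuousOn_pi.2 fun j => (hwc j).div (continuousOn_finsetSum _ fun i _ => hwc i)
      fun p hp => (hsum p hp).ne')
    fun p hp => ⟨fun j => div_nonneg (hw0 j p) (hsum p hp).le, by
      rw [← Finset.sum_div, div_self (hsum p hp).ne']⟩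
  refine ⟨p, hp, fun j hj => ?_⟩
  rw [← hfix] at hj
  have hwj : 0 < w j p := (div_pos_iff_of_pos_right (hsum p hp)).1 hj
  simpa [w] using hwj

end MixtureDistance

section ApproximateSolution

variable {A : Ed d → Matrix (Fin d) (Fin d) ℝ} {V W : Ed d → ℝ} {N : ℝ → ℝ}
  {b : Ed d → Measure (Ed d) → Ed d} {K K₂ C₁ C₂ α ε η r R M c : ℝ}
  {B β β' : Ed d → Ed d} {φ : Ed d → ℝ} {ψ : ContDiffBump (0 : Ed d)}

/-- The values at `x` allowed to a drift that is bounded by `N` on balls and satisfies the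
Lyapunov condition `L V ≤ C₁ - C₂ V`. -/
def lyapunovConstraint (A : Ed d → Matrix (Fin d) (Fin d) ℝ) (V : Ed d → ℝ) (C₁ C₂ : ℝ)
    (N : ℝ → ℝ) (x : Ed d) : Set (Ed d) :=
  driftConstraint (fun x => C₁ - C₂ * V x - Lop A 0 V x) (gradient V) N x

lemma mem_lyapunovConstraint {x : Ed d} : B x ∈ lyapunovConstraint A V C₁ C₂ N x ↔
    (∀ S > 0, ‖x‖ ≤ S → ‖B x‖ ≤ N S) ∧ Lop A B V x ≤ C₁ - C₂ * V x := by
  rw [Lop_eq_Lop_zero_add, add_comm, ← le_sub_iff_add_le]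
  rfl

lemma div_nonneg_of_forall_mem_lyapunovConstraint (hA : ∀ i j, Continuous fun x => A x i j)
    (hApos : ∀ x, (A x).PosSemidef) (hV : ContDiff ℝ 2 V) (hV0 : ∀ x, 0 ≤ V x)
    (hVinf : Tendsto V (cocompact (Ed d)) atTop) (hC₂ : 0 < C₂) (hB : Continuous B)
    (hBmem : ∀ x, B x ∈ lyapunovConstraint A V C₁ C₂ N x) : 0 ≤ C₁ / C₂ := by
  obtain ⟨μ, -, -, hμV⟩ := exists_isStationarySol_of_continuous hA hApos hV hV0 hVinf hB hC₂
    fun x => (mem_lyapunovConstraint.1 (hBmem x)).2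
  exact (integral_nonneg hV0).trans hμV

lemma exists_bump_forall_exists_continuous_mem_lyapunovConstraint
    (hA : ∀ i j, Continuous fun x => A x i j) (hV : ContDiff ℝ 2 V)
    (hne : ∀ x, (lyapunovConstraint A V C₁ C₂ N x).Nonempty) (hε : 0 < ε) (R : ℝ) :
    ∃ ψ : ContDiffBump (0 : Ed d), ψ.rOut < ε ∧ ψ.rOut ≤ 1 ∧ ψ.rOut ≤ 2 * ψ.rIn ∧
      ∀ β, Measurable β → (∀ x, β x ∈ lyapunovConstraint A V C₁ C₂ N x) → ∃ B, Continuous B ∧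
        (∀ x, B x ∈ lyapunovConstraint A V (C₁ + ε) C₂ (fun S => N (S + 1)) x) ∧
        EqOn B (moll ψ β) (closedBall 0 R) := by
  have hF : Continuous fun x => C₁ - C₂ * V x - Lop A 0 V x :=
    (continuous_const.sub (hV.continuous.const_mul C₂)).sub (continuous_Lop hA continuous_zero hV)
  have hrelax (x : Ed d) : C₁ - C₂ * V x - Lop A 0 V x + ε =
      C₁ + ε - C₂ * V x - Lop A 0 V x := by ring
  simpa only [hrelax, lyapunovConstraint] using
    exists_bump_forall_exists_continuous hF (continuous_gradient hV) hne hε R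

lemma driftBounded_of_isStationarySol {μ : Measure (Ed d)} [IsFiniteMeasure μ]
    (hA : ∀ i j, Continuous fun x => A x i j) (hB : Continuous B)
    (hBN : ∀ S > 0, ∀ x, ‖x‖ ≤ S → ‖B x‖ ≤ N S) (h : IsStationarySol A B μ) :
    DriftBounded A N μ := by
  intro S hS φ hφ hsupp
  have hgint : Integrable (fun x => ‖gradient φ x‖) μ :=
    (continuous_gradient hφ.contDiff_two).norm.integrable_of_hasCompactSupport
      (hasCompactSupport_gradient hφ.2).norm
  have heq : ∫ x, Lop A 0 φ x ∂μ = ∫ x, (Lop A 0 φ x - Lop A B φ x) ∂μ := by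
    rw [integral_sub (hφ.integrable_Lop hA continuous_zero) (hφ.integrable_Lop hA hB), h φ hφ,
      sub_zero]
  rw [heq, ← integral_const_mul, ← Real.norm_eq_abs]
  refine norm_integral_le_of_norm_le (hgint.const_mul _) (Eventually.of_forall fun x => ?_)
  rw [Lop_eq_Lop_zero_add A B, sub_add_cancel_left, norm_neg]
  by_cases hx : x ∈ tsupport φ
  · exact (norm_inner_le_norm _ _).trans (mul_le_mul_of_nonneg_right
      (hBN S hS x (by simpa using hsupp hx)) (norm_nonneg _))
  · simp [gradient_eq_zero_of_notMem_tsupport hx]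

lemma exists_isStationarySol_mem_driftBoundedMomentSet (hA : ∀ i j, Continuous fun x => A x i j)
    (hApos : ∀ x, (A x).PosSemidef) (hV : ContDiff ℝ 2 V) (hV0 : ∀ x, 0 ≤ V x)
    (hVinf : Tendsto V (cocompact (Ed d)) atTop) (hC₂ : 0 < C₂) (hB : Continuous B)
    (hBmem : ∀ x, B x ∈ lyapunovConstraint A V C₁ C₂ N x) :
    ∃ P ∈ driftBoundedMomentSet A V N (C₁ / C₂), IsStationarySol A B (P : Measure (Ed d)) := by
  obtain ⟨μ, hμ, hsol, hμV⟩ := exists_isStationarySol_of_continuous hA hApos hV hV0 hVinf hB hC₂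
    fun x => (mem_lyapunovConstraint.1 (hBmem x)).2
  have := hμ.1
  have hdb : DriftBounded A N μ := driftBounded_of_isStationarySol hA hB
    (fun S hS x hx => (mem_lyapunovConstraint.1 (hBmem x)).1 S hS hx) hsol
  exact ⟨⟨μ, hμ.1⟩, ⟨(mem_momentSet_iff hV.continuous hV0
    ((integral_nonneg hV0).trans hμV)).2 ⟨hμ.2, hμV⟩, hdb⟩, hsol⟩

lemma driftBounded_mixture {ι : Type*} [Fintype ι] {p : ι → ℝ} {μ : ι → Measure (Ed d)}
    [∀ j, IsFiniteMeasure (μ j)] (hA : ∀ i j, Continuous fun x => A x i j) (hp : ∀ j, 0 ≤ p j)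
    (h : ∀ j, DriftBounded A N (μ j)) : DriftBounded A N (mixture p μ) := by
  intro S hS φ hφ hsupp
  have hgint j : Integrable (fun x => ‖gradient φ x‖) (μ j) :=
    (continuous_gradient hφ.contDiff_two).norm.integrable_of_hasCompactSupport
      (hasCompactSupport_gradient hφ.2).norm
  rw [integral_mixture hp fun j => hφ.integrable_Lop hA continuous_zero,
    integral_mixture hp hgint, Finset.mul_sum]
  refine (Finset.abs_sum_le_sum_abs _ _).trans (Finset.sum_le_sum fun j _ => ?_)
  rw [abs_mul, abs_of_nonneg (hp j), mul_left_comm]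
  exact mul_le_mul_of_nonneg_left (h j S hS φ hφ hsupp) (hp j)

lemma mixture_mem_driftBoundedMomentSet {ι : Type*} [Fintype ι] {p : ι → ℝ}
    {P : ι → ProbabilityMeasure (Ed d)} (hA : ∀ i j, Continuous fun x => A x i j)
    (hV : Continuous V) (hV0 : ∀ x, 0 ≤ V x) (hα : 0 ≤ α) (hp : p ∈ stdSimplex ℝ ι)
    (hP : ∀ j, P j ∈ driftBoundedMomentSet A V N α) :
    ⟨mixture p fun j => (P j : Measure (Ed d)),
      isProbabilityMeasure_mixture hp fun _ => inferInstance⟩ ∈ driftBoundedMomentSet A V N α := by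
  have hPV j := (mem_momentSet_iff hV hV0 hα).1 (hP j).1
  exact ⟨(mem_momentSet_iff hV hV0 hα).2 ⟨integrable_mixture p fun j => (hPV j).1,
    integral_mixture_le hp (fun j => (hPV j).1) fun j _ => (hPV j).2⟩,
    driftBounded_mixture hA hp.1 fun j => (hP j).2⟩

lemma abs_integral_Lop_moll_le {μ : Measure (Ed d)} [IsProbabilityMeasure μ]
    (hA : ∀ i j, Continuous fun x => A x i j) (hB : Continuous B) (hsol : IsStationarySol A B μ)
    (hβ : LocallyIntegrable β) (hβ' : LocallyIntegrable β')
    (hBβ' : EqOn B (moll ψ β') (closedBall 0 r)) (hψ : ψ.rOut ≤ 1) (hφ : IsTestFun φ)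
    (hsupp : tsupport φ ⊆ closedBall 0 r) (hM : ∀ x, ‖gradient φ x‖ ≤ M) (hη : 0 ≤ η)
    (hββ' : ∀ x ∈ closedBall 0 (r + 1), ‖β x - β' x‖ ≤ η) :
    |∫ x, Lop A (moll ψ β) φ x ∂μ| ≤ η * M := by
  have heq : ∫ x, Lop A (moll ψ β) φ x ∂μ = ∫ x, (Lop A (moll ψ β) φ x - Lop A B φ x) ∂μ := by
    rw [integral_sub (hφ.integrable_Lop hA (continuous_moll ψ hβ)) (hφ.integrable_Lop hA hB),
      hsol φ hφ, sub_zero]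
  rw [heq, ← Real.norm_eq_abs]
  refine (norm_integral_le_of_norm_le_const (C := η * M)
    (Eventually.of_forall fun x => ?_)).trans_eq (by simp)
  rw [Lop_eq_Lop_zero_add A (moll ψ β), Lop_eq_Lop_zero_add A B, add_sub_add_left_eq_sub,
    ← inner_sub_left]
  by_cases hx : x ∈ tsupport φ
  · have hxr := hsupp hx
    refine (norm_inner_le_norm _ _).trans (mul_le_mul ?_ (hM x) (norm_nonneg _) hη)
    rw [hBβ' hxr, ← moll_sub ψ hβ hβ']
    refine norm_moll_le ψ (hβ.sub hβ') fun y hy => hββ' y ?_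
    rw [mem_closedBall_zero_iff] at hxr ⊢
    linarith [norm_le_norm_add_norm_sub' y x, dist_eq_norm y x, mem_ball.1 hy]
  · rw [gradient_eq_zero_of_notMem_tsupport hx, inner_zero_right, norm_zero]
    exact mul_nonneg hη ((norm_nonneg _).trans (hM 0))

/-- `μ` approximately solves the nonlinear stationary equation: tested against a function
supported in a ball of radius `r ≤ R`, the equation whose drift is the mollification of a field
`β` holds up to an error proportional to the distance from `β` to the drifts of the measures that
are `ε`-close to `μ`. -/
def IsApproxStationarySol (A : Ed d → Matrix (Fin d) (Fin d) ℝ) (V W : Ed d → ℝ)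
    (b : Ed d → Measure (Ed d) → Ed d) (α ε R : ℝ) (ψ : ContDiffBump (0 : Ed d))
    (μ : Measure (Ed d)) : Prop :=
  ∀ (φ : Ed d → ℝ) (β : Ed d → Ed d) (r M η : ℝ), IsTestFun φ → tsupport φ ⊆ closedBall 0 r →
    r ≤ R → (∀ x, ‖gradient φ x‖ ≤ M) → LocallyIntegrable β → 0 ≤ η →
    (∀ ν : Measure (Ed d), memPV V ν → ∫ x, V x ∂ν ≤ α → wDist W μ ν < ε →
      ∀ x ∈ closedBall 0 (r + 1), ‖β x - b x ν‖ ≤ η) →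
    |∫ x, Lop A (moll ψ β) φ x ∂μ| ≤ η * M

lemma exists_isApproxStationarySol (hA : ∀ x, IsElliptic K (A x))
    (hLip : ∀ i j x y, |A x i j - A y i j| ≤ K₂ * ‖x - y‖) (hV : ContDiff ℝ 2 V)
    (hV0 : ∀ x, 0 ≤ V x) (hVinf : Tendsto V (cocompact (Ed d)) atTop) (hWc : Continuous W)
    (hW0 : ∀ x, 0 ≤ W x) (hWV : W =o[cocompact (Ed d)] V) (hN : ∀ S, 0 ≤ N S) (hC₂ : 0 < C₂)
    (hε : 0 < ε) (hα : (C₁ + ε) / C₂ ≤ α)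
    (hb : ∀ ν : Measure (Ed d), memPV V ν → ∫ x, V x ∂ν ≤ α →
      Measurable (fun x => b x ν) ∧ ∀ x, b x ν ∈ lyapunovConstraint A V C₁ C₂ N x)
    {ν₀ : Measure (Ed d)} (hν₀ : memPV V ν₀) (hν₀V : ∫ x, V x ∂ν₀ ≤ α) (R : ℝ) :
    ∃ ψ : ContDiffBump (0 : Ed d), ψ.rOut < ε ∧ ψ.rOut ≤ 1 ∧ ψ.rOut ≤ 2 * ψ.rIn ∧
      ∃ P ∈ driftBoundedMomentSet A V (fun S => N (S + 1)) α,
        ∫ x, V x ∂(P : Measure (Ed d)) ≤ (C₁ + ε) / C₂ ∧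
        IsApproxStationarySol A V W b α ε R ψ (P : Measure (Ed d)) := by
  have hAc i j := continuous_of_abs_sub_le (hLip i j)
  have hApos x := (hA x).posSemidef
  have hVc := hV.continuous
  obtain ⟨ψ, hψε, hψ1, hψ2, hψ⟩ := exists_bump_forall_exists_continuous_mem_lyapunovConstraint
    hAc hV (fun x => ⟨_, (hb ν₀ hν₀ hν₀V).2 x⟩) hε R
  obtain ⟨B₀, hB₀c, hB₀, -⟩ := hψ _ (hb ν₀ hν₀ hν₀V).1 (hb ν₀ hν₀ hν₀V).2
  have hc := div_nonneg_of_forall_mem_lyapunovConstraint hAc hApos hV hV0 hVinf hC₂ hB₀c hB₀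
  obtain ⟨P₀, hP₀, -⟩ :=
    exists_isStationarySol_mem_driftBoundedMomentSet hAc hApos hV hV0 hVinf hC₂ hB₀c hB₀
  obtain ⟨t, htS, ht⟩ := exists_finset_forall_wDist_lt hA hLip hVc hV0 hVinf hWc hW0 hWV
    (fun S => hN (S + 1)) hc hε
  have : Nonempty t := (ht P₀ hP₀).elim fun Q hQ => ⟨⟨Q, hQ.1⟩⟩
  have hmem (Q : ProbabilityMeasure (Ed d))
      (hQ : Q ∈ driftBoundedMomentSet A V (fun S => N (S + 1)) ((C₁ + ε) / C₂)) :=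
    (mem_momentSet_iff hVc hV0 hc).1 hQ.1
  have hbt (Q : t) := hb Q.1 ⟨inferInstance, (hmem _ (htS _ Q.2)).1⟩
    ((hmem _ (htS _ Q.2)).2.trans hα)
  choose B hBc hB hBψ using fun Q : t => hψ _ (hbt Q).1 (hbt Q).2
  choose P hP hPsol using fun Q : t =>
    exists_isStationarySol_mem_driftBoundedMomentSet hAc hApos hV hV0 hVinf hC₂ (hBc Q) (hB Q)
  have hmix {p : t → ℝ} (hp : p ∈ stdSimplex ℝ t) :=
    mixture_mem_driftBoundedMomentSet hAc hVc hV0 hc hp hP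
  obtain ⟨p, hp, hpt⟩ := exists_mixture_wDist_lt (ε := ε) hW0
    (fun Q => integrable_of_isLittleO hWc hWV (hmem _ (hP Q)).1)
    (fun Q => integrable_of_isLittleO hWc hWV (hmem _ (htS _ Q.2)).1) fun p hp => by
      obtain ⟨Q, hQt, hQ⟩ := ht _ (hmix hp)
      exact ⟨⟨Q, hQt⟩, hQ⟩
  obtain ⟨hpV, hpc⟩ := hmem _ (hmix hp)
  refine ⟨ψ, hψε, hψ1, hψ2, _, ⟨(mem_momentSet_iff hVc hV0 (hc.trans hα)).2
    ⟨hpV, hpc.trans hα⟩, (hmix hp).2⟩, hpc, fun φ β r M η hφ hsupp hrR hM hβ hη hclose => ?_⟩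
  refine abs_integral_mixture_le hp (fun Q => hφ.integrable_Lop hAc (continuous_moll ψ hβ))
    fun Q hQ => ?_
  exact abs_integral_Lop_moll_le hAc (hBc Q) (hPsol Q) hβ
    (locallyIntegrable_of_forall_mem_driftConstraint (hbt Q).1 (hbt Q).2)
    ((hBψ Q).mono (closedBall_subset_closedBall hrR)) hψ1 hφ hsupp hM hη
    (hclose _ ⟨inferInstance, (hmem _ (htS _ Q.2)).1⟩ ((hmem _ (htS _ Q.2)).2.trans hα) (hpt Q hQ))

end ApproximateSolution

section LimitEquation

variable {A : Ed d → Matrix (Fin d) (Fin d) ℝ} {V W : Ed d → ℝ} {N : ℝ → ℝ}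
  {b : Ed d → Measure (Ed d) → Ed d} {K K₂ R c α : ℝ} {β : Ed d → Ed d} {φ : Ed d → ℝ}
  {ι : Type*} {l : Filter ι} {ψ : ι → ContDiffBump (0 : Ed d)}

lemma exists_forall_abs_Lop_moll_le (hA : ∀ i j, Continuous fun x => A x i j)
    (hφ : IsTestFun φ) (hβ : LocallyIntegrable β) (hsupp : tsupport φ ⊆ closedBall 0 R)
    (hβc : ∀ x ∈ closedBall 0 (R + 1), ‖β x‖ ≤ c) :
    ∃ M, ∀ ψ : ContDiffBump (0 : Ed d), ψ.rOut ≤ 1 → ∀ x, |Lop A (moll ψ β) φ x| ≤ M := by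
  obtain ⟨M₁, hM₁⟩ := (continuous_Lop hA continuous_zero
    hφ.contDiff_two).bounded_above_of_compact_support (hasCompactSupport_Lop A 0 hφ.2)
  obtain ⟨M₂, hM₂⟩ := (continuous_gradient hφ.contDiff_two).bounded_above_of_compact_support
    (hasCompactSupport_gradient hφ.2)
  refine ⟨M₁ + |c| * M₂, fun ψ hψ x => ?_⟩
  rw [Lop_eq_Lop_zero_add A (moll ψ β)]
  refine (abs_add_le _ _).trans (add_le_add (hM₁ x) ((abs_real_inner_le_norm _ _).trans ?_))
  by_cases hx : x ∈ tsupport φ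
  · refine mul_le_mul (norm_moll_le ψ hβ fun y hy => ?_) (hM₂ x) (norm_nonneg _) (abs_nonneg c)
    have hxR := mem_closedBall_zero_iff.1 (hsupp hx)
    refine (hβc y (mem_closedBall_zero_iff.2 ?_)).trans (le_abs_self c)
    linarith [norm_le_norm_add_norm_sub' y x, dist_eq_norm y x, mem_ball.1 hy]
  · rw [gradient_eq_zero_of_notMem_tsupport hx, norm_zero, mul_zero]
    exact mul_nonneg (abs_nonneg c) ((norm_nonneg _).trans (hM₂ x))

lemma tendsto_integral_Lop_moll [l.IsCountablyGenerated] {μ : Measure (Ed d)} [IsFiniteMeasure μ]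
    (hμ : μ ≪ volume) (hA : ∀ i j, Continuous fun x => A x i j) (hφ : IsTestFun φ)
    (hβ : LocallyIntegrable β) (hsupp : tsupport φ ⊆ closedBall 0 R)
    (hβc : ∀ x ∈ closedBall 0 (R + 1), ‖β x‖ ≤ c) (hψ : Tendsto (fun i => (ψ i).rOut) l (𝓝 0))
    (hψ1 : ∀ i, (ψ i).rOut ≤ 1) (hψ2 : ∀ i, (ψ i).rOut ≤ 2 * (ψ i).rIn) :
    Tendsto (fun i => ∫ x, Lop A (moll (ψ i) β) φ x ∂μ) l (𝓝 (∫ x, Lop A β φ x ∂μ)) := by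
  obtain ⟨M, hM⟩ := exists_forall_abs_Lop_moll_le hA hφ hβ hsupp hβc
  refine tendsto_integral_filter_of_dominated_convergence (fun _ => M)
    (Eventually.of_forall fun i =>
      (continuous_Lop hA (continuous_moll (ψ i) hβ) hφ.contDiff_two).aestronglyMeasurable)
    (Eventually.of_forall fun i => Eventually.of_forall (hM (ψ i) (hψ1 i))) (integrable_const _) ?_
  filter_upwards [hμ.ae_le (ContDiffBump.ae_convolution_tendsto_right_of_locallyIntegrable
    (μ := volume) hψ (Eventually.of_forall hψ2) hβ)] with x hx
  exact tendsto_const_nhds.add (Tendsto.inner hx tendsto_const_nhds)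

lemma integral_Lop_eq_zero_of_tendsto [l.NeBot] [l.IsCountablyGenerated]
    {P : ι → ProbabilityMeasure (Ed d)} {Q : ProbabilityMeasure (Ed d)}
    (hA : ∀ x, IsElliptic K (A x)) (hLip : ∀ i j x y, |A x i j - A y i j| ≤ K₂ * ‖x - y‖)
    (hN : ∀ R, 0 ≤ N R) (hP : Tendsto P l (𝓝 Q))
    (hPd : ∀ i, DriftBounded A N (P i : Measure (Ed d)))
    (hQd : DriftBounded A N (Q : Measure (Ed d))) (hφ : IsTestFun φ) (hβ : LocallyIntegrable β)
    (hR : 0 ≤ R) (hsupp : tsupport φ ⊆ closedBall 0 R)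
    (hβc : ∀ x ∈ closedBall 0 (R + 1), ‖β x‖ ≤ c) (hψ : Tendsto (fun i => (ψ i).rOut) l (𝓝 0))
    (hψ1 : ∀ i, (ψ i).rOut ≤ 1) (hψ2 : ∀ i, (ψ i).rOut ≤ 2 * (ψ i).rIn)
    (happ : Tendsto (fun i => ∫ x, Lop A (moll (ψ i) β) φ x ∂(P i : Measure (Ed d))) l (𝓝 0)) :
    ∫ x, Lop A β φ x ∂(Q : Measure (Ed d)) = 0 := by
  have hAc i j := continuous_of_abs_sub_le (hLip i j)
  obtain ⟨M, hM⟩ := exists_forall_abs_Lop_moll_le hAc hφ hβ hsupp hβc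
  have hdiff : Tendsto (fun i => ∫ x, Lop A (moll (ψ i) β) φ x ∂(P i : Measure (Ed d)) -
      ∫ x, Lop A (moll (ψ i) β) φ x ∂(Q : Measure (Ed d))) l (𝓝 0) := by
    refine Metric.tendsto_nhds.2 fun ε hε => ?_
    filter_upwards [eventually_abs_integral_sub_le hA hLip hN hP (Eventually.of_forall hPd) hQd hR
      M (half_pos hε)] with i hi
    rw [Real.dist_eq, sub_zero]
    exact (hi _ (continuous_Lop hAc (continuous_moll (ψ i) hβ) hφ.contDiff_two).measurable
      (fun x hx => Lop_eq_zero_of_notMem_tsupport A _ fun h => hx (hsupp h))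
      (hM (ψ i) (hψ1 i))).trans_lt (half_lt_self hε)
  have hlim := tendsto_integral_Lop_moll (absolutelyContinuous_of_driftBounded hA hLip hN hQd) hAc
    hφ hβ hsupp hβc hψ hψ1 hψ2
  have h := happ.sub hdiff
  simp only [sub_sub_cancel, sub_zero] at h
  exact tendsto_nhds_unique hlim h

lemma exists_pos_forall_norm_sub_le_of_tendstoUniformlyOn {μ : Measure (Ed d)} {S : Set (Ed d)}
    (hW : ∀ ν, memPV V ν → 0 ≤ wDist W ν μ)
    (h : ∀ ν : ℕ → Measure (Ed d), (∀ n, memPV V (ν n) ∧ ∫ x, V x ∂(ν n) ≤ α) →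
      Tendsto (fun n => wDist W (ν n) μ) atTop (𝓝 0) →
      TendstoUniformlyOn (fun n x => b x (ν n)) (fun x => b x μ) atTop S)
    (hc : 0 < c) :
    ∃ δ > 0, ∀ ν, memPV V ν → ∫ x, V x ∂ν ≤ α → wDist W ν μ < δ →
      ∀ x ∈ S, ‖b x μ - b x ν‖ ≤ c := by
  by_contra! hcon
  choose ν hν hνα hνμ x hxS hx using fun n : ℕ => hcon (1 / (n + 1)) Nat.one_div_pos_of_nat
  have hu := h ν (fun n => ⟨hν n, hνα n⟩) (squeeze_zero (fun n => hW _ (hν n))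
    (fun n => (hνμ n).le) tendsto_one_div_add_atTop_nhds_zero_nat)
  obtain ⟨n, hn⟩ := (Metric.tendstoUniformlyOn_iff.1 hu c hc).exists
  exact (hx n).not_gt ((dist_eq_norm _ _).symm.trans_lt (hn (x n) (hxS n)))

lemma tendsto_integral_Lop_moll_of_isApproxStationarySol {P : ι → Measure (Ed d)}
    {μ : Measure (Ed d)} {ε r : ι → ℝ} (hWc : Continuous W) (hW0 : ∀ x, 0 ≤ W x)
    (hWV : W =o[cocompact (Ed d)] V) (hP : ∀ i, memPV V (P i)) (hμ : memPV V μ)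
    (hε : Tendsto ε l (𝓝 0)) (hr : Tendsto r l atTop)
    (hPμ : Tendsto (fun i => wDist W (P i) μ) l (𝓝 0))
    (happ : ∀ i, IsApproxStationarySol A V W b α (ε i) (r i) (ψ i) (P i))
    (hb : ∀ ν : ℕ → Measure (Ed d), (∀ n, memPV V (ν n) ∧ ∫ x, V x ∂(ν n) ≤ α) →
      Tendsto (fun n => wDist W (ν n) μ) atTop (𝓝 0) →
      TendstoUniformlyOn (fun n x => b x (ν n)) (fun x => b x μ) atTop (closedBall 0 (R + 1)))
    (hβ : LocallyIntegrable fun x => b x μ) (hφ : IsTestFun φ)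
    (hsupp : tsupport φ ⊆ closedBall 0 R) :
    Tendsto (fun i => ∫ x, Lop A (moll (ψ i) fun x => b x μ) φ x ∂(P i)) l (𝓝 0) := by
  have hW {ν : Measure (Ed d)} (hν : memPV V ν) : Integrable W ν :=
    have := hν.1
    integrable_of_isLittleO hWc hWV hν.2
  obtain ⟨M, hM⟩ := (continuous_gradient hφ.contDiff_two).bounded_above_of_compact_support
    (hasCompactSupport_gradient hφ.2)
  have hM0 : 0 ≤ M := (norm_nonneg _).trans (hM 0)
  refine Metric.tendsto_nhds.2 fun η hη => ?_
  obtain ⟨δ, hδ, hδb⟩ := exists_pos_forall_norm_sub_le_of_tendstoUniformlyOn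
    (fun ν hν => wDist_nonneg hW0 (hW hν) (hW hμ)) hb (c := η / (M + 1)) (by positivity)
  filter_upwards [hr.eventually_ge_atTop R, hε.eventually (gt_mem_nhds (half_pos hδ)),
    hPμ.eventually (gt_mem_nhds (half_pos hδ))] with i hiR hiε hiP
  rw [Real.dist_eq, sub_zero]
  refine (happ i φ (fun x => b x μ) R M (η / (M + 1)) hφ hsupp hiR hM hβ (by positivity)
    fun ν hν hνα hνP => hδb ν hν hνα ?_).trans_lt ?_
  · calc wDist W ν μ ≤ wDist W ν (P i) + wDist W (P i) μ :=
          wDist_triangle hW0 (hW hν) (hW (hP i)) (hW hμ)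
      _ < δ := by
          rw [wDist_comm hW0 (hW hν) (hW (hP i))]
          linarith
  · rw [div_mul_eq_mul_div, div_lt_iff₀ (by positivity)]
    nlinarith

end LimitEquation

section Existence

variable {A : Ed d → Matrix (Fin d) (Fin d) ℝ} {V W : Ed d → ℝ}
  {b : Ed d → Measure (Ed d) → Ed d} {K K₂ C₁ C₂ α : ℝ} {N : ℝ → ℝ}

lemma exists_seq_isApproxStationarySol (hA : ∀ x, IsElliptic K (A x))
    (hLip : ∀ i j x y, |A x i j - A y i j| ≤ K₂ * ‖x - y‖) (hV : ContDiff ℝ 2 V)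
    (hV0 : ∀ x, 0 ≤ V x) (hVinf : Tendsto V (cocompact (Ed d)) atTop) (hWc : Continuous W)
    (hW0 : ∀ x, 0 ≤ W x) (hWV : W =o[cocompact (Ed d)] V) (hN : ∀ S, 0 ≤ N S) (hC₂ : 0 < C₂)
    (hα : C₁ / C₂ < α)
    (hb : ∀ ν : Measure (Ed d), memPV V ν → ∫ x, V x ∂ν ≤ α →
      Measurable (fun x => b x ν) ∧ ∀ x, b x ν ∈ lyapunovConstraint A V C₁ C₂ N x)
    {ν₀ : Measure (Ed d)} (hν₀ : memPV V ν₀) (hν₀V : ∫ x, V x ∂ν₀ ≤ α) :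
    ∃ (ε : ℕ → ℝ) (ψ : ℕ → ContDiffBump (0 : Ed d)) (P : ℕ → ProbabilityMeasure (Ed d)),
      Tendsto ε atTop (𝓝 0) ∧
      (∀ n, (ψ n).rOut < ε n ∧ (ψ n).rOut ≤ 1 ∧ (ψ n).rOut ≤ 2 * (ψ n).rIn) ∧
      ∀ n, P n ∈ driftBoundedMomentSet A V (fun S => N (S + 1)) α ∧
        ∫ x, V x ∂(P n : Measure (Ed d)) ≤ (C₁ + ε n) / C₂ ∧
        IsApproxStationarySol A V W b α (ε n) n (ψ n) (P n : Measure (Ed d)) := by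
  have hgap : 0 < C₂ * α - C₁ := sub_pos.2 ((div_lt_iff₀' hC₂).1 hα)
  have hε0 (n : ℕ) : 0 < (C₂ * α - C₁) / (n + 1) := div_pos hgap n.cast_add_one_pos
  have hεα (n : ℕ) : (C₁ + (C₂ * α - C₁) / (n + 1)) / C₂ ≤ α := by
    rw [div_le_iff₀' hC₂, ← le_sub_iff_add_le']
    exact div_le_self hgap.le (by simp)
  choose ψ hψε hψ1 hψ2 P hP hPV hPapp using fun n : ℕ => exists_isApproxStationarySol hA hLip hV hV0
    hVinf hWc hW0 hWV hN hC₂ (hε0 n) (hεα n) hb hν₀ hν₀V n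
  refine ⟨_, ψ, P, ?_, fun n => ⟨hψε n, hψ1 n, hψ2 n⟩, fun n => ⟨hP n, hPV n, hPapp n⟩⟩
  simpa only [mul_one_div, mul_zero] using
    (tendsto_one_div_add_atTop_nhds_zero_nat (𝕜 := ℝ)).const_mul (C₂ * α - C₁)

lemma isStationarySol_of_tendsto {ι : Type*} {l : Filter ι} [l.NeBot] [l.IsCountablyGenerated]
    {ε r : ι → ℝ} {ψ : ι → ContDiffBump (0 : Ed d)} {P : ι → ProbabilityMeasure (Ed d)}
    {Q : ProbabilityMeasure (Ed d)} (hA : ∀ x, IsElliptic K (A x))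
    (hLip : ∀ i j x y, |A x i j - A y i j| ≤ K₂ * ‖x - y‖) (hWc : Continuous W)
    (hW0 : ∀ x, 0 ≤ W x) (hWV : W =o[cocompact (Ed d)] V) (hN : ∀ S, 0 ≤ N S)
    (hPQ : Tendsto P l (𝓝 Q))
    (hPQW : Tendsto (fun i => wDist W (P i : Measure (Ed d)) (Q : Measure (Ed d))) l (𝓝 0))
    (hPd : ∀ i, DriftBounded A N (P i : Measure (Ed d)))
    (hQd : DriftBounded A N (Q : Measure (Ed d))) (hP : ∀ i, Integrable V (P i : Measure (Ed d)))
    (hQ : Integrable V (Q : Measure (Ed d)))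
    (hψ : ∀ i, (ψ i).rOut < ε i ∧ (ψ i).rOut ≤ 1 ∧ (ψ i).rOut ≤ 2 * (ψ i).rIn)
    (hε : Tendsto ε l (𝓝 0)) (hr : Tendsto r l atTop)
    (happ : ∀ i, IsApproxStationarySol A V W b α (ε i) (r i) (ψ i) (P i : Measure (Ed d)))
    (hCont : ∀ ν : ℕ → Measure (Ed d), (∀ n, memPV V (ν n) ∧ ∫ x, V x ∂(ν n) ≤ α) →
      Tendsto (fun n => wDist W (ν n) Q) atTop (𝓝 0) → ∀ R > 0,
        TendstoUniformlyOn (fun n x => b x (ν n)) (fun x => b x Q) atTop (closedBall 0 R))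
    (hβ : LocallyIntegrable fun x => b x (Q : Measure (Ed d)))
    (hβN : ∀ R > 0, ∃ c, ∀ x ∈ closedBall 0 R, ‖b x (Q : Measure (Ed d))‖ ≤ c) :
    IsStationarySol A (fun x => b x (Q : Measure (Ed d))) (Q : Measure (Ed d)) := by
  intro φ hφ
  obtain ⟨R, hR, hsupp⟩ := hφ.2.isCompact.isBounded.subset_closedBall_lt 0 (0 : Ed d)
  have hR1 : 0 < R + 1 := by positivity
  obtain ⟨c, hc⟩ := hβN (R + 1) hR1
  exact integral_Lop_eq_zero_of_tendsto hA hLip hN hPQ hPd hQd hφ hβ hR.le hsupp hc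
    (squeeze_zero (fun i => (ψ i).rOut_pos.le) (fun i => (hψ i).1.le) hε)
    (fun i => (hψ i).2.1) (fun i => (hψ i).2.2)
    (tendsto_integral_Lop_moll_of_isApproxStationarySol hWc hW0 hWV
      (fun i => ⟨inferInstance, hP i⟩) ⟨inferInstance, hQ⟩ hε hr hPQW happ
      (fun ν hν hνQ => hCont ν hν hνQ (R + 1) hR1) hβ hφ hsupp)

lemma exists_isStationarySol_of_forall_mem_lyapunovConstraint (hA : ∀ x, IsElliptic K (A x))
    (hLip : ∀ i j x y, |A x i j - A y i j| ≤ K₂ * ‖x - y‖) (hV : ContDiff ℝ 2 V)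
    (hV0 : ∀ x, 0 ≤ V x) (hVinf : Tendsto V (cocompact (Ed d)) atTop) (hWc : Continuous W)
    (hW0 : ∀ x, 0 ≤ W x) (hWV : W =o[cocompact (Ed d)] V) (hN : ∀ S, 0 ≤ N S) (hC₂ : 0 < C₂)
    (hα : C₁ / C₂ < α)
    (hb : ∀ ν : Measure (Ed d), memPV V ν → ∫ x, V x ∂ν ≤ α →
      Measurable (fun x => b x ν) ∧ ∀ x, b x ν ∈ lyapunovConstraint A V C₁ C₂ N x)
    (hCont : ∀ (ν : ℕ → Measure (Ed d)) (μ : Measure (Ed d)),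
      (∀ n, memPV V (ν n) ∧ ∫ x, V x ∂(ν n) ≤ α) → memPV V μ → ∫ x, V x ∂μ ≤ α →
      Tendsto (fun n => wDist W (ν n) μ) atTop (𝓝 0) → ∀ R > 0,
        TendstoUniformlyOn (fun n x => b x (ν n)) (fun x => b x μ) atTop (closedBall 0 R))
    {ν₀ : Measure (Ed d)} (hν₀ : memPV V ν₀) (hν₀V : ∫ x, V x ∂ν₀ ≤ α) :
    ∃ μ, memPV V μ ∧ IsStationarySol A (fun y => b y μ) μ ∧ ∫ x, V x ∂μ ≤ C₁ / C₂ := by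
  have hVc := hV.continuous
  have hα0 : 0 ≤ α := (integral_nonneg hV0).trans hν₀V
  obtain ⟨ε, ψ, P, hε, hψ, hP⟩ := exists_seq_isApproxStationarySol hA hLip hV hV0 hVinf hWc hW0
    hWV hN hC₂ hα hb hν₀ hν₀V
  obtain ⟨Q, hQ, u, hu, hPQ, hPQW⟩ := exists_subseq_tendsto_wDist hA hLip hVc hV0 hVinf hWc hW0
    hWV (fun S => hN (S + 1)) hα0 fun n => (hP n).1
  have hPV n : Integrable V (P n : Measure (Ed d)) :=
    ((mem_momentSet_iff hVc hV0 hα0).1 (hP n).1.1).1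
  obtain ⟨hQV, hQα⟩ := (mem_momentSet_iff hVc hV0 hα0).1 hQ.1
  have hεu := hε.comp hu.tendsto_atTop
  obtain ⟨hbm, hbQ⟩ := hb Q ⟨inferInstance, hQV⟩ hQα
  refine ⟨Q, ⟨inferInstance, hQV⟩, ?_,
    (integral_le_of_tendsto hVc hV0 hPQ (fun n => hPV (u n)) fun η hη => ?_).2⟩
  · exact isStationarySol_of_tendsto hA hLip hWc hW0 hWV (fun S => hN (S + 1)) hPQ hPQW
      (fun n => (hP (u n)).1.2) hQ.2 (fun n => hPV (u n)) hQV (fun n => hψ (u n)) hεu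
      (tendsto_natCast_atTop_atTop.comp hu.tendsto_atTop) (fun n => (hP (u n)).2.2)
      (fun ν hν => hCont ν Q hν ⟨inferInstance, hQV⟩ hQα)
      (locallyIntegrable_of_forall_mem_driftConstraint hbm hbQ)
      fun R hR => ⟨N R, fun x hx =>
        (hbQ x).1 R hR (mem_closedBall_zero_iff.1 hx)⟩
  · filter_upwards [hεu.eventually_le_const (mul_pos hC₂ hη)] with n hn
    refine ((hP (u n)).2.1).trans ?_
    rw [add_div]
    exact add_le_add_right ((div_le_iff₀' hC₂).2 hn) _

end Existence

lemma isLittleO_rpow_of_tendsto_atTop {X : Type*} {l : Filter X} {f : X → ℝ} {γ : ℝ} (hγ : γ < 1)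
    (hf : Tendsto f l atTop) : (fun x => f x ^ γ) =o[l] f := by
  have hpos : ∀ᶠ x in l, 0 < f x := hf.eventually_gt_atTop 0
  refine (Asymptotics.isLittleO_iff_tendsto' (hpos.mono fun x hx h => absurd h hx.ne')).2
    (((tendsto_rpow_neg_atTop (sub_pos.2 hγ)).comp hf).congr' ?_)
  filter_upwards [hpos] with x hx
  rw [Function.comp_apply, neg_sub, Real.rpow_sub_one hx.ne']

theorem stmt10_existence_stationary_uniform_general {A : Ed d → Matrix (Fin d) (Fin d) ℝ}
    {V W : Ed d → ℝ} {b : Ed d → Measure (Ed d) → Ed d} {K K₂ C₁ C₂ α : ℝ} {x₀ : Ed d}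
    (hA : ∀ x, IsElliptic K (A x)) (hLip : ∀ i j x y, |A x i j - A y i j| ≤ K₂ * ‖x - y‖)
    (hV : ContDiff ℝ 2 V) (hV0 : ∀ x, 0 ≤ V x) (hVinf : Tendsto V (cocompact (Ed d)) atTop)
    (hWc : Continuous W) (hW0 : ∀ x, 0 ≤ W x) (hWV : W =o[cocompact (Ed d)] V) (hC₂ : 0 < C₂)
    (hα : C₁ / C₂ < α) (hx₀ : V x₀ ≤ α)
    (hbm : ∀ μ, memPV V μ → ∫ x, V x ∂μ ≤ α → Measurable fun x => b x μ)
    (hLyap : ∀ μ, memPV V μ → ∫ x, V x ∂μ ≤ α →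
      ∀ x, Lop A (fun y => b y μ) V x ≤ C₁ - C₂ * V x)
    (hLocBdd : ∀ R > 0, ∃ c, ∀ μ, memPV V μ → ∫ x, V x ∂μ ≤ α →
      ∀ x ∈ closedBall 0 R, ‖b x μ‖ ≤ c)
    (hCont : ∀ (ν : ℕ → Measure (Ed d)) (μ : Measure (Ed d)),
      (∀ n, memPV V (ν n) ∧ ∫ x, V x ∂(ν n) ≤ α) → memPV V μ → ∫ x, V x ∂μ ≤ α →
      Tendsto (fun n => wDist W (ν n) μ) atTop (𝓝 0) → ∀ R > 0,
        TendstoUniformlyOn (fun n x => b x (ν n)) (fun x => b x μ) atTop (closedBall 0 R)) :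
    ∃ μ, memPV V μ ∧ IsStationarySol A (fun y => b y μ) μ ∧ ∫ x, V x ∂μ ≤ C₁ / C₂ := by
  choose! N hN using hLocBdd
  refine exists_isStationarySol_of_forall_mem_lyapunovConstraint (N := fun S => |N S|) hA hLip hV
    hV0 hVinf hWc hW0 hWV (fun S => abs_nonneg _) hC₂ hα (fun ν hν hνα => ⟨hbm ν hν hνα, fun x =>
      ?_⟩) hCont (ν₀ := Measure.dirac x₀) ⟨inferInstance, integrable_dirac (by simp)⟩
    (by rwa [integral_dirac])
  refine (mem_lyapunovConstraint (B := fun y => b y ν)).2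
    ⟨fun S hS hxS => ?_, hLyap ν hν hνα x⟩
  exact (hN S hS ν hν hνα x (mem_closedBall_zero_iff.2 hxS)).trans (le_abs_self _)

/-- **Remark 1** (existence of a stationary solution under a uniform Lyapunov
condition, with the moment bound `∫V dμ ≤ C₁/C₂`). -/
theorem stmt10_existence_stationary_uniform
    (A : Ed d → Matrix (Fin d) (Fin d) ℝ) (K₁ K₂ : ℝ)
    (hK₁ : 0 < K₁) (hK₂ : 0 < K₂)
    (hAsymm : ∀ x, (A x).IsSymm)
    (hAlow : ∀ x (v : Ed d), K₁⁻¹ * ‖v‖ ^ 2 ≤ ∑ i, ∑ j, A x i j * v i * v j)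
    (hAup : ∀ x (v : Ed d), ∑ i, ∑ j, A x i j * v i * v j ≤ K₁ * ‖v‖ ^ 2)
    (hALip : ∀ x y i j, |A x i j - A y i j| ≤ K₂ * ‖x - y‖)
    (V : Ed d → ℝ) (hV : ContDiff ℝ 2 V) (hV1 : ∀ x, 1 ≤ V x)
    (hVinf : Tendsto V (cocompact (Ed d)) atTop)
    (γ : ℝ) (hγ : γ ∈ Set.Ioc (0:ℝ) (1/2))
    (W : Ed d → ℝ) (hW : W = fun x => V x ^ γ)
    (b : Ed d → Measure (Ed d) → Ed d)
    (hbBorel : ∀ μ, Measurable (fun x => b x μ))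
    (hbGrow : ∀ μ : Measure (Ed d), memPV V μ →
      ∃ Cb : ℝ, ∀ x, ‖b x μ‖ ≤ Cb * V x ^ (1 - γ))
    (C₁ C₂ : ℝ) (hC₁ : 0 < C₁) (hC₂ : 0 < C₂)
    (N : ℝ → ℝ → ℝ) (hN : ∀ α R, 0 < N α R)
    (hLyap : ∀ α : ℝ, 0 < α → ∀ μ : Measure (Ed d),
      memPV V μ → (∫ x, V x ∂μ) ≤ α →
      ∀ x, Lop A (fun y => b y μ) V x ≤ C₁ - C₂ * V x)
    (hLocBdd : ∀ α : ℝ, 0 < α → ∀ μ : Measure (Ed d),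
      memPV V μ → (∫ x, V x ∂μ) ≤ α →
      ∀ R : ℝ, 0 < R → ∀ x : Ed d, ‖x‖ ≤ R → ‖b x μ‖ ≤ N α R)
    (hCont : ∀ α : ℝ, 0 < α → ∀ μs : ℕ → Measure (Ed d), ∀ μ : Measure (Ed d),
      (∀ n, memPV V (μs n) ∧ (∫ x, V x ∂(μs n)) ≤ α) →
      memPV V μ → (∫ x, V x ∂μ) ≤ α →
      Tendsto (fun n => wDist W (μs n) μ) atTop (nhds 0) →
      ∀ R : ℝ, 0 < R →
        TendstoUniformlyOn (fun n x => b x (μs n)) (fun x => b x μ) atTop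
          (Metric.closedBall (0 : Ed d) R)) :
    ∃ μ : Measure (Ed d), memPV V μ ∧
      IsStationarySol A (fun y => b y μ) μ ∧
      (∫ x, V x ∂μ) ≤ C₁ / C₂ := by
  subst hW
  have hV0 x : 0 < V x := one_pos.trans_le (hV1 x)
  have hα : 0 < max ((C₁ + 1) / C₂) (V 0) := lt_max_of_lt_right (hV0 0)
  have hα' : C₁ / C₂ < max ((C₁ + 1) / C₂) (V 0) := lt_max_of_lt_left (by gcongr; linarith)
  exact stmt10_existence_stationary_uniform_general
    (fun x => ⟨hK₁, hAsymm x, hAlow x, hAup x⟩) (fun i j x y => hALip x y i j) hV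
    (fun x => (hV0 x).le) hVinf (hV.continuous.rpow_const fun _ => Or.inr hγ.1.le)
    (fun x => Real.rpow_nonneg (hV0 x).le γ)
    (isLittleO_rpow_of_tendsto_atTop (by linarith [hγ.2]) hVinf) hC₂ hα' (le_max_right _ _)
    (fun μ _ _ => hbBorel μ) (hLyap _ hα)
    (fun R hR => ⟨N _ R, fun μ hμ hμα x hx =>
      hLocBdd _ hα μ hμ hμα R hR x (mem_closedBall_zero_iff.1 hx)⟩)
    (hCont _ hα)
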